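/- Let $d\geq 5$ and $\eta>0$. Set $q_\eta=\mathrm{lcm}\{q\in\mathbb{N}:1\le q\le\eta^{-2}\}$ and suppose $L\ge q_\eta^4$. Let $\Omega_{\eta,L}=\{\alpha\in\mathbb{T}^d:\alpha\in[-L^{-1},L^{-1}]^d+(q_\eta^{-1}\mathbb{Z})^d\}$. Then there is a constant $C_d$ such that for every $f\in\ell^2(\mathbb{Z}^d)$ whose Fourier transform is supported in $\Omega_{\eta,L}^c$, one has $\bigl\|\sup_{\lambda\ge\eta^{-2}L,\ \lambda^2\in\mathbb{N}}|A_\lambda f|\bigr\|_{\ell^2(\mathbb{Z}^d)}\le C_d\,\eta\,\|f\|_{\ell^2(\mathbb{Z}^d)}$. -/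

import Mathlib

open scoped BigOperators ENNReal Real

noncomputable section

/-- Squared Euclidean norm of a lattice point, as a real number. -/
def nsq {d : ℕ} (m : Fin d → ℤ) : ℝ := ∑ i, ((m i : ℝ)) ^ 2

/-- The discrete sphere of radius `lam` in `ℤ^d`. -/
def sph (d : ℕ) (lam : ℝ) : Set (Fin d → ℤ) := {m | nsq m = lam ^ 2}

/-- `N_lam`: the number of lattice points on the sphere of radius `lam`. -/
def Nlam (d : ℕ) (lam : ℝ) : ℕ := Nat.card (sph d lam)

/-- The discrete spherical average. -/
def Avg {d : ℕ} (lam : ℝ) (f : (Fin d → ℤ) → ℝ) (n : Fin d → ℤ) : ℝ :=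
  (Nlam d lam : ℝ)⁻¹ * ∑' m : sph d lam, f (n - (m : Fin d → ℤ))

/-- The `ℓ²(ℤ^d)` norm, valued in `ℝ≥0∞`. -/
def l2norm {d : ℕ} (f : (Fin d → ℤ) → ℝ) : ℝ≥0∞ :=
  (∑' n : Fin d → ℤ, (‖f n‖₊ : ℝ≥0∞) ^ 2) ^ ((1 : ℝ) / 2)

/-- `q_η = lcm{q ∈ ℕ : 1 ≤ q ≤ η⁻²}`. -/
def qeta (η : ℝ) : ℕ := (Finset.Icc 1 ⌊η⁻¹ ^ 2⌋₊).lcm id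

/-- `Ω_{η,L} = [-L⁻¹, L⁻¹]^d + (q_η⁻¹ ℤ)^d`, viewed as the (ℤ^d-periodic) set of
representatives in `ℝ^d` of the corresponding subset of `𝕋^d`. -/
def OmegaEtaL (d : ℕ) (η L : ℝ) : Set (Fin d → ℝ) :=
  {α | ∃ ℓ : Fin d → ℤ, ∀ i, |α i - (ℓ i : ℝ) / (qeta η : ℝ)| ≤ L⁻¹}

section
/-- Gaussian integers of norm `n`. -/
def gset (n : ℕ) : Set GaussianInt := {z | z.norm = (n : ℤ)}

lemma gnorm (z : GaussianInt) : z.norm = z.re ^ 2 + z.im ^ 2 := by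
  rw [Zsqrtd.norm_def]; ring

lemma gset_finite (n : ℕ) : (gset n).Finite := by
  have : Set.Finite ((fun p : ℤ × ℤ => (⟨p.1, p.2⟩ : GaussianInt)) ''
      (Set.Icc (-(n:ℤ)) n ×ˢ Set.Icc (-(n:ℤ)) n)) :=
    ((Set.finite_Icc _ _).prod (Set.finite_Icc _ _)).image _
  refine this.subset ?_
  intro z hz
  have hz' : z.re ^ 2 + z.im ^ 2 = (n : ℤ) := by rw [← gnorm]; exact hz
  refine ⟨(z.re, z.im), ⟨?_, ?_⟩, rfl⟩
  · constructor <;> nlinarith [sq_nonneg z.im, sq_nonneg z.re, sq_nonneg (z.re - 1), sq_nonneg (z.re+1)]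
  · constructor <;> nlinarith [sq_nonneg z.im, sq_nonneg z.re, sq_nonneg (z.im - 1), sq_nonneg (z.im+1)]

/-- Divisor character sum. -/
def rho (n : ℕ) : ℤ := ∑ d ∈ n.divisors, ZMod.χ₄ (d : ZMod 4)

/-- `rho (m / p)` if `p ∣ m` and `0` otherwise. -/
def rhoq (m p : ℕ) : ℤ := if p ∣ m then rho (m / p) else 0

lemma rho_rec (p m : ℕ) (hp : p.Prime) (hm : m ≠ 0) :
    rho (p * m) = rho m + ZMod.χ₄ (p : ZMod 4) * rho m - ZMod.χ₄ (p : ZMod 4) * rhoq m p := by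
  classical
  have hp0 := hp.pos
  have hU : (p * m).divisors = m.divisors ∪ m.divisors.image (fun d => p * d) := by
    ext d
    simp only [Nat.mem_divisors, Finset.mem_union, Finset.mem_image]
    constructor
    · rintro ⟨h, -⟩
      by_cases hpd : p ∣ d
      · obtain ⟨e, rfl⟩ := hpd
        right
        exact ⟨e, ⟨Nat.dvd_of_mul_dvd_mul_left hp0 h, hm⟩, rfl⟩
      · left
        exact ⟨(Nat.Coprime.dvd_of_dvd_mul_left ((Nat.Prime.coprime_iff_not_dvd hp).2 hpd).symm h), hm⟩
    · rintro (⟨h, -⟩ | ⟨e, ⟨h, -⟩, rfl⟩)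
      · exact ⟨Dvd.dvd.mul_left h p, by positivity⟩
      · exact ⟨Nat.mul_dvd_mul_left p h, by positivity⟩
  have himg : ∀ k : ℕ, ∑ d ∈ k.divisors.image (fun d => p * d), ZMod.χ₄ ((d : ℕ) : ZMod 4)
      = ZMod.χ₄ (p : ZMod 4) * rho k := by
    intro k
    rw [Finset.sum_image (fun a _ b _ h => Nat.eq_of_mul_eq_mul_left hp0 h), rho, Finset.mul_sum]
    refine Finset.sum_congr rfl fun d _ => ?_
    push_cast
    rw [map_mul]
  have hI : ∑ d ∈ m.divisors ∩ m.divisors.image (fun d => p * d), ZMod.χ₄ ((d : ℕ) : ZMod 4)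
      = ZMod.χ₄ (p : ZMod 4) * rhoq m p := by
    unfold rhoq
    split_ifs with h
    · obtain ⟨k, rfl⟩ := h
      rw [Nat.mul_div_cancel_left _ hp0, ← himg]
      refine Finset.sum_congr ?_ fun _ _ => rfl
      ext d
      simp only [Nat.mem_divisors, Finset.mem_inter, Finset.mem_image]
      constructor
      · rintro ⟨⟨h1, -⟩, e, ⟨h2, -⟩, rfl⟩
        exact ⟨e, ⟨Nat.dvd_of_mul_dvd_mul_left hp0 h1, by rintro rfl; simp at hm⟩, rfl⟩
      · rintro ⟨e, ⟨h2, h3⟩, rfl⟩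
        exact ⟨⟨Nat.mul_dvd_mul_left p h2, hm⟩, e, ⟨Dvd.dvd.mul_left h2 p, hm⟩, rfl⟩
    · rw [mul_zero]
      refine Finset.sum_eq_zero ?_
      intro d hd
      exfalso
      simp only [Nat.mem_divisors, Finset.mem_inter, Finset.mem_image] at hd
      obtain ⟨⟨h1, -⟩, e, -, rfl⟩ := hd
      exact h (dvd_trans (dvd_mul_right p e) h1)
  have := Finset.sum_union_inter (s₁ := m.divisors) (s₂ := m.divisors.image (fun d => p * d))
    (f := fun d : ℕ => ZMod.χ₄ (d : ZMod 4))
  rw [hI, himg, ← hU] at this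
  have h1 : rho (p * m) = ∑ d ∈ (p * m).divisors, ZMod.χ₄ ((d : ℕ) : ZMod 4) := rfl
  have h2 : rho m = ∑ d ∈ m.divisors, ZMod.χ₄ ((d : ℕ) : ZMod 4) := rfl
  rw [← h1, ← h2] at this
  linarith

lemma gset_img (w : GaussianInt) (hw : w ≠ 0) (n : ℕ) :
    ((fun z => w * z) '' gset n).ncard = (gset n).ncard :=
  Set.ncard_image_of_injective _ (mul_right_injective₀ hw)

lemma gprime_of_norm (w : GaussianInt) (p : ℕ) (hp : p.Prime) (h : w.norm = p) : Prime w := by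
  rw [← irreducible_iff_prime]
  have hu : ∀ z : GaussianInt, IsUnit z ↔ z.norm.natAbs = 1 := fun z => Zsqrtd.norm_eq_one_iff.symm
  have hn : w.norm.natAbs = p := by rw [h]; simp
  refine ⟨?_, ?_⟩
  · rw [hu, hn]; exact hp.one_lt.ne'
  · intro a b hab
    rw [hu, hu]
    have : a.norm.natAbs * b.norm.natAbs = p := by
      rw [← hn, hab, Zsqrtd.norm_mul, Int.natAbs_mul]
    rw [← this] at hp
    rcases Nat.prime_mul_iff.1 hp with h | h
    · exact Or.inr h.2
    · exact Or.inl h.2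

lemma gset_ncard_three (p m : ℕ) (hp : p.Prime) (h3 : p % 4 = 3) (hm : m ≠ 0) :
    ((gset (p * m)).ncard : ℤ) = if p ∣ m then ((gset (m / p)).ncard : ℤ) else 0 := by
  have := Fact.mk hp
  have hpr : Prime (p : GaussianInt) := GaussianInt.prime_of_nat_prime_of_mod_four_eq_three p h3
  have hp0 : (p : ℤ) ≠ 0 := by exact_mod_cast hp.ne_zero
  have key : ∀ z ∈ gset (p * m), ∃ w : GaussianInt, z = p * w ∧ (p : ℤ) * w.norm = m := by
    intro z hz
    have hz' : z.norm = ((p * m : ℕ) : ℤ) := hz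
    have h1 : (p : GaussianInt) ∣ z * star z := by
      rw [← Zsqrtd.norm_eq_mul_conj, hz']; push_cast; exact dvd_mul_right _ _
    have h2 : (p : GaussianInt) ∣ z := by
      rcases hpr.dvd_or_dvd h1 with h | ⟨w, hw⟩
      · exact h
      · refine ⟨star w, ?_⟩
        have := congrArg star hw
        rw [star_star, star_mul'] at this
        rw [this]; simp
    obtain ⟨w, rfl⟩ := h2
    refine ⟨w, rfl, ?_⟩
    rw [Zsqrtd.norm_mul, Zsqrtd.norm_natCast] at hz'
    push_cast at hz'
    have : (p:ℤ) * (p * w.norm) = p * m := by rw [← hz']; ring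
    exact mul_left_cancel₀ hp0 this
  split_ifs with h
  · obtain ⟨k, rfl⟩ := h
    rw [Nat.mul_div_cancel_left _ hp.pos, ← gset_img (p : GaussianInt) hpr.ne_zero k]
    congr 2
    ext z
    constructor
    · intro hz
      obtain ⟨w, rfl, hw⟩ := key z hz
      refine ⟨w, ?_, rfl⟩
      push_cast at hw
      exact mul_left_cancel₀ hp0 hw
    · rintro ⟨w, hw, rfl⟩
      have hw : w.norm = k := hw
      change ((p : GaussianInt) * w).norm = _
      rw [Zsqrtd.norm_mul, Zsqrtd.norm_natCast, hw]; push_cast; ring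
  · have : gset (p * m) = ∅ := by
      rw [Set.eq_empty_iff_forall_notMem]
      intro z hz
      obtain ⟨w, -, hw⟩ := key z hz
      exact h (by exact_mod_cast (Dvd.intro _ hw : (p : ℤ) ∣ m))
    rw [this]; simp

lemma gset_ncard_one (p m : ℕ) (hp : p.Prime) (h1 : p % 4 = 1) (hm : m ≠ 0) :
    ((gset (p * m)).ncard : ℤ) = 2 * (gset m).ncard -
      if p ∣ m then ((gset (m / p)).ncard : ℤ) else 0 := by
  have := Fact.mk hp
  obtain ⟨a, b, hab⟩ := Nat.Prime.sq_add_sq (p := p) (by omega)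
  set w : GaussianInt := ⟨a, b⟩ with hw
  have hwn : w.norm = p := by rw [gnorm, hw]; change (a:ℤ) ^ 2 + (b:ℤ) ^ 2 = p; exact_mod_cast hab
  have hsn : (star w).norm = p := by rw [Zsqrtd.norm_conj, hwn]
  have hwp : Prime w := gprime_of_norm w p hp hwn
  have hsp : Prime (star w) := gprime_of_norm _ p hp hsn
  have hws : w * star w = (p : GaussianInt) := by
    rw [← Zsqrtd.norm_eq_mul_conj, hwn]; simp
  have hp0 : (p : ℤ) ≠ 0 := by exact_mod_cast hp.ne_zero
  have hnd : ¬ star w ∣ w := by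
    rintro ⟨c, hc⟩
    have h : w * w = (p : GaussianInt) * c := by
      nth_rw 2 [hc]; rw [← mul_assoc, hws]
    have hre : (a : ℤ) * a - b * b = p * c.re := by
      have := congrArg Zsqrtd.re h
      simp [hw] at this
      linarith
    have hab' : (a : ℤ) ^ 2 + b ^ 2 = p := by exact_mod_cast hab
    have hd : (p : ℤ) ∣ 2 * a ^ 2 := ⟨c.re + 1, by linear_combination hre + hab'⟩
    have hd' : p ∣ 2 * a ^ 2 := by exact_mod_cast hd
    have hpa : p ∣ a := by
      rcases (Nat.Prime.dvd_mul hp).1 hd' with h | h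
      · have := Nat.le_of_dvd (by norm_num) h
        have := hp.two_le
        omega
      · exact hp.dvd_of_dvd_pow h
    have ha0 : a = 0 := by
      by_contra hne
      have := Nat.le_of_dvd (Nat.pos_of_ne_zero hne) hpa
      have := hp.two_le
      nlinarith [sq_nonneg b]
    rw [ha0] at hab
    have : ¬ (p.Prime) := by
      rw [← hab]; simp only [ne_eq, OfNat.ofNat_ne_zero, not_false_eq_true, zero_pow, zero_add]
      exact Nat.Prime.not_prime_pow (by norm_num)
    exact this hp
  have hU : gset (p * m) = (fun z => w * z) '' gset m ∪ (fun z => star w * z) '' gset m := by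
    ext z
    constructor
    · intro hz
      have hz' : z.norm = ((p * m : ℕ) : ℤ) := hz
      have hmul : ∀ (v x : GaussianInt), v.norm = p → z = v * x → x ∈ gset m := by
        intro v x hv hx
        rw [hx, Zsqrtd.norm_mul, hv] at hz'
        push_cast at hz'
        exact mul_left_cancel₀ hp0 hz'
      have h1 : w ∣ z * star z := by
        rw [← Zsqrtd.norm_eq_mul_conj, hz']; push_cast
        rw [← hws]; exact Dvd.intro _ (mul_assoc _ _ _).symm
      rcases hwp.dvd_or_dvd h1 with ⟨x, hx⟩ | ⟨x, hx⟩
      · exact Or.inl ⟨x, hmul w x hwn hx, hx.symm⟩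
      · right
        have := congrArg star hx
        rw [star_star, star_mul'] at this
        exact ⟨star x, hmul _ _ hsn this, this.symm⟩
    · rintro (⟨x, hx, rfl⟩ | ⟨x, hx, rfl⟩)
      · have hx : x.norm = m := hx
        change (w * x).norm = _
        rw [Zsqrtd.norm_mul, hwn, hx]; push_cast; ring
      · have hx : x.norm = m := hx
        change (star w * x).norm = _
        rw [Zsqrtd.norm_mul, hsn, hx]; push_cast; ring
  have hI : (((fun z => w * z) '' gset m ∩ (fun z => star w * z) '' gset m).ncard : ℤ) =
      if p ∣ m then ((gset (m / p)).ncard : ℤ) else 0 := by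
    have key : ∀ z ∈ ((fun z => w * z) '' gset m ∩ (fun z => star w * z) '' gset m),
        ∃ x : GaussianInt, z = p * x ∧ (p : ℤ) * x.norm = m := by
      rintro z ⟨⟨x, hx, rfl⟩, ⟨y, hy, hxy⟩⟩
      have hx : x.norm = m := hx
      have hd : star w ∣ w * x := ⟨y, hxy.symm⟩
      rcases hsp.dvd_or_dvd hd with h | ⟨v, rfl⟩
      · exact absurd h hnd
      · refine ⟨v, ?_, ?_⟩
        · simp only [← mul_assoc, hws]
        · rw [← hx, Zsqrtd.norm_mul, hsn]
    split_ifs with h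
    · obtain ⟨k, rfl⟩ := h
      rw [Nat.mul_div_cancel_left _ hp.pos, ← gset_img (p : GaussianInt) (by rw [← hws]; exact mul_ne_zero hwp.ne_zero hsp.ne_zero) k]
      congr 2
      ext z
      constructor
      · intro hz
        obtain ⟨x, rfl, hx⟩ := key z hz
        refine ⟨x, ?_, rfl⟩
        push_cast at hx
        exact mul_left_cancel₀ hp0 hx
      · rintro ⟨x, hx, rfl⟩
        have hx : x.norm = k := hx
        refine ⟨⟨star w * x, ?_, ?_⟩, ⟨w * x, ?_, ?_⟩⟩
        · change (star w * x).norm = _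
          rw [Zsqrtd.norm_mul, hsn, hx]; push_cast; ring
        · simp only [← mul_assoc, hws]
        · change (w * x).norm = _
          rw [Zsqrtd.norm_mul, hwn, hx]; push_cast; ring
        · simp only [← mul_assoc, mul_comm (star w) w, hws]
    · have : ((fun z => w * z) '' gset m ∩ (fun z => star w * z) '' gset m) = ∅ := by
        rw [Set.eq_empty_iff_forall_notMem]
        intro z hz
        obtain ⟨x, -, hx⟩ := key z hz
        exact h (by exact_mod_cast (Dvd.intro _ hx : (p : ℤ) ∣ m))
      rw [this]; simp
  have hc := Set.ncard_union_add_ncard_inter ((fun z => w * z) '' gset m)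
    ((fun z => star w * z) '' gset m) ((gset_finite m).image _) ((gset_finite m).image _)
  rw [← hU, gset_img w hwp.ne_zero, gset_img (star w) hsp.ne_zero] at hc
  have hc' : ((gset (p * m)).ncard : ℤ) + (((fun z => w * z) '' gset m ∩ (fun z => star w * z) '' gset m).ncard : ℤ) = (gset m).ncard + (gset m).ncard := by exact_mod_cast hc
  rw [hI] at hc'
  linarith

lemma gset_one : (gset 1).ncard = 4 := by
  have : gset 1 = (({⟨1,0⟩, ⟨-1,0⟩, ⟨0,1⟩, ⟨0,-1⟩} : Finset GaussianInt) : Set GaussianInt) := by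
    ext z
    simp only [Finset.coe_insert, Finset.coe_singleton, Set.mem_insert_iff, Set.mem_singleton_iff]
    constructor
    · intro hz
      have hz' : z.re ^ 2 + z.im ^ 2 = 1 := by rw [← gnorm]; exact_mod_cast hz
      have h1 : -1 ≤ z.re := by nlinarith [sq_nonneg z.im]
      have h2 : z.re ≤ 1 := by nlinarith [sq_nonneg z.im]
      have h3 : -1 ≤ z.im := by nlinarith [sq_nonneg z.re]
      have h4 : z.im ≤ 1 := by nlinarith [sq_nonneg z.re]
      obtain ⟨x, y⟩ := z
      simp only [Zsqrtd.mk.injEq] at *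
      interval_cases x <;> interval_cases y <;> simp_all
    · rintro (rfl | rfl | rfl | rfl) <;> (change Zsqrtd.norm _ = _; rw [gnorm]; norm_num)
  rw [this, Set.ncard_coe_finset]
  decide

theorem gset_ncard (n : ℕ) (hn : n % 2 = 1) : ((gset n).ncard : ℤ) = 4 * rho n := by
  induction n using Nat.strong_induction_on with
  | _ n ih =>
    by_cases h1 : n = 1
    · subst h1; rw [gset_one]; simp [rho]
    · have hp := Nat.minFac_prime h1
      obtain ⟨m, hm⟩ := Nat.minFac_dvd n
      set p := n.minFac
      have hm0 : m ≠ 0 := by rintro rfl; omega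
      have hp2 : p % 2 = 1 := by
        rcases Nat.mod_two_eq_zero_or_one p with h | h
        · rw [hm, Nat.mul_mod, h] at hn; simp at hn
        · exact h
      have hm2 : m % 2 = 1 := by
        rcases Nat.mod_two_eq_zero_or_one m with h | h
        · rw [hm, Nat.mul_mod, h] at hn; simp at hn
        · exact h
      have hmn : m < n := by
        have := hp.two_le
        nlinarith [Nat.pos_of_ne_zero hm0]
      have ihm := ih m hmn hm2
      have ihq : (if p ∣ m then ((gset (m / p)).ncard : ℤ) else 0) = 4 * rhoq m p := by
        unfold rhoq
        split_ifs with h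
        · refine ih _ (lt_of_le_of_lt (Nat.div_le_self _ _) hmn) ?_
          obtain ⟨k, rfl⟩ := h
          rw [Nat.mul_div_cancel_left _ hp.pos]
          rcases Nat.mod_two_eq_zero_or_one k with h | h
          · rw [Nat.mul_mod, h] at hm2; simp at hm2
          · exact h
        · simp
      rw [hm, rho_rec p m hp hm0]
      have h4 : p % 4 = 1 ∨ p % 4 = 3 := by omega
      rcases h4 with h4 | h4
      · rw [gset_ncard_one p m hp h4 hm0, ihm, ihq, ZMod.χ₄_nat_one_mod_four h4]; ring
      · rw [gset_ncard_three p m hp h4 hm0, ihq, ZMod.χ₄_nat_three_mod_four h4]; ring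
end

section
/-- Odd quadruples with `k l + r s = 2 u`. -/
def quad (u : ℕ) : Finset ((ℕ × ℕ) × (ℕ × ℕ)) :=
  (((Finset.range (2 * u + 1)) ×ˢ (Finset.range (2 * u + 1))) ×ˢ
    ((Finset.range (2 * u + 1)) ×ˢ (Finset.range (2 * u + 1)))).filter
    (fun t => t.1.1 % 2 = 1 ∧ t.1.2 % 2 = 1 ∧ t.2.1 % 2 = 1 ∧ t.2.2 % 2 = 1 ∧
      t.1.1 * t.1.2 + t.2.1 * t.2.2 = 2 * u)

lemma mem_quad (u k l r s : ℕ) : ((k, l), (r, s)) ∈ quad u ↔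
    k % 2 = 1 ∧ l % 2 = 1 ∧ r % 2 = 1 ∧ s % 2 = 1 ∧ k * l + r * s = 2 * u := by
  unfold quad
  simp only [Finset.mem_filter, Finset.mem_product, Finset.mem_range, and_iff_right_iff_imp]
  rintro ⟨hk, hl, hr, hs, h⟩
  have hk' : 1 ≤ k := by omega
  have hl' : 1 ≤ l := by omega
  have hr' : 1 ≤ r := by omega
  have hs' : 1 ≤ s := by omega
  refine ⟨⟨?_, ?_⟩, ⟨?_, ?_⟩⟩ <;> nlinarith

lemma chi_mul_odd (k r : ℕ) (hk : k % 2 = 1) (hr : r % 2 = 1) :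
    ZMod.χ₄ (k : ZMod 4) * ZMod.χ₄ (r : ZMod 4) = if k % 4 = r % 4 then 1 else -1 := by
  have h1 : k % 4 = 1 ∨ k % 4 = 3 := by omega
  have h2 : r % 4 = 1 ∨ r % 4 = 3 := by omega
  rcases h1 with h1 | h1 <;> rcases h2 with h2 | h2
  · rw [ZMod.χ₄_nat_one_mod_four h1, ZMod.χ₄_nat_one_mod_four h2, if_pos (by omega)]; rfl
  · rw [ZMod.χ₄_nat_one_mod_four h1, ZMod.χ₄_nat_three_mod_four h2, if_neg (by omega)]; rfl
  · rw [ZMod.χ₄_nat_three_mod_four h1, ZMod.χ₄_nat_one_mod_four h2, if_neg (by omega)]; rfl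
  · rw [ZMod.χ₄_nat_three_mod_four h1, ZMod.χ₄_nat_three_mod_four h2, if_pos (by omega)]; rfl

/-- the involution -/
def qinv (t : (ℕ × ℕ) × (ℕ × ℕ)) : (ℕ × ℕ) × (ℕ × ℕ) :=
  let k := t.1.1; let l := t.1.2; let r := t.2.1; let s := t.2.2
  ((l + (l + s) * (r / (k - r)) + (l + s), r % (k - r)),
    (l + (l + s) * (r / (k - r)), (k - r) - r % (k - r)))

lemma qinv_aux (x y l t m u : ℕ) (hx : 0 < x) (hm : m < 2 * x) (hl : l < 2 * y) (hlo : l % 2 = 1) (hmo : m % 2 = 1) (hu : u % 2 = 1)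
    (h : (m + 2 * x * t + 2 * x) * l + (m + 2 * x * t) * (2 * y - l) = 2 * u) :
    qinv ((m + 2 * x * t + 2 * x, l), (m + 2 * x * t, 2 * y - l)) =
      ((l + 2 * y * t + 2 * y, m), (l + 2 * y * t, 2 * x - m)) ∧
    (l + 2 * y * t + 2 * y) * m + (l + 2 * y * t) * (2 * x - m) = 2 * u ∧ (x + y) % 2 = 1 := by
  have e1 : m + 2 * x * t + 2 * x - (m + 2 * x * t) = 2 * x := by omega
  have e2 : (m + 2 * x * t) / (2 * x) = t := by
    rw [Nat.add_mul_div_left _ _ (by omega), Nat.div_eq_of_lt hm]; simp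
  have e3 : (m + 2 * x * t) % (2 * x) = m := by
    rw [Nat.add_mul_mod_self_left, Nat.mod_eq_of_lt hm]
  have e4 : l + (2 * y - l) = 2 * y := by omega
  refine ⟨?_, ?_, ?_⟩
  · simp only [qinv, e1, e2, e3, e4]
  · obtain ⟨a, ha⟩ : ∃ a, 2 * y = l + a := ⟨2 * y - l, by omega⟩
    obtain ⟨b, hb⟩ : ∃ b, 2 * x = m + b := ⟨2 * x - m, by omega⟩
    have ea : 2 * y - l = a := by omega
    have eb : 2 * x - m = b := by omega
    rw [ea, hb] at h
    rw [eb, ha, ← h]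
    ring
  · obtain ⟨a, ha⟩ : ∃ a, 2 * y = l + a := ⟨2 * y - l, by omega⟩
    have ea : 2 * y - l = a := by omega
    rw [ea] at h
    have h' : x * l + (m + 2 * x * t) * y = u := by
      have : 2 * (x * l + (m + 2 * x * t) * y) = 2 * u := by
        rw [← h]
        calc 2 * (x * l + (m + 2 * x * t) * y) = 2 * x * l + (m + 2 * x * t) * (2 * y) := by ring
          _ = _ := by rw [ha]; ring
      omega
    obtain ⟨l', rfl⟩ : ∃ l', l = 2 * l' + 1 := ⟨l / 2, by omega⟩
    obtain ⟨m', rfl⟩ : ∃ m', m = 2 * m' + 1 := ⟨m / 2, by omega⟩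
    have : u = x + y + 2 * (x * l' + m' * y + x * t * y) := by rw [← h']; ring
    omega

lemma quad_decomp (u k l r s : ℕ) (h : ((k, l), (r, s)) ∈ quad u) (hrk : r < k) :
    ∃ x y t m, 0 < x ∧ 0 < y ∧ m < 2 * x ∧ l < 2 * y ∧ l % 2 = 1 ∧ m % 2 = 1 ∧ k = m + 2 * x * t + 2 * x ∧ r = m + 2 * x * t ∧
      s = 2 * y - l := by
  rw [mem_quad] at h
  obtain ⟨hk, hl, hr, hs, h⟩ := h
  refine ⟨(k - r) / 2, (l + s) / 2, r / (k - r), r % (k - r), ?_, ?_, ?_, ?_, hl, ?_, ?_, ?_, ?_⟩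
  · omega
  · omega
  · have : 2 * ((k - r) / 2) = k - r := by omega
    rw [this]; exact Nat.mod_lt _ (by omega)
  · omega
  · have e : r % (k - r) % 2 = r % 2 := Nat.mod_mod_of_dvd _ (by omega)
    omega
  · have : 2 * ((k - r) / 2) = k - r := by omega
    rw [this, Nat.mod_add_div]; omega
  · have : 2 * ((k - r) / 2) = k - r := by omega
    rw [this, Nat.mod_add_div]
  · omega

lemma quad_sum_gt (u : ℕ) (hu : u % 2 = 1) :
    ∑ t ∈ (quad u).filter (fun t => t.2.1 < t.1.1),
      ZMod.χ₄ (t.1.1 : ZMod 4) * ZMod.χ₄ (t.2.1 : ZMod 4) = 0 := by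
  have key : ∀ t ∈ (quad u).filter (fun t => t.2.1 < t.1.1),
      ZMod.χ₄ (t.1.1 : ZMod 4) * ZMod.χ₄ (t.2.1 : ZMod 4) +
      ZMod.χ₄ ((qinv t).1.1 : ZMod 4) * ZMod.χ₄ ((qinv t).2.1 : ZMod 4) = 0 ∧
      qinv t ∈ (quad u).filter (fun t => t.2.1 < t.1.1) ∧ qinv (qinv t) = t := by
    rintro ⟨⟨k, l⟩, ⟨r, s⟩⟩ ht
    rw [Finset.mem_filter] at ht
    obtain ⟨hq, hrk⟩ := ht
    obtain ⟨x, y, t, m, hx, hy, hm, hl, hlo, hmo, rfl, rfl, rfl⟩ := quad_decomp u k l r s hq hrk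
    have hq' := hq
    rw [mem_quad] at hq
    obtain ⟨hk, hl', hr, hs, h⟩ := hq
    obtain ⟨e1, e2, e3⟩ := qinv_aux x y l t m u hx hm hl hlo hmo hu h
    obtain ⟨f1, f2, f3⟩ := qinv_aux y x m t l u hy hl hm hmo hlo hu e2
    have ey : 2 * y * t = 2 * (y * t) := by ring
    have ex : 2 * x * t = 2 * (x * t) := by ring
    rw [e1]
    refine ⟨?_, ?_, f1⟩
    · dsimp only
      rw [chi_mul_odd _ _ hk hr, chi_mul_odd _ _ (by omega) (by omega)]
      have c1 : ((m + 2 * x * t + 2 * x) % 4 = (m + 2 * x * t) % 4) ↔ x % 2 = 0 := by omega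
      have c2 : ((l + 2 * y * t + 2 * y) % 4 = (l + 2 * y * t) % 4) ↔ y % 2 = 0 := by omega
      simp only [c1, c2]
      rcases Nat.mod_two_eq_zero_or_one x with hx | hx
      · have : y % 2 = 1 := by omega
        simp [hx, this]
      · have : y % 2 = 0 := by omega
        simp [hx, this]
    · rw [Finset.mem_filter, mem_quad]
      refine ⟨⟨by omega, by omega, by omega, by omega, e2⟩, ?_⟩
      simp only; omega
  refine Finset.sum_involution (fun t _ => qinv t) (fun t ht => (key t ht).1) ?_ (fun t ht => (key t ht).2.1)
    (fun t ht => (key t ht).2.2)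
  intro t ht hne heq
  have := (key t ht).1
  rw [heq] at this
  omega

lemma quad_sum_lt (u : ℕ) (hu : u % 2 = 1) :
    ∑ t ∈ (quad u).filter (fun t => t.1.1 < t.2.1),
      ZMod.χ₄ (t.1.1 : ZMod 4) * ZMod.χ₄ (t.2.1 : ZMod 4) = 0 := by
  rw [← quad_sum_gt u hu]
  refine Finset.sum_nbij' Prod.swap Prod.swap ?_ ?_ ?_ ?_ ?_
  · rintro ⟨⟨k, l⟩, ⟨r, s⟩⟩ h
    simp only [Finset.mem_filter, Prod.swap_prod_mk, mem_quad] at h ⊢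
    refine ⟨⟨h.1.2.2.1, h.1.2.2.2.1, h.1.1, h.1.2.1, ?_⟩, h.2⟩
    rw [add_comm]; exact h.1.2.2.2.2
  · rintro ⟨⟨k, l⟩, ⟨r, s⟩⟩ h
    simp only [Finset.mem_filter, Prod.swap_prod_mk, mem_quad] at h ⊢
    refine ⟨⟨h.1.2.2.1, h.1.2.2.2.1, h.1.1, h.1.2.1, ?_⟩, h.2⟩
    rw [add_comm]; exact h.1.2.2.2.2
  · intros; rfl
  · intros; rfl
  · intros; exact mul_comm _ _

lemma quad_sum_ge (u : ℕ) (hu : u % 2 = 1) :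
    (u : ℤ) ≤ ∑ t ∈ quad u, ZMod.χ₄ (t.1.1 : ZMod 4) * ZMod.χ₄ (t.2.1 : ZMod 4) := by
  rw [← Finset.sum_filter_add_sum_filter_not (quad u) (fun t => t.2.1 < t.1.1), quad_sum_gt u hu,
    zero_add, ← Finset.sum_filter_add_sum_filter_not _ (fun t => t.1.1 < t.2.1), Finset.filter_filter]
  have : (quad u).filter (fun t => ¬ t.2.1 < t.1.1 ∧ t.1.1 < t.2.1) =
      (quad u).filter (fun t => t.1.1 < t.2.1) := by
    ext t; simp only [Finset.mem_filter]; constructor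
    · rintro ⟨h, h1, h2⟩; exact ⟨h, h2⟩
    · rintro ⟨h, h2⟩; exact ⟨h, by omega, h2⟩
  rw [this, quad_sum_lt u hu, zero_add, Finset.filter_filter]
  have h1 : ∑ t ∈ (quad u).filter (fun t => ¬ t.2.1 < t.1.1 ∧ ¬ t.1.1 < t.2.1), ZMod.χ₄ (t.1.1 : ZMod 4) * ZMod.χ₄ (t.2.1 : ZMod 4)
      = ∑ t ∈ (quad u).filter (fun t => ¬ t.2.1 < t.1.1 ∧ ¬ t.1.1 < t.2.1), (1 : ℤ) := by
    refine Finset.sum_congr rfl ?_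
    rintro ⟨⟨k, l⟩, ⟨r, s⟩⟩ ht
    rw [Finset.mem_filter, mem_quad] at ht
    have : k = r := by simp only at ht; omega
    dsimp only
    rw [chi_mul_odd _ _ ht.1.1 ht.1.2.2.1, this, if_pos rfl]
  rw [h1, Finset.sum_const, nsmul_eq_mul, mul_one]
  norm_cast
  refine le_trans (le_of_eq (Finset.card_range u).symm) ?_
  refine Finset.card_le_card_of_injOn (fun i => ((1, 2 * i + 1), (1, 2 * u - (2 * i + 1)))) ?_ ?_
  · intro i hi
    have hi : i < u := by simpa using hi
    simp only [Finset.coe_filter, Set.mem_ofPred_eq, mem_quad]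
    refine ⟨⟨trivial, ?_, trivial, ?_, ?_⟩, ?_⟩ <;> omega
  · intro i _ j _ h
    simp only [Prod.mk.injEq] at h
    omega

lemma rho_conv (u : ℕ) (hu : u % 2 = 1) :
    (u : ℤ) ≤ ∑ a ∈ (Finset.range (2 * u)).filter (fun a => a % 2 = 1), rho a * rho (2 * u - a) := by
  classical
  refine (quad_sum_ge u hu).trans (le_of_eq ?_)
  have h1 : ∀ a ∈ (Finset.range (2 * u)).filter (fun a => a % 2 = 1), rho a * rho (2 * u - a) =
      ∑ t ∈ (quad u).filter (fun t => t.1.1 * t.1.2 = a),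
        ZMod.χ₄ (t.1.1 : ZMod 4) * ZMod.χ₄ (t.2.1 : ZMod 4) := by
    intro a ha
    rw [Finset.mem_filter, Finset.mem_range] at ha
    obtain ⟨ha, ha2⟩ := ha
    have hdo : ∀ b d e : ℕ, b % 2 = 1 → d * e = b → d % 2 = 1 ∧ e % 2 = 1 := by
      intro b d e hb h
      rw [← h, Nat.mul_mod] at hb
      rcases Nat.mod_two_eq_zero_or_one d with hx | hx <;> rcases Nat.mod_two_eq_zero_or_one e with hy | hy <;>
        simp [hx, hy] at hb ⊢
    have hr : ∀ b : ℕ, rho b = ∑ t ∈ b.divisorsAntidiagonal, ZMod.χ₄ (t.1 : ZMod 4) := by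
      intro b; rw [rho]
      exact (Nat.sum_divisorsAntidiagonal (fun d _ => ZMod.χ₄ (d : ZMod 4))).symm
    rw [hr, hr, Finset.sum_mul_sum, ← Finset.sum_product']
    refine Finset.sum_congr ?_ (fun _ _ => rfl)
    ext ⟨⟨k, l⟩, ⟨r, s⟩⟩
    rw [Finset.mem_product, Nat.mem_divisorsAntidiagonal, Nat.mem_divisorsAntidiagonal, Finset.mem_filter, mem_quad]
    dsimp only
    constructor
    · rintro ⟨⟨h1, h2⟩, ⟨h3, h4⟩⟩
      have := hdo a k l ha2 h1
      have := hdo (2 * u - a) r s (by omega) h3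
      omega
    · rintro ⟨⟨h1, h2, h3, h4, h5⟩, h6⟩
      have : r * s ≠ 0 := by
        have : 0 < r * s := Nat.mul_pos (by omega) (by omega)
        omega
      omega
  rw [Finset.sum_congr rfl h1]
  symm
  refine Finset.sum_fiberwise_of_maps_to ?_ _
  rintro ⟨⟨k, l⟩, ⟨r, s⟩⟩ h
  rw [mem_quad] at h
  rw [Finset.mem_filter, Finset.mem_range]
  have : 0 < r * s := Nat.mul_pos (by omega) (by omega)
  have h2 : (k * l) % 2 = 1 := by rw [Nat.mul_mod, h.1, h.2.1]
  dsimp only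
  omega
end

section
/-- integer sphere -/
def szet (d N : ℕ) : Set (Fin d → ℤ) := {m | ∑ i, (m i) ^ 2 = (N : ℤ)}

lemma szet_finite (d N : ℕ) : (szet d N).Finite := by
  refine (Set.Finite.pi' (t := fun _ : Fin d => Set.Icc (-(N:ℤ)) N) (fun _ => Set.finite_Icc _ _)).subset ?_
  intro m hm i
  have hm : ∑ i, (m i) ^ 2 = (N : ℤ) := hm
  have : (m i) ^ 2 ≤ N := by
    rw [← hm]
    exact Finset.single_le_sum (f := fun i => (m i) ^ 2) (fun i _ => sq_nonneg _) (Finset.mem_univ i)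
  constructor <;> nlinarith

/-- Gaussian integers of norm `n` with odd real part. -/
def oset (n : ℕ) : Finset GaussianInt := by
  classical exact (gset_finite n).toFinset.filter (fun z => z.re % 2 = 1)

lemma mem_oset (n : ℕ) (z : GaussianInt) : z ∈ oset n ↔ z.re ^ 2 + z.im ^ 2 = n ∧ z.re % 2 = 1 := by
  classical
  unfold oset
  rw [Finset.mem_filter, Set.Finite.mem_toFinset, ← gnorm]; rfl

lemma sq_mod_two (a : ℤ) : a ^ 2 % 2 = a % 2 := by
  rcases Int.emod_two_eq_zero_or_one a with h | h <;> simp [pow_two, Int.mul_emod, h]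

lemma oset_card (n : ℕ) (hn : n % 2 = 1) : ((oset n).card : ℤ) = 2 * rho n := by
  classical
  have h := gset_ncard n hn
  rw [Set.ncard_eq_toFinset_card _ (gset_finite n),
    ← Finset.card_filter_add_card_filter_not (s := (gset_finite n).toFinset) (fun z : GaussianInt => z.re % 2 = 1)] at h
  have e1 : (Finset.filter (fun z : GaussianInt => z.re % 2 = 1) (gset_finite n).toFinset) = oset n := by
    unfold oset; rfl
  have e2 : (Finset.filter (fun z : GaussianInt => ¬ z.re % 2 = 1) (gset_finite n).toFinset).card = (oset n).card := by
    refine Finset.card_nbij' (fun z => ⟨z.im, z.re⟩) (fun z => ⟨z.im, z.re⟩) ?_ ?_ ?_ ?_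
    · intro z hz
      have hz := Finset.mem_filter.1 (Finset.mem_coe.1 hz)
      rw [Set.Finite.mem_toFinset] at hz
      have h1 : z.re ^ 2 + z.im ^ 2 = n := by rw [← gnorm]; exact hz.1
      rw [Finset.mem_coe, mem_oset]
      have := sq_mod_two z.re
      have := sq_mod_two z.im
      constructor
      · dsimp only; linarith
      · dsimp only; omega
    · intro z hz
      rw [Finset.mem_coe, mem_oset] at hz
      rw [Finset.mem_coe, Finset.mem_filter, Set.Finite.mem_toFinset]
      have := sq_mod_two z.re
      have := sq_mod_two z.im
      constructor
      · change Zsqrtd.norm _ = _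
        rw [gnorm]; dsimp only; linarith [hz.1]
      · dsimp only; omega
    · intro z _; rfl
    · intro z _; rfl
  rw [e1, e2] at h
  push_cast at h
  linarith

lemma szet_four (u : ℕ) (hu : u % 2 = 1) : 4 * u ≤ (szet 4 u).ncard := by
  classical
  have h1 : (4 * u : ℤ) ≤ ((((Finset.range (2 * u)).filter (fun a => a % 2 = 1)).sigma
      (fun a => oset a ×ˢ oset (2 * u - a))).card : ℤ) := by
    rw [Finset.card_sigma]
    push_cast
    have := rho_conv u hu
    calc (4 * u : ℤ) ≤ 4 * ∑ a ∈ (Finset.range (2 * u)).filter (fun a => a % 2 = 1), rho a * rho (2 * u - a) := by linarith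
      _ = _ := by
        rw [Finset.mul_sum]
        refine Finset.sum_congr rfl ?_
        intro a ha
        rw [Finset.mem_filter, Finset.mem_range] at ha
        rw [Finset.card_product]
        push_cast
        rw [oset_card a ha.2, oset_card _ (by omega)]; ring
  have h2 : (((Finset.range (2 * u)).filter (fun a => a % 2 = 1)).sigma
      (fun a => oset a ×ˢ oset (2 * u - a))).card ≤ (szet_finite 4 u).toFinset.card := by
    refine Finset.card_le_card_of_injOn (fun t => ![(t.2.1.re + t.2.2.re) / 2, (t.2.1.re - t.2.2.re) / 2,
      (t.2.1.im + t.2.2.im) / 2, (t.2.1.im - t.2.2.im) / 2]) ?_ ?_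
    · rintro ⟨a, z, w⟩ ht
      simp only [Finset.coe_sigma, Set.mem_sigma_iff, Finset.mem_coe, Finset.mem_filter, Finset.mem_range,
        Finset.mem_product, mem_oset] at ht
      obtain ⟨⟨ha, ha2⟩, ⟨h1, h2⟩, h3, h4⟩ := ht
      rw [Finset.mem_coe, Set.Finite.mem_toFinset]
      change ∑ i, _ = _
      simp only [Fin.sum_univ_four]
      have := sq_mod_two z.re
      have := sq_mod_two z.im
      have := sq_mod_two w.re
      have := sq_mod_two w.im
      have h3' : w.re ^ 2 + w.im ^ 2 = 2 * u - a := by rw [h3]; push_cast [ha.le]; ring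
      obtain ⟨p, hp⟩ : ∃ p, z.re + w.re = 2 * p := ⟨(z.re + w.re) / 2, by omega⟩
      obtain ⟨q, hq⟩ : ∃ q, z.im + w.im = 2 * q := ⟨(z.im + w.im) / 2, by omega⟩
      have e1 : (z.re + w.re) / 2 = p := by omega
      have e2 : (z.re - w.re) / 2 = p - w.re := by omega
      have e3 : (z.im + w.im) / 2 = q := by omega
      have e4 : (z.im - w.im) / 2 = q - w.im := by omega
      have hz1 : z.re = 2 * p - w.re := by omega
      have hz2 : z.im = 2 * q - w.im := by omega
      simp only [Matrix.cons_val]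
      rw [e1, e2, e3, e4]
      rw [hz1, hz2] at h1
      nlinarith
    · rintro ⟨a, z, w⟩ ht ⟨a', z', w'⟩ ht' heq
      simp only [Finset.coe_sigma, Set.mem_sigma_iff, Finset.mem_coe, Finset.mem_filter, Finset.mem_range,
        Finset.mem_product, mem_oset] at ht ht'
      obtain ⟨⟨ha, ha2⟩, ⟨h1, h2⟩, h3, h4⟩ := ht
      obtain ⟨⟨ha', ha2'⟩, ⟨h1', h2'⟩, h3', h4'⟩ := ht'
      have := sq_mod_two z.re
      have := sq_mod_two z.im
      have := sq_mod_two w.re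
      have := sq_mod_two w.im
      have := sq_mod_two z'.re
      have := sq_mod_two z'.im
      have := sq_mod_two w'.re
      have := sq_mod_two w'.im
      have q0 := congrFun heq 0
      have q1 := congrFun heq 1
      have q2 := congrFun heq 2
      have q3 := congrFun heq 3
      simp only [Matrix.cons_val] at q0 q1 q2 q3
      have hz : z = z' := by
        apply Zsqrtd.ext <;> omega
      have hw : w = w' := by
        apply Zsqrtd.ext <;> omega
      subst hz hw
      have : a = a' := by
        have : (a : ℤ) = a' := by rw [← h1, ← h1']
        exact_mod_cast this
      subst this
      rfl
  rw [Set.ncard_eq_toFinset_card _ (szet_finite 4 u)]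
  have : (4 * u : ℤ) ≤ ((szet_finite 4 u).toFinset.card : ℤ) := h1.trans (by exact_mod_cast h2)
  exact_mod_cast this

lemma szet_succ (d N : ℕ) (X : Finset ℕ) (hX : ∀ x ∈ X, x ^ 2 ≤ N) :
    ∑ x ∈ X, (szet d (N - x ^ 2)).ncard ≤ (szet (d + 1) N).ncard := by
  classical
  rw [Set.ncard_eq_toFinset_card _ (szet_finite (d + 1) N)]
  have : ∑ x ∈ X, (szet d (N - x ^ 2)).ncard = (X.sigma (fun x => (szet_finite d (N - x ^ 2)).toFinset)).card := by
    rw [Finset.card_sigma]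
    exact Finset.sum_congr rfl fun x _ => Set.ncard_eq_toFinset_card _ _
  rw [this]
  refine Finset.card_le_card_of_injOn (fun t => Fin.cons (t.1 : ℤ) t.2) ?_ ?_
  · rintro ⟨x, m⟩ ht
    simp only [Finset.coe_sigma, Set.mem_sigma_iff, Finset.mem_coe, Set.Finite.mem_toFinset] at ht
    obtain ⟨hx, hm⟩ := ht
    have hm : ∑ i, (m i) ^ 2 = ((N - x ^ 2 : ℕ) : ℤ) := hm
    rw [Nat.cast_sub (hX x hx)] at hm
    rw [Finset.mem_coe, Set.Finite.mem_toFinset]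
    change ∑ i, _ = _
    rw [Fin.sum_univ_succ]
    simp only [Fin.cons_zero, Fin.cons_succ]
    rw [hm]; push_cast; ring
  · rintro ⟨x, m⟩ _ ⟨x', m'⟩ _ h
    simp only at h
    have h' := Fin.cons_injective2 h
    have hx : x = x' := by exact_mod_cast h'.1
    have hm : m = m' := h'.2
    subst hx hm
    rfl

lemma sqrt_facts (N : ℕ) (hN : 2 ≤ N) : 1 ≤ Nat.sqrt (N / 2) ∧ Nat.sqrt (N / 2) ^ 2 ≤ N / 2 ∧
    Real.sqrt N ≤ 4 * (Nat.sqrt (N / 2) : ℝ) := by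
  set K := Nat.sqrt (N / 2) with hK
  have h1 : 1 ≤ K := by rw [hK, Nat.le_sqrt]; omega
  have h2 : N / 2 < (K + 1) ^ 2 := by rw [pow_two]; exact Nat.lt_succ_sqrt _
  refine ⟨h1, Nat.sqrt_le' _, ?_⟩
  have h3 : N ≤ (4 * K) ^ 2 := by
    have : N < 2 * (K + 1) ^ 2 := by omega
    nlinarith
  rw [Real.sqrt_le_iff]
  constructor
  · positivity
  · exact_mod_cast h3

lemma szet_five : ∃ c : ℝ, 0 < c ∧ ∀ N : ℕ, 1 ≤ N → c * (Real.sqrt N) ^ 3 ≤ (szet 5 N).ncard := by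
  refine ⟨1 / 4, by norm_num, ?_⟩
  intro N hN
  rcases Nat.lt_or_ge N 2 with h | h
  · have : N = 1 := by omega
    subst this
    have hne : (szet 5 1).Nonempty := ⟨![1,0,0,0,0], by change ∑ i, _ = _; simp [Fin.sum_univ_five]⟩
    have : 1 ≤ (szet 5 1).ncard := (Set.ncard_pos (szet_finite 5 1)).2 hne
    have : (1 : ℝ) ≤ (szet 5 1).ncard := by exact_mod_cast this
    simp; linarith
  · obtain ⟨h1, h2, h3⟩ := sqrt_facts N h
    set K := Nat.sqrt (N / 2)
    set b := (N + 1) % 2 with hb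
    have hle : ∀ i ∈ Finset.range ((K + 1) / 2), 2 * i + b ≤ K := by
      intro i hi; rw [Finset.mem_range] at hi; omega
    have hsq : ∀ i ∈ Finset.range ((K + 1) / 2), 2 * (2 * i + b) ^ 2 ≤ N := by
      intro i hi
      have : (2 * i + b) ^ 2 ≤ K ^ 2 := Nat.pow_le_pow_left (hle i hi) 2
      omega
    have hs := szet_succ 4 N ((Finset.range ((K + 1) / 2)).image (fun i => 2 * i + b)) (by
      intro x hx
      rw [Finset.mem_image] at hx
      obtain ⟨i, hi, rfl⟩ := hx
      have := hsq i hi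
      omega)
    rw [Finset.sum_image (by intro i _ j _ h; simp only at h; omega)] at hs
    have hlow : ∀ i ∈ Finset.range ((K + 1) / 2), 2 * N ≤ (szet 4 (N - (2 * i + b) ^ 2)).ncard := by
      intro i hi
      have h4 := hsq i hi
      have hodd : (N - (2 * i + b) ^ 2) % 2 = 1 := by
        have : (2 * i + b) ^ 2 = 2 * (2 * i ^ 2 + 2 * i * b) + b ^ 2 := by ring
        have hb2 : b ^ 2 = b := by
          have : b = 0 ∨ b = 1 := by omega
          rcases this with h | h <;> rw [h] <;> norm_num
        omega
      have := szet_four _ hodd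
      omega
    have h5 := (Finset.sum_le_sum hlow).trans hs
    rw [Finset.sum_const, Finset.card_range, smul_eq_mul] at h5
    have h6 : K * N ≤ (szet 5 N).ncard := by
      refine le_trans ?_ h5
      have : K ≤ 2 * ((K + 1) / 2) := by omega
      nlinarith
    have h7 : (K : ℝ) * N ≤ (szet 5 N).ncard := by exact_mod_cast h6
    have h8 : (Real.sqrt N) ^ 3 = Real.sqrt N * N := by
      rw [pow_succ, Real.sq_sqrt (by positivity)]; ring
    rw [h8]
    have : (0 : ℝ) ≤ N := by positivity
    nlinarith

lemma szet_lower (d : ℕ) (hd : 5 ≤ d) :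
    ∃ c : ℝ, 0 < c ∧ ∀ N : ℕ, 1 ≤ N → c * (Real.sqrt N) ^ (d - 2) ≤ (szet d N).ncard := by
  induction d, hd using Nat.le_induction with
  | base => exact szet_five
  | succ d hd ih =>
    obtain ⟨c, hc, ih⟩ := ih
    refine ⟨c / (4 * 2 ^ (d - 2)), by positivity, ?_⟩
    intro N hN
    set K := Nat.sqrt (N / 2) with hK
    have hKs : K ^ 2 ≤ N / 2 := Nat.sqrt_le' _
    have hKr : Real.sqrt N ≤ 4 * ((K + 1 : ℕ) : ℝ) := by
      have h2 : N / 2 < (K + 1) ^ 2 := by rw [pow_two]; exact Nat.lt_succ_sqrt _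
      rw [Real.sqrt_le_iff]
      refine ⟨by positivity, ?_⟩
      have h3 : N < 2 * (K + 1) ^ 2 := by omega
      have : N ≤ (4 * (K + 1)) ^ 2 := by nlinarith
      exact_mod_cast this
    have hsq : ∀ i ∈ Finset.range (K + 1), 2 * i ^ 2 ≤ N := by
      intro i hi
      rw [Finset.mem_range] at hi
      have : i ^ 2 ≤ K ^ 2 := Nat.pow_le_pow_left (by omega) 2
      omega
    have hs := szet_succ d N (Finset.range (K + 1)) (fun i hi => by have := hsq i hi; omega)
    have hlow : ∀ i ∈ Finset.range (K + 1), c * (Real.sqrt N / 2) ^ (d - 2) ≤ ((szet d (N - i ^ 2)).ncard : ℝ) := by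
      intro i hi
      have h4 := hsq i hi
      refine le_trans ?_ (ih (N - i ^ 2) (by omega))
      refine mul_le_mul_of_nonneg_left ?_ hc.le
      refine pow_le_pow_left₀ (by positivity) ?_ _
      rw [div_le_iff₀ (by norm_num)]
      rw [Real.sqrt_le_iff]
      refine ⟨by positivity, ?_⟩
      rw [mul_pow, Real.sq_sqrt (by positivity)]
      have : N ≤ (N - i ^ 2) * 2 ^ 2 := by omega
      exact_mod_cast this
    have h5 := Finset.sum_le_sum hlow
    rw [Finset.sum_const, Finset.card_range, nsmul_eq_mul] at h5
    have h6 : (∑ i ∈ Finset.range (K + 1), ((szet d (N - i ^ 2)).ncard : ℝ)) ≤ (szet (d + 1) N).ncard := by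
      exact_mod_cast hs
    refine le_trans ?_ (h5.trans h6)
    have e : d + 1 - 2 = (d - 2) + 1 := by omega
    rw [e, pow_succ, div_pow]
    have hp : 0 ≤ c * (Real.sqrt N ^ (d - 2) / 2 ^ (d - 2)) := by positivity
    calc c / (4 * 2 ^ (d - 2)) * (Real.sqrt N ^ (d - 2) * Real.sqrt N)
        = (Real.sqrt N / 4) * (c * (Real.sqrt N ^ (d - 2) / 2 ^ (d - 2))) := by field_simp
      _ ≤ _ := mul_le_mul_of_nonneg_right (by linarith) hp

lemma sph_eq_szet (d N : ℕ) (lam : ℝ) (h : (N : ℝ) = lam ^ 2) : sph d lam = szet d N := by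
  ext m
  change (∑ i, ((m i : ℝ)) ^ 2 = lam ^ 2) ↔ (∑ i, (m i) ^ 2 = (N : ℤ))
  rw [← h]
  exact_mod_cast Iff.rfl

/-- Lower bound for the number of lattice points on spheres. -/
theorem Nlam_lower (d : ℕ) (hd : 5 ≤ d) :
    ∃ c : ℝ, 0 < c ∧ ∀ (N : ℕ) (lam : ℝ), 1 ≤ N → 0 ≤ lam → (N : ℝ) = lam ^ 2 →
      c * lam ^ (d - 2) ≤ (Nlam d lam : ℝ) := by
  obtain ⟨c, hc, h⟩ := szet_lower d hd
  refine ⟨c, hc, ?_⟩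
  intro N lam hN hl hNl
  have := h N hN
  rw [hNl, Real.sqrt_sq hl] at this
  unfold Nlam
  rw [sph_eq_szet d N lam hNl]
  exact this
end

section
open MeasureTheory
/-- characters -/
def ex {d : ℕ} (n : Fin d → ℤ) (x : Fin d → ℝ) : ℂ :=
  Complex.exp (2 * π * Complex.I * ((∑ i, (n i : ℝ) * x i : ℝ) : ℂ))

lemma ex_norm {d : ℕ} (n : Fin d → ℤ) (x : Fin d → ℝ) : ‖ex n x‖ = 1 := by
  unfold ex
  have : (2 * π * Complex.I * ((∑ i, (n i : ℝ) * x i : ℝ) : ℂ)) =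
    ((2 * π * ∑ i, (n i : ℝ) * x i : ℝ) : ℂ) * Complex.I := by push_cast; ring
  rw [this, Complex.norm_exp_ofReal_mul_I]

lemma ex_add {d : ℕ} (n m : Fin d → ℤ) (x : Fin d → ℝ) : ex (n + m) x = ex n x * ex m x := by
  unfold ex
  rw [← Complex.exp_add, ← mul_add, ← Complex.ofReal_add, ← Finset.sum_add_distrib]
  simp only [Pi.add_apply, Int.cast_add, add_mul]

lemma ex_neg {d : ℕ} (n : Fin d → ℤ) (x : Fin d → ℝ) :
    ex (-n) x = (starRingEnd ℂ) (ex n x) := by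
  unfold ex
  rw [← Complex.exp_conj]
  congr 1
  simp only [Pi.neg_apply, Int.cast_neg, neg_mul, Finset.sum_neg_distrib, map_mul, Complex.conj_ofReal,
    Complex.conj_I, map_ofNat]
  push_cast; ring

lemma ex_prod {d : ℕ} (n : Fin d → ℤ) (x : Fin d → ℝ) :
    ex n x = ∏ i, Complex.exp (2 * π * Complex.I * ((n i : ℝ) * (x i : ℝ) : ℂ)) := by
  unfold ex
  rw [← Complex.exp_sum, ← Finset.mul_sum]
  push_cast; rfl

lemma ex_cont {d : ℕ} (n : Fin d → ℤ) : Continuous (ex n) := by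
  unfold ex; fun_prop

/-- the measure on the fundamental domain -/
def muX (d : ℕ) : Measure (Fin d → ℝ) := Measure.pi (fun _ => volume.restrict (Set.Ioc (0:ℝ) 1))

instance muX_prob (d : ℕ) : IsProbabilityMeasure (muX d) := by
  have : IsProbabilityMeasure (volume.restrict (Set.Ioc (0:ℝ) 1)) := ⟨by simp⟩
  unfold muX
  infer_instance

lemma int_char (k : ℤ) : ∫ x : ℝ, Complex.exp (2 * π * Complex.I * ((k : ℝ) * (x : ℝ) : ℂ))
    ∂(volume.restrict (Set.Ioc (0:ℝ) 1)) = if k = 0 then 1 else 0 := by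
  rw [← intervalIntegral.integral_of_le zero_le_one]
  split_ifs with h
  · simp [h]
  · have hc : (2 * π * Complex.I * (k : ℝ) : ℂ) ≠ 0 := by
      simp [Real.pi_ne_zero, h]
    have := integral_exp_mul_complex (a := 0) (b := 1) hc
    simp only [mul_assoc] at this ⊢
    rw [this]
    have h1 : Complex.exp (2 * (π * (Complex.I * ((k:ℝ) * ((1:ℝ):ℂ))))) = 1 := by
      rw [Complex.exp_eq_one_iff]; exact ⟨k, by push_cast; ring⟩
    rw [h1]; simp

lemma int_ex {d : ℕ} (n : Fin d → ℤ) : ∫ x, ex n x ∂(muX d) = if n = 0 then 1 else 0 := by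
  simp_rw [ex_prod]
  unfold muX
  rw [integral_fintype_prod_eq_prod (μ := fun _ : Fin d => volume.restrict (Set.Ioc (0:ℝ) 1)) (fun i (y : ℝ) => Complex.exp (2 * π * Complex.I * ((n i : ℝ) * (y : ℝ) : ℂ)))]
  simp_rw [int_char]
  split_ifs with h
  · simp [h]
  · obtain ⟨i, hi⟩ := Function.ne_iff.mp h
    exact Finset.prod_eq_zero (Finset.mem_univ i) (if_neg hi)

lemma ex_memLp {d : ℕ} (n : Fin d → ℤ) : MemLp (ex n) 2 (muX d) :=
  MemLp.of_bound (ex_cont n).aestronglyMeasurable 1 (Filter.Eventually.of_forall fun x => (ex_norm n x).le)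

lemma ex_orthonormal (d : ℕ) : Orthonormal ℂ (fun n : Fin d → ℤ => (ex_memLp n).toLp (ex n)) := by
  rw [orthonormal_iff_ite]
  intro m n
  rw [L2.inner_def]
  have : ∫ a, inner ℂ (((ex_memLp m).toLp (ex m)) a) (((ex_memLp n).toLp (ex n)) a) ∂(muX d)
      = ∫ a, ex (n - m) a ∂(muX d) := by
    apply integral_congr_ae
    filter_upwards [(ex_memLp m).coeFn_toLp, (ex_memLp n).coeFn_toLp] with a h1 h2
    rw [h1, h2, sub_eq_add_neg, ex_add, ex_neg, RCLike.inner_apply]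
  rw [this, int_ex]
  simp only [sub_eq_zero, eq_comm]

/-- Bessel. -/
lemma bessel {d : ℕ} (F : (Fin d → ℝ) → ℂ) (hF : AEStronglyMeasurable F (muX d)) (C : ℝ)
    (hC : ∀ x, ‖F x‖ ≤ C) :
    ∑' n : Fin d → ℤ, ‖∫ x, F x * ex n x ∂(muX d)‖ₑ ^ 2 ≤ ∫⁻ x, ‖F x‖ₑ ^ 2 ∂(muX d) := by
  have hm : MemLp F 2 (muX d) := MemLp.of_bound hF C (Filter.Eventually.of_forall hC)
  have h1 : ∀ n : Fin d → ℤ, inner ℂ ((ex_memLp n).toLp (ex n)) (hm.toLp F) = ∫ x, F x * ex (-n) x ∂(muX d) := by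
    intro n
    rw [L2.inner_def]
    apply integral_congr_ae
    filter_upwards [(ex_memLp n).coeFn_toLp, hm.coeFn_toLp] with a h1 h2
    rw [h1, h2, ex_neg, RCLike.inner_apply]
  have h2 := (ex_orthonormal d).tsum_inner_products_le (x := hm.toLp F)
  have h3 := (ex_orthonormal d).inner_products_summable (x := hm.toLp F)
  simp_rw [h1] at h2 h3
  have h4 : ‖hm.toLp F‖ₑ ^ 2 = ∫⁻ x, ‖F x‖ₑ ^ 2 ∂(muX d) := by
    rw [Lp.enorm_def, eLpNorm_congr_ae hm.coeFn_toLp,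
      eLpNorm_eq_lintegral_rpow_enorm_toReal (by norm_num) (by norm_num)]
    rw [← ENNReal.rpow_natCast, ← ENNReal.rpow_mul]
    simp
  rw [← h4, ← (Equiv.neg (Fin d → ℤ)).tsum_eq]
  have e : ∀ z : ℂ, ‖z‖ₑ ^ 2 = ENNReal.ofReal (‖z‖ ^ 2) := fun z => by
    rw [ENNReal.ofReal_pow (norm_nonneg _), ofReal_norm]
  simp only [Equiv.neg_apply, e]
  rw [← ENNReal.ofReal_tsum_of_nonneg (fun _ => by positivity) h3]
  rw [← ofReal_norm (hm.toLp F), ← ENNReal.ofReal_pow (norm_nonneg _)]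
  exact ENNReal.ofReal_le_ofReal h2
end

section
open MeasureTheory
/-- Fourier series -/
def hat {d : ℕ} (K : (Fin d → ℤ) → ℂ) (x : Fin d → ℝ) : ℂ := ∑' n, K n * ex (-n) x

lemma hat_summable {d : ℕ} {K : (Fin d → ℤ) → ℂ} (hK : Summable fun n => ‖K n‖) (x : Fin d → ℝ) :
    Summable (fun n => K n * ex (-n) x) := by
  apply Summable.of_norm
  simpa [norm_mul, ex_norm] using hK

lemma hat_bound {d : ℕ} {K : (Fin d → ℤ) → ℂ} (hK : Summable fun n => ‖K n‖) (x : Fin d → ℝ) :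
    ‖hat K x‖ ≤ ∑' n, ‖K n‖ := by
  refine (norm_tsum_le_tsum_norm ?_).trans_eq ?_
  · simpa [norm_mul, ex_norm] using hK
  · simp [norm_mul, ex_norm]

lemma hat_cont {d : ℕ} {K : (Fin d → ℤ) → ℂ} (hK : Summable fun n => ‖K n‖) : Continuous (hat K) := by
  refine continuous_tsum (u := fun n => ‖K n‖) (fun n => continuous_const.mul (ex_cont _)) hK ?_
  intro n x
  simp [norm_mul, ex_norm]

lemma int_hat_mul {d : ℕ} {K : (Fin d → ℤ) → ℂ} (hK : Summable fun n => ‖K n‖)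
    {H : (Fin d → ℝ) → ℂ} (hH : AEStronglyMeasurable H (muX d)) (C : ℝ) (hC : ∀ x, ‖H x‖ ≤ C) :
    ∫ x, hat K x * H x ∂(muX d) = ∑' m, K m * ∫ x, ex (-m) x * H x ∂(muX d) := by
  have h0 : ∀ x, hat K x * H x = ∑' m, K m * ex (-m) x * H x := fun x => by
    unfold hat; rw [tsum_mul_right]
  simp_rw [h0]
  have hmeas : ∀ m, AEStronglyMeasurable (fun x => K m * ex (-m) x * H x) (muX d) := fun m =>
    ((continuous_const.mul (ex_cont _)).aestronglyMeasurable).mul hH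
  have hIntg : ∀ m, Integrable (fun x => K m * ex (-m) x * H x) (muX d) := fun m => by
    refine Integrable.of_bound (hmeas m) (‖K m‖ * C) (Filter.Eventually.of_forall fun x => ?_)
    rw [norm_mul, norm_mul, ex_norm, mul_one]
    exact mul_le_mul_of_nonneg_left (hC x) (norm_nonneg _)
  rw [← integral_tsum_of_summable_integral_norm hIntg]
  · congr 1; ext m
    rw [← integral_const_mul]
    congr 1; ext x; ring
  · refine Summable.of_nonneg_of_le (fun m => by positivity) (fun m => ?_) (hK.mul_right C)
    calc ∫ a, ‖K m * ex (-m) a * H a‖ ∂(muX d) ≤ ∫ a, ‖K m‖ * C ∂(muX d) := by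
          refine integral_mono (hIntg m).norm (integrable_const _) (fun x => ?_)
          simp only [norm_mul, ex_norm, mul_one]
          exact mul_le_mul_of_nonneg_left (hC x) (norm_nonneg _)
      _ = _ := by simp

lemma hat_coeff {d : ℕ} {K : (Fin d → ℤ) → ℂ} (hK : Summable fun n => ‖K n‖) (n : Fin d → ℤ) :
    ∫ x, hat K x * ex n x ∂(muX d) = K n := by
  rw [int_hat_mul hK (ex_cont n).aestronglyMeasurable 1 (fun x => (ex_norm n x).le)]
  simp_rw [← ex_add, int_ex]
  rw [tsum_eq_single n]
  · simp
  · intro m hm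
    rw [if_neg, mul_zero]
    intro h; apply hm; rw [neg_add_eq_zero] at h; exact h

lemma conv_hat {d : ℕ} {K f : (Fin d → ℤ) → ℂ} (hK : Summable fun n => ‖K n‖)
    (hf : Summable fun n => ‖f n‖) (n : Fin d → ℤ) :
    ∑' m, K m * f (n - m) = ∫ x, hat K x * hat f x * ex n x ∂(muX d) := by
  simp_rw [mul_assoc]
  rw [int_hat_mul hK (H := fun x => hat f x * ex n x) ((hat_cont hf).mul (ex_cont n)).aestronglyMeasurable
    (∑' n, ‖f n‖) (fun x => by rw [norm_mul, ex_norm, mul_one]; exact hat_bound hf x)]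
  congr 1; ext m
  rw [← hat_coeff hf (n - m)]
  congr 2; ext x
  rw [sub_eq_add_neg, ex_add]; ring

lemma parseval_le {d : ℕ} {f : (Fin d → ℤ) → ℂ} (hf : Summable fun n => ‖f n‖) :
    ∫⁻ x, ‖hat f x‖ₑ ^ 2 ∂(muX d) ≤ ∑' n, ‖f n‖ₑ ^ 2 := by
  have e : ∀ z : ℂ, ‖z‖ₑ ^ 2 = ENNReal.ofReal (‖z‖ ^ 2) := fun z => by
    rw [ENNReal.ofReal_pow (norm_nonneg _), ofReal_norm]
  have hb := hat_bound hf
  have h1 := int_hat_mul hf (H := fun x => (starRingEnd ℂ) (hat f x))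
    ((Complex.continuous_conj.comp (hat_cont hf)).aestronglyMeasurable) _
    (fun x => by simpa using hb x)
  have h2 : ∀ m, ∫ x, ex (-m) x * (starRingEnd ℂ) (hat f x) ∂(muX d) = (starRingEnd ℂ) (f m) := by
    intro m
    rw [← hat_coeff hf m, ← integral_conj]
    congr 1; ext x
    rw [map_mul, ex_neg, mul_comm]
  simp_rw [h2, Complex.mul_conj, Complex.normSq_eq_norm_sq] at h1
  have hs : Summable fun n => ‖f n‖ ^ 2 := by
    have : ∀ᶠ n in Filter.cofinite, ‖f n‖ ≤ 1 := (hf.tendsto_cofinite_zero).eventually (ge_mem_nhds one_pos)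
    refine Summable.of_norm_bounded_eventually hf ?_
    filter_upwards [this] with n hn
    rw [Real.norm_of_nonneg (by positivity), pow_two]
    exact mul_le_of_le_one_left (norm_nonneg _) hn
  rw [integral_complex_ofReal, ← Complex.ofReal_tsum, Complex.ofReal_inj] at h1
  simp_rw [e]
  rw [← ENNReal.ofReal_tsum_of_nonneg (fun _ => by positivity) hs, ← h1,
    ofReal_integral_eq_lintegral_ofReal]
  · refine Integrable.of_bound ((hat_cont hf).norm.pow 2).aestronglyMeasurable ((∑' n, ‖f n‖) ^ 2)
      (Filter.Eventually.of_forall fun x => ?_)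
    rw [Real.norm_of_nonneg (by positivity)]
    exact pow_le_pow_left₀ (norm_nonneg _) (hb x) 2
  · exact Filter.Eventually.of_forall fun x => by positivity

/-- multiplier bound -/
lemma mult_bound {d : ℕ} {f : (Fin d → ℤ) → ℂ} (hf : Summable fun n => ‖f n‖)
    (m : (Fin d → ℝ) → ℂ) (hm : Measurable m) (C : ℝ) (hC : ∀ x, ‖m x‖ ≤ C) :
    ∑' n : Fin d → ℤ, ‖∫ x, m x * hat f x * ex n x ∂(muX d)‖ₑ ^ 2 ≤
      ∫⁻ x, ‖m x‖ₑ ^ 2 * ‖hat f x‖ₑ ^ 2 ∂(muX d) := by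
  have := bessel (fun x => m x * hat f x) (hm.aestronglyMeasurable.mul (hat_cont hf).aestronglyMeasurable)
    (C * ∑' n, ‖f n‖) (fun x => by
      rw [norm_mul]
      exact mul_le_mul (hC x) (hat_bound hf x) (norm_nonneg _) ((norm_nonneg _).trans (hC x)))
  simpa only [enorm_mul, mul_pow] using this
end

section
lemma hasSum_congr_my {ι : Type*} {f g : ι → ℂ} {a : ℂ} (h : ∀ i, f i = g i) : HasSum f a ↔ HasSum g a := by
  rw [funext h]

/-- quadratic Gauss sum -/
def Gs (q : ℕ) (a l : ℤ) : ℂ :=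
  ∑ r : Fin q, Complex.exp (2 * π * Complex.I * ((a * (r : ℕ) ^ 2 - l * (r : ℕ) : ℤ) : ℂ) / q)

/-- one dimensional theta function -/
def th (z : ℂ) (x : ℝ) : ℂ := ∑' m : ℤ, Complex.exp (2 * π * Complex.I * ((m : ℂ) ^ 2 * z - m * x))

lemma th_term (z : ℂ) (x : ℝ) (m : ℤ) : Complex.exp (2 * π * Complex.I * ((m : ℂ) ^ 2 * z - m * x))
    = jacobiTheta₂_term m (-x) (2 * z) := by
  unfold jacobiTheta₂_term; congr 1; ring

lemma th_hasSum {z : ℂ} (hz : 0 < z.im) (x : ℝ) :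
    HasSum (fun m : ℤ => Complex.exp (2 * π * Complex.I * ((m : ℂ) ^ 2 * z - m * x))) (th z x) := by
  have : 0 < (2 * z).im := by simpa using hz
  have h := hasSum_jacobiTheta₂_term (-x) this
  simp_rw [← th_term] at h
  unfold th
  exact h.summable.hasSum

lemma th_term_split (q : ℕ) (hq : 0 < q) (a : ℤ) (w : ℂ) (x : ℝ) (k : ℤ) (r : ℕ) :
    Complex.exp (2 * π * Complex.I * (((k * q + r : ℤ) : ℂ) ^ 2 * (a / q + w) - ((k * q + r : ℤ) : ℂ) * x))
    = Complex.exp (2 * π * Complex.I * (a * r ^ 2) / q) * (Complex.exp (2 * π * Complex.I * (r ^ 2 * w - r * x)) *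
      jacobiTheta₂_term k (2 * q * r * w - q * x) (2 * q ^ 2 * w)) := by
  have hq' : (q : ℂ) ≠ 0 := by exact_mod_cast hq.ne'
  unfold jacobiTheta₂_term
  rw [← Complex.exp_add, ← Complex.exp_add, Complex.exp_eq_exp_iff_exists_int]
  refine ⟨2 * a * r * k + a * q * k ^ 2, ?_⟩
  push_cast
  field_simp
  ring

lemma th_id_aux (q : ℕ) (hq : 0 < q) (w : ℂ) (hw : 0 < w.im) (x : ℝ) (r : ℕ) :
    HasSum (fun l : ℤ => 1 / (-Complex.I * (2 * q ^ 2 * w)) ^ (1 / 2 : ℂ) *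
      (Complex.exp (2 * π * Complex.I * (-l * r) / q) *
        Complex.exp (-π * (x - l / q) ^ 2 / (2 * (-Complex.I * w)))))
    (Complex.exp (2 * π * Complex.I * (r ^ 2 * w - r * x)) *
      jacobiTheta₂ (2 * q * r * w - q * x) (2 * q ^ 2 * w)) := by
  have hq' : (q : ℂ) ≠ 0 := by exact_mod_cast hq.ne'
  have hw0 : w ≠ 0 := by rintro rfl; simp at hw
  have hI := Complex.I_ne_zero
  rw [jacobiTheta₂_functional_equation]
  have hτ : 0 < (-1 / (2 * q ^ 2 * w) : ℂ).im := by
    have : (-1 / (2 * q ^ 2 * w) : ℂ) = ((1 / (2 * q ^ 2) : ℝ) : ℂ) * (-w⁻¹) := by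
      push_cast; field_simp
    rw [this, Complex.im_ofReal_mul, Complex.neg_im, Complex.inv_im]
    have h1 : 0 < Complex.normSq w := Complex.normSq_pos.mpr hw0
    have h2 : (0:ℝ) < q := by exact_mod_cast hq
    have : -(-w.im / Complex.normSq w) = w.im / Complex.normSq w := by ring
    rw [this]
    positivity
  have h := (hasSum_jacobiTheta₂_term ((2 * q * r * w - q * x) / (2 * q ^ 2 * w)) hτ).mul_left
    (Complex.exp (2 * π * Complex.I * (r ^ 2 * w - r * x)) * (1 / (-Complex.I * (2 * q ^ 2 * w)) ^ (1 / 2 : ℂ) *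
      Complex.exp (-π * Complex.I * (2 * q * r * w - q * x) ^ 2 / (2 * q ^ 2 * w))))
  rw [← (Equiv.neg ℤ).hasSum_iff] at h
  rw [← mul_assoc (Complex.exp _)]
  refine (hasSum_congr_my fun l => ?_).mpr h
  simp only [Function.comp, Equiv.neg_apply]
  unfold jacobiTheta₂_term
  rw [← Complex.exp_add]
  have reorder : ∀ A c B D : ℂ, A * (c * B) * D = c * (A * B * D) := by intros; ring
  rw [reorder, ← Complex.exp_add, ← Complex.exp_add]
  congr 2
  push_cast
  have hII : Complex.I ^ 2 = -1 := Complex.I_sq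
  field_simp
  ring_nf
  simp only [hII, show Complex.I ^ 3 = -Complex.I from Complex.I_pow_three, Complex.I_pow_four]
  ring

lemma th_id (q : ℕ) (hq : 0 < q) (a : ℤ) (w : ℂ) (hw : 0 < w.im) (x : ℝ) :
    HasSum (fun l : ℤ => 1 / (-Complex.I * (2 * q ^ 2 * w)) ^ (1 / 2 : ℂ) *
      (Gs q a l * Complex.exp (-π * (x - l / q) ^ 2 / (2 * (-Complex.I * w)))))
    (th (a / q + w) x) := by
  have : NeZero q := ⟨hq.ne'⟩
  have him : 0 < ((a : ℂ) / q + w).im := by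
    have : ((a : ℂ) / q) = ((a / q : ℝ) : ℂ) := by push_cast; rfl
    rw [Complex.add_im, this, Complex.ofReal_im, zero_add]; exact hw
  have h0 := th_hasSum him x
  have hτ : 0 < (2 * q ^ 2 * w : ℂ).im := by
    have : (2 * q ^ 2 * w : ℂ) = ((2 * q ^ 2 : ℝ) : ℂ) * w := by push_cast; ring
    rw [this, Complex.im_ofReal_mul]; positivity
  have h1 : th (a / q + w) x = ∑ r : Fin q, Complex.exp (2 * π * Complex.I * (a * (r : ℕ) ^ 2) / q) *
      (Complex.exp (2 * π * Complex.I * ((r : ℕ) ^ 2 * w - (r : ℕ) * x)) *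
      jacobiTheta₂ (2 * q * (r : ℕ) * w - q * x) (2 * q ^ 2 * w)) := by
    have h2 := h0
    rw [← (Int.divModEquiv q).symm.hasSum_iff, ← (Equiv.prodComm (Fin q) ℤ).hasSum_iff] at h2
    have h3 : HasSum (fun r : Fin q => Complex.exp (2 * π * Complex.I * (a * (r : ℕ) ^ 2) / q) *
      (Complex.exp (2 * π * Complex.I * ((r : ℕ) ^ 2 * w - (r : ℕ) * x)) *
      jacobiTheta₂ (2 * q * (r : ℕ) * w - q * x) (2 * q ^ 2 * w))) (th (a / q + w) x) := by
      refine HasSum.prod_fiberwise h2 (fun r => ?_)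
      have h4 := ((hasSum_jacobiTheta₂_term (2 * q * (r : ℕ) * w - q * x) hτ).mul_left
        (Complex.exp (2 * π * Complex.I * ((r : ℕ) ^ 2 * w - (r : ℕ) * x)))).mul_left
        (Complex.exp (2 * π * Complex.I * (a * (r : ℕ) ^ 2) / q))
      refine (hasSum_congr_my fun k => ?_).mpr h4
      rw [← th_term_split q hq]
      rfl
    exact h3.unique (hasSum_fintype _)
  rw [h1]
  have h5 := hasSum_sum (s := (Finset.univ : Finset (Fin q))) (fun (r : Fin q) _ =>
    (th_id_aux q hq w hw x (r : ℕ)).mul_left (Complex.exp (2 * π * Complex.I * (a * (r : ℕ) ^ 2) / q)))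
  refine (hasSum_congr_my fun l => ?_).mpr h5
  unfold Gs
  rw [Finset.sum_mul, Finset.mul_sum]
  refine Finset.sum_congr rfl fun r _ => ?_
  have : Complex.exp (2 * π * Complex.I * ((a * (r : ℕ) ^ 2 - l * (r : ℕ) : ℤ) : ℂ) / q) =
    Complex.exp (2 * π * Complex.I * (a * (r : ℕ) ^ 2) / q) * Complex.exp (2 * π * Complex.I * (-l * (r : ℕ)) / q) := by
    rw [← Complex.exp_add]; congr 1; push_cast; ring
  rw [this]; ring
end

section
lemma Gs_eq (q : ℕ) [NeZero q] (a l : ℤ) :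
    Gs q a l = ∑ r : ZMod q, ZMod.stdAddChar ((a : ZMod q) * r ^ 2 - (l : ZMod q) * r) := by
  unfold Gs
  obtain ⟨k, rfl⟩ : ∃ k, q = k + 1 := ⟨q - 1, by have := NeZero.ne q; omega⟩
  refine Finset.sum_congr rfl fun r _ => ?_
  rw [← ZMod.stdAddChar_coe]
  congr 1
  push_cast
  have : (((r : ℕ) : ZMod (k + 1))) = (r : Fin (k + 1)) := ZMod.natCast_zmod_val (n := k + 1) r
  rw [this]

lemma two_torsion (q : ℕ) [NeZero q] : (Finset.univ.filter fun h : ZMod q => 2 * h = 0).card ≤ 2 := by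
  have : (Finset.univ.filter fun h : ZMod q => 2 * h = 0).card ≤ ({0, q / 2} : Finset ℕ).card := by
    refine Finset.card_le_card_of_injOn ZMod.val ?_ (ZMod.val_injective q).injOn
    intro h hh
    simp only [Finset.coe_filter, Finset.mem_univ, true_and] at hh
    have hh : 2 * h = 0 := hh
    have h1 : ((2 * h.val : ℕ) : ZMod q) = 0 := by push_cast; rw [ZMod.natCast_zmod_val]; exact hh
    rw [ZMod.natCast_eq_zero_iff] at h1
    have h2 := ZMod.val_lt h
    obtain ⟨c, hc⟩ := h1
    have : c = 0 ∨ c = 1 := by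
      by_contra hcon
      have : 2 ≤ c := by omega
      nlinarith
    simp only [Finset.coe_insert, Finset.coe_singleton, Set.mem_insert_iff, Set.mem_singleton_iff]
    rcases this with rfl | rfl <;> omega
  exact this.trans Finset.card_le_two

lemma Gs_bound (q : ℕ) (hq : 0 < q) (a l : ℤ) (h : IsCoprime a (q : ℤ)) :
    ‖Gs q a l‖ ≤ Real.sqrt (2 * q) := by
  have : NeZero q := ⟨hq.ne'⟩
  rw [Gs_eq]
  apply Real.le_sqrt_of_sq_le
  set ψ : AddChar (ZMod q) ℂ := ZMod.stdAddChar
  have hψ : ψ.IsPrimitive := ZMod.isPrimitive_stdAddChar q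
  have hu : IsUnit (a : ZMod q) := by
    obtain ⟨u, v, huv⟩ := h
    refine IsUnit.of_mul_eq_one (u : ZMod q) ?_
    have := congrArg (Int.cast : ℤ → ZMod q) huv
    push_cast at this
    rw [ZMod.natCast_self, mul_zero, add_zero] at this
    rw [mul_comm]; exact this
  have key : (∑ r : ZMod q, ψ ((a : ZMod q) * r ^ 2 - (l : ZMod q) * r)) *
      (starRingEnd ℂ) (∑ r : ZMod q, ψ ((a : ZMod q) * r ^ 2 - (l : ZMod q) * r)) =
      ∑ h : ZMod q, ψ (a * h ^ 2 - l * h) * ((if (2 * a * h : ZMod q) = 0 then Fintype.card (ZMod q) else 0 : ℕ) : ℂ) := by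
    rw [map_sum, Finset.sum_mul_sum, Finset.sum_comm]
    have : ∀ s : ZMod q, ∑ r : ZMod q, ψ ((a : ZMod q) * r ^ 2 - (l : ZMod q) * r) *
      (starRingEnd ℂ) (ψ ((a : ZMod q) * s ^ 2 - (l : ZMod q) * s)) =
      ∑ h : ZMod q, ψ (a * h ^ 2 - l * h) * ψ (s * (2 * a * h)) := by
      intro s
      rw [← Equiv.sum_comp (Equiv.addRight s)]
      refine Finset.sum_congr rfl fun h _ => ?_
      rw [← AddChar.map_neg_eq_conj, ← AddChar.map_add_eq_mul, ← AddChar.map_add_eq_mul]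
      congr 1
      simp only [Equiv.coe_addRight]
      ring
    simp_rw [this]
    rw [Finset.sum_comm]
    refine Finset.sum_congr rfl fun h _ => ?_
    rw [← Finset.mul_sum, AddChar.sum_mulShift _ hψ]
  have h2 : ‖∑ r : ZMod q, ψ ((a : ZMod q) * r ^ 2 - (l : ZMod q) * r)‖ ^ 2 =
      ‖(∑ r : ZMod q, ψ ((a : ZMod q) * r ^ 2 - (l : ZMod q) * r)) *
      (starRingEnd ℂ) (∑ r : ZMod q, ψ ((a : ZMod q) * r ^ 2 - (l : ZMod q) * r))‖ := by
    rw [norm_mul, RCLike.norm_conj, pow_two]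
  rw [h2, key]
  calc _ ≤ ∑ h : ZMod q, (if (2 * h : ZMod q) = 0 then (q : ℝ) else 0) := by
        refine norm_sum_le_of_le _ fun h _ => ?_
        rw [norm_mul, AddChar.norm_apply, one_mul]
        have : (2 * a * h : ZMod q) = 0 ↔ 2 * h = 0 := by
          rw [show (2 * a * h : ZMod q) = a * (2 * h) by ring]
          exact hu.mul_right_eq_zero
        simp only [this]
        split_ifs <;> simp
    _ = (Finset.univ.filter fun h : ZMod q => 2 * h = 0).card * (q : ℝ) := by
        rw [← Finset.sum_filter, Finset.sum_const, nsmul_eq_mul]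
    _ ≤ 2 * q := by
        have := two_torsion q
        have : ((Finset.univ.filter fun h : ZMod q => 2 * h = 0).card : ℝ) ≤ 2 := by exact_mod_cast this
        gcongr
end

section
/-- normalized Dirichlet kernel -/
def chiM (M : ℕ) (y : ℝ) : ℂ :=
  ((2 * M + 1 : ℝ) : ℂ)⁻¹ * ∑ m ∈ Finset.Icc (-(M : ℤ)) M, Complex.exp (-(2 * π * Complex.I * (m * y)))

lemma e_norm (t : ℝ) : ‖Complex.exp (-(2 * π * Complex.I * t))‖ = 1 := by
  have : (-(2 * π * Complex.I * t)) = ((-(2 * π * t) : ℝ) : ℂ) * Complex.I := by push_cast; ring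
  rw [this, Complex.norm_exp_ofReal_mul_I]

lemma card_IccM (M : ℕ) : (Finset.Icc (-(M : ℤ)) M).card = 2 * M + 1 := by
  rw [Int.card_Icc]; omega

lemma chiM_periodic (M : ℕ) (y : ℝ) (l : ℤ) : chiM M (y - l) = chiM M y := by
  unfold chiM
  congr 1
  refine Finset.sum_congr rfl fun m _ => ?_
  rw [Complex.exp_eq_exp_iff_exists_int]
  exact ⟨m * l, by push_cast; ring⟩

lemma chiM_le_one (M : ℕ) (y : ℝ) : ‖chiM M y‖ ≤ 1 := by
  unfold chiM
  rw [norm_mul, norm_inv, Complex.norm_real, Real.norm_of_nonneg (by positivity)]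
  have : ‖∑ m ∈ Finset.Icc (-(M : ℤ)) M, Complex.exp (-(2 * π * Complex.I * (m * y)))‖ ≤ 2 * M + 1 := by
    calc _ ≤ ∑ m ∈ Finset.Icc (-(M : ℤ)) M, (1 : ℝ) := by
          refine norm_sum_le_of_le _ fun m _ => ?_
          have := e_norm (m * y); push_cast at this; exact this.le
      _ = _ := by rw [Finset.sum_const, card_IccM]; simp
  rw [inv_mul_le_iff₀ (by positivity)]; linarith

lemma chiM_sub_one (M : ℕ) (y : ℝ) : ‖1 - chiM M y‖ ≤ 2 * π * M * |y| := by
  have h : (1 : ℂ) - chiM M y = ((2 * M + 1 : ℝ) : ℂ)⁻¹ * ∑ m ∈ Finset.Icc (-(M : ℤ)) M,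
      (1 - Complex.exp (-(2 * π * Complex.I * (m * y)))) := by
    unfold chiM
    rw [Finset.sum_sub_distrib, mul_sub]
    congr 1
    rw [Finset.sum_const, card_IccM]
    have : ((2 * M + 1 : ℝ) : ℂ) ≠ 0 := by exact_mod_cast (by positivity : (2 * M + 1 : ℝ) ≠ 0)
    push_cast at this ⊢
    field_simp
    simp
  rw [h, norm_mul, norm_inv, Complex.norm_real, Real.norm_of_nonneg (by positivity),
    inv_mul_le_iff₀ (by positivity)]
  calc _ ≤ ∑ m ∈ Finset.Icc (-(M : ℤ)) M, (2 * π * M * |y| : ℝ) := by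
        refine norm_sum_le_of_le _ fun m hm => ?_
        rw [Finset.mem_Icc] at hm
        have h1 := Real.norm_exp_I_mul_ofReal_sub_one_le (x := -(2 * π * m * y))
        rw [norm_sub_rev]
        have e : Complex.exp (-(2 * π * Complex.I * (m * y))) = Complex.exp (Complex.I * ((-(2 * π * m * y) : ℝ) : ℂ)) := by
          congr 1; push_cast; ring
        rw [e]
        refine h1.trans ?_
        rw [norm_neg, norm_mul, norm_mul, Real.norm_of_nonneg (by positivity : 0 ≤ 2 * π), Real.norm_eq_abs, Real.norm_eq_abs]
        have : |(m : ℝ)| ≤ M := by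
          rw [abs_le]; exact ⟨by exact_mod_cast hm.1, by exact_mod_cast hm.2⟩
        gcongr
    _ = _ := by rw [Finset.sum_const, card_IccM]; simp

lemma geom_Icc (M : ℕ) (z : ℂ) (hz : z ≠ 0) :
    (1 - z) * ∑ m ∈ Finset.Icc (-(M : ℤ)) M, z ^ m = z ^ (-(M : ℤ)) - z ^ ((M : ℤ) + 1) := by
  induction M with
  | zero => simp
  | succ M ih =>
    have : Finset.Icc (-((M + 1 : ℕ) : ℤ)) ((M + 1 : ℕ) : ℤ) =
        insert (-((M : ℤ) + 1)) (insert ((M : ℤ) + 1) (Finset.Icc (-(M : ℤ)) M)) := by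
      ext k; simp only [Finset.mem_Icc, Finset.mem_insert]; push_cast; omega
    rw [this, Finset.sum_insert, Finset.sum_insert, mul_add, mul_add, ih]
    · push_cast
      have e1 : z ^ (-(M : ℤ)) = z * z ^ (-((M : ℤ) + 1)) := by
        rw [← zpow_one_add₀ hz]; congr 1; ring
      have e2 : z ^ ((M : ℤ) + 1 + 1) = z * z ^ ((M : ℤ) + 1) := by
        rw [← zpow_one_add₀ hz]; congr 1; ring
      rw [e1, e2]; ring
    · simp
    · simp only [Finset.mem_insert, Finset.mem_Icc]; omega

lemma chiM_decay (M : ℕ) (y : ℝ) (hy : |y| ≤ 1 / 2) : M * |y| * ‖chiM M y‖ ≤ 1 := by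
  set z := Complex.exp (-(2 * π * Complex.I * y)) with hz
  have hz0 : z ≠ 0 := Complex.exp_ne_zero _
  have hz1 : ‖z‖ = 1 := e_norm y
  have h1 := geom_Icc M z hz0
  have h2 : ∑ m ∈ Finset.Icc (-(M : ℤ)) M, Complex.exp (-(2 * π * Complex.I * (m * y))) =
      ∑ m ∈ Finset.Icc (-(M : ℤ)) M, z ^ m := by
    refine Finset.sum_congr rfl fun m _ => ?_
    rw [hz, ← Complex.exp_int_mul]; congr 1; ring
  have h3 : ‖1 - z‖ * ‖∑ m ∈ Finset.Icc (-(M : ℤ)) M, z ^ m‖ ≤ 2 := by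
    rw [← norm_mul, h1]
    refine (norm_sub_le _ _).trans ?_
    rw [norm_zpow, norm_zpow, hz1, one_zpow, one_zpow]; norm_num
  have h4 : 4 * |y| ≤ ‖1 - z‖ := by
    rw [norm_sub_rev]
    have e : z = Complex.exp (Complex.I * ((-(2 * π * y) : ℝ) : ℂ)) := by
      rw [hz]; congr 1; push_cast; ring
    rw [e, Complex.norm_exp_I_mul_ofReal_sub_one]
    have : -(2 * π * y) / 2 = -(π * y) := by ring
    rw [this, Real.sin_neg, norm_mul, norm_neg, Real.norm_two, Real.norm_eq_abs]
    have h5 := Real.mul_le_sin (x := π * |y|) (by positivity) (by nlinarith [Real.pi_pos])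
    have h6 : |Real.sin (π * y)| = Real.sin (π * |y|) := by
      rcases abs_cases y with ⟨e1, e2⟩ | ⟨e1, e2⟩
      · rw [e1] at h5 ⊢
        exact abs_of_nonneg (le_trans (by positivity) h5)
      · rw [e1] at h5 ⊢
        rw [mul_neg, Real.sin_neg, abs_of_nonpos]
        rw [mul_neg, Real.sin_neg] at h5
        have : 0 ≤ 2 / π * -(π * y) := by
          have : 0 ≤ -(π * y) := by nlinarith [Real.pi_pos]
          positivity
        linarith
    rw [h6]
    have : 2 / π * (π * |y|) = 2 * |y| := by field_simp
    linarith
  unfold chiM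
  rw [norm_mul, norm_inv, Complex.norm_real, Real.norm_of_nonneg (by positivity), h2]
  set T := ‖∑ m ∈ Finset.Icc (-(M : ℤ)) M, z ^ m‖
  have hT : 0 ≤ T := norm_nonneg _
  have h7 : 4 * |y| * T ≤ 2 := (mul_le_mul_of_nonneg_right h4 hT).trans h3
  have : M * |y| * ((2 * M + 1 : ℝ)⁻¹ * T) = (M / (2 * M + 1 : ℝ)) * (|y| * T) := by
    field_simp
  rw [this]
  have h8 : (M / (2 * M + 1 : ℝ)) ≤ 1 := by
    rw [div_le_one (by positivity)]; have : (0:ℝ) ≤ M := Nat.cast_nonneg _; linarith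
  have h9 : 0 ≤ |y| * T := by positivity
  have h10 : (0:ℝ) ≤ (M / (2 * M + 1 : ℝ)) := by positivity
  nlinarith
end

section
/-- dual theta sum -/
def Sq (q : ℕ) (a : ℤ) (s : ℂ) (x : ℝ) : ℂ :=
  ∑' l : ℤ, Gs q a l * Complex.exp (-π * (x - l / q) ^ 2 / (2 * s))

/-- comparator -/
def Eq1 (q : ℕ) (a : ℤ) (M : ℕ) (x : ℝ) : ℂ := Gs q a (round (q * x)) * chiM M (q * x)

lemma gauss_summable {c : ℝ} (hc : 0 < c) : Summable fun k : ℤ => Real.exp (-π * c * (k : ℝ) ^ 2) := by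
  have h := (hasSum_jacobiTheta₂_term 0 (τ := Complex.I * c) (by simpa using hc)).summable.norm
  refine h.congr fun k => ?_
  unfold jacobiTheta₂_term
  have : (2 * π * Complex.I * k * 0 + π * Complex.I * (k:ℂ) ^ 2 * (Complex.I * c)) =
      ((-π * c * (k : ℝ) ^ 2 : ℝ) : ℂ) := by
    push_cast; linear_combination (π * (k:ℂ) ^ 2 * c) * Complex.I_sq
  rw [this, Complex.norm_exp_ofReal]

lemma gk_norm (q : ℕ) (hq : 0 < q) (s : ℂ) (hs : 0 < s.re) (x : ℝ) (l : ℤ) :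
    ‖Complex.exp (-π * (x - l / q) ^ 2 / (2 * s))‖ =
      Real.exp (-π * (s.re / (q ^ 2 * ‖s‖ ^ 2)) * (q * x - l) ^ 2 / 2) := by
  rw [Complex.norm_exp]
  congr 1
  have hq' : (q : ℝ) ≠ 0 := by exact_mod_cast hq.ne'
  have hs0 : s ≠ 0 := by rintro rfl; simp at hs
  have e : (-π * (x - l / q) ^ 2 / (2 * s) : ℂ) = ((-π * (x - l / q) ^ 2 / 2 : ℝ) : ℂ) * s⁻¹ := by
    push_cast; field_simp
  rw [e, Complex.re_ofReal_mul, Complex.inv_re, Complex.normSq_eq_norm_sq]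
  have : ‖s‖ ≠ 0 := norm_ne_zero_iff.mpr hs0
  field_simp

lemma gauss_pt (Y v : ℝ) (hY : 1 / 2 ≤ Y) (hv : |v| ≤ 1 / 2) (k : ℤ) :
    Real.exp (-π * Y * (v - k) ^ 2 / 2) ≤ Real.exp (-π * Y * v ^ 2 / 4) * Real.exp (-π * (1 / 64) * (k : ℝ) ^ 2) := by
  rw [← Real.exp_add]
  apply Real.exp_le_exp.mpr
  have h1 : v ^ 2 / 2 + (k : ℝ) ^ 2 / 8 ≤ (v - k) ^ 2 := by
    rcases eq_or_ne k 0 with rfl | hk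
    · push_cast; nlinarith [sq_nonneg v]
    · have hk1 : (1 : ℝ) ≤ |(k : ℝ)| := by exact_mod_cast Int.one_le_abs hk
      have h2 : v * k ≤ |v| * |(k : ℝ)| := by rw [← abs_mul]; exact le_abs_self _
      nlinarith [sq_abs v, sq_abs (k : ℝ), abs_nonneg v]
  have h3 : 0 ≤ (k : ℝ) ^ 2 := sq_nonneg _
  have h4 : Y * (v ^ 2 / 2) + (1 / 2) * ((k : ℝ) ^ 2 / 8) ≤ Y * (v - k) ^ 2 := by nlinarith
  nlinarith [Real.pi_pos]

lemma gauss_pt' (Y v : ℝ) (hY : 1 / 2 ≤ Y) (hv : |v| ≤ 1 / 2) (k : ℤ) (hk : k ≠ 0) :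
    Real.exp (-π * Y * (v - k) ^ 2 / 2) ≤ Real.exp (-π * Y / 32) * Real.exp (-π * (1 / 64) * (k : ℝ) ^ 2) := by
  rw [← Real.exp_add]
  apply Real.exp_le_exp.mpr
  have hk1 : (1 : ℝ) ≤ |(k : ℝ)| := by exact_mod_cast Int.one_le_abs hk
  have h1 : (k : ℝ) ^ 2 / 8 ≤ (v - k) ^ 2 := by
      have h2 : v * k ≤ |v| * |(k : ℝ)| := by rw [← abs_mul]; exact le_abs_self _
      nlinarith [sq_abs v, sq_abs (k : ℝ), abs_nonneg v]
  have h3 : 1 ≤ (k : ℝ) ^ 2 := by rw [← sq_abs]; nlinarith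
  have h4 : Y / 16 + (1 / 32) * ((k : ℝ) ^ 2) ≤ Y * (v - k) ^ 2 := by nlinarith
  nlinarith [Real.pi_pos]

lemma exp_neg_sub_one (z : ℂ) (hz : 0 ≤ z.re) : ‖Complex.exp (-z) - 1‖ ≤ 2 * Real.sqrt ‖z‖ := by
  rcases le_or_gt ‖z‖ 1 with h | h
  · have := Complex.norm_exp_sub_one_le (x := -z) (by simpa using h)
    rw [norm_neg] at this
    refine this.trans ?_
    have : ‖z‖ ≤ Real.sqrt ‖z‖ := by
      apply Real.le_sqrt_of_sq_le
      nlinarith [norm_nonneg z]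
    linarith
  · have h1 : ‖Complex.exp (-z)‖ ≤ 1 := by
      rw [Complex.norm_exp]; simpa using hz
    have h2 : 1 ≤ Real.sqrt ‖z‖ := Real.one_le_sqrt.mpr h.le
    refine (norm_sub_le _ _).trans ?_
    rw [norm_one]; linarith

lemma aux_exp1 (y : ℝ) (_hy : 0 ≤ y) : y * Real.exp (-π * y ^ 2 / 4) ≤ 1 := by
  have h := Real.add_one_le_exp (π * y ^ 2 / 4)
  have e : Real.exp (-π * y ^ 2 / 4) = (Real.exp (π * y ^ 2 / 4))⁻¹ := by rw [← Real.exp_neg]; congr 1; ring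
  rw [e, ← div_eq_mul_inv, div_le_one (Real.exp_pos _)]
  nlinarith [Real.pi_gt_three, sq_nonneg (y - 2/3), sq_nonneg y]

lemma aux_exp2 (y : ℝ) (_hy : 0 ≤ y) : y * Real.exp (-π * y ^ 2 / 32) ≤ 2 := by
  have h := Real.add_one_le_exp (π * y ^ 2 / 32)
  have e : Real.exp (-π * y ^ 2 / 32) = (Real.exp (π * y ^ 2 / 32))⁻¹ := by rw [← Real.exp_neg]; congr 1; ring
  rw [e, ← div_eq_mul_inv, div_le_iff₀ (Real.exp_pos _)]
  nlinarith [Real.pi_gt_three, sq_nonneg (y - 8/3), sq_nonneg y]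

set_option maxHeartbeats 2000000 in
lemma S_bounds : ∃ C : ℝ, 1 ≤ C ∧ ∀ (q Lm : ℕ), 0 < q → q ≤ Lm → ∀ a : ℤ, IsCoprime a (q : ℤ) →
    ∀ s : ℂ, s.re = 1 / (Lm : ℝ) ^ 2 → |s.im| ≤ 1 / (q * Lm) → ∀ x : ℝ,
      ‖Sq q a s x‖ ≤ C * Real.sqrt q ∧
      (Lm * |q * x - round (q * x)| / q) * ‖Sq q a s x‖ ≤ C * Real.sqrt q * (‖s‖ * (Lm : ℝ) ^ 2) ∧
      ‖Sq q a s x - Eq1 q a (Lm / q) x‖ ≤ C * Real.sqrt q *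
        (Lm * |q * x - round (q * x)| / q + ‖s‖ * (Lm : ℝ) ^ 2 * (q / Lm)) ∧
      ‖Eq1 q a (Lm / q) x‖ ≤ C * Real.sqrt q ∧
      (Lm * |q * x - round (q * x)| / q) * ‖Eq1 q a (Lm / q) x‖ ≤ C * Real.sqrt q := by
  set C0 := ∑' k : ℤ, Real.exp (-π * (1 / 64) * (k : ℝ) ^ 2) with hC0
  have hsum := gauss_summable (c := 1 / 64) (by norm_num)
  have hC0pos : 0 ≤ C0 := tsum_nonneg fun _ => (Real.exp_pos _).le
  refine ⟨4 * C0 + 20, by linarith, ?_⟩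
  intro q Lm hq hqL a ha s hsre hsim x
  have hLm : 0 < Lm := lt_of_lt_of_le hq hqL
  have hqR : (0:ℝ) < q := by exact_mod_cast hq
  have hLR : (0:ℝ) < Lm := by exact_mod_cast hLm
  have hqLR : (q:ℝ) ≤ Lm := by exact_mod_cast hqL
  set v := q * x - round (q * x) with hv
  have hvabs : |v| ≤ 1 / 2 := abs_sub_round (q * x)
  set ρ := ‖s‖ * (Lm : ℝ) ^ 2 with hρ
  have hre : 0 < s.re := by rw [hsre]; positivity
  have hs0 : s ≠ 0 := by rintro rfl; simp at hre
  have hsn : 0 < ‖s‖ := norm_pos_iff.mpr hs0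
  have hρpos : 0 < ρ := by positivity
  set t := Lm * |v| / q with ht
  have ht0 : 0 ≤ t := by positivity
  set Y := s.re / (q ^ 2 * ‖s‖ ^ 2) with hY
  have hYρ : Y = (Lm / (q * ρ)) ^ 2 := by
    rw [hY, hsre, hρ]; field_simp
  have hρ1 : 1 ≤ ρ := by
    have := Complex.abs_re_le_norm s
    rw [abs_of_pos hre, hsre] at this
    rw [hρ]
    have h1 := mul_le_mul_of_nonneg_right this (sq_nonneg (Lm : ℝ))
    rwa [div_mul_cancel₀ _ (by positivity)] at h1
  have hY2 : 1 / 2 ≤ Y := by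
    rw [hY, le_div_iff₀ (by positivity)]
    have e1 : ‖s‖ ^ 2 = s.re ^ 2 + s.im ^ 2 := by
      rw [← Complex.normSq_eq_norm_sq, Complex.normSq_apply]; ring
    have e2 : s.im ^ 2 ≤ (1 / (q * Lm)) ^ 2 := by
      rw [← sq_abs]; exact pow_le_pow_left₀ (abs_nonneg _) hsim 2
    have e3 : (q : ℝ) ^ 2 * s.im ^ 2 ≤ s.re := by
      calc (q : ℝ) ^ 2 * s.im ^ 2 ≤ q ^ 2 * (1 / (q * Lm)) ^ 2 := by gcongr
        _ = s.re := by rw [hsre]; field_simp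
    have e4 : (q : ℝ) ^ 2 * s.re ≤ 1 := by
      rw [hsre, mul_one_div, div_le_one (by positivity)]
      gcongr
    rw [e1]
    nlinarith
  -- sums
  have hG : ∀ l, ‖Gs q a l‖ ≤ Real.sqrt (2 * q) := fun l => Gs_bound q hq a l ha
  have hsq2 : Real.sqrt (2 * q) ≤ 2 * Real.sqrt q := by
    rw [Real.sqrt_le_iff]
    refine ⟨by positivity, ?_⟩
    rw [mul_pow, Real.sq_sqrt hqR.le]; linarith
  set g := Real.sqrt (2 * q)
  have hg0 : 0 ≤ g := Real.sqrt_nonneg _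
  set sq := Real.sqrt q
  have hsq0 : 0 ≤ sq := Real.sqrt_nonneg _
  set T : ℤ → ℂ := fun k => Gs q a (k + round (q * x)) * Complex.exp (-π * (x - ((k + round (q * x) : ℤ) : ℂ) / q) ^ 2 / (2 * s)) with hT
  have hST : Sq q a s x = ∑' k, T k := by
    unfold Sq
    rw [← (Equiv.addRight (round (q * x))).tsum_eq]
    rfl
  have hTn : ∀ k, ‖T k‖ ≤ g * Real.exp (-π * Y * (v - k) ^ 2 / 2) := by
    intro k
    rw [hT]
    simp only
    rw [norm_mul, gk_norm q hq s hre]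
    have : (q * x - ((k + round (q * x) : ℤ) : ℝ)) = v - k := by push_cast; rw [hv]; ring
    rw [this]
    exact mul_le_mul_of_nonneg_right (hG _) (Real.exp_pos _).le
  have hT1 : ∀ k, ‖T k‖ ≤ g * Real.exp (-π * Y * v ^ 2 / 4) * Real.exp (-π * (1 / 64) * (k : ℝ) ^ 2) := by
    intro k
    refine (hTn k).trans ?_
    rw [mul_assoc g]
    exact mul_le_mul_of_nonneg_left (gauss_pt Y v hY2 hvabs k) hg0
  have hTs : Summable T := Summable.of_norm_bounded (hsum.mul_left _) hT1
  have hS1 : ‖Sq q a s x‖ ≤ g * Real.exp (-π * Y * v ^ 2 / 4) * C0 := by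
    rw [hST]
    exact tsum_of_norm_bounded (hsum.hasSum.mul_left _) hT1
  have hYv : Y * v ^ 2 = (t / ρ) ^ 2 := by
    rw [hYρ, ← sq_abs v, ht]; field_simp
  have hexp1 : Real.exp (-π * Y * v ^ 2 / 4) ≤ 1 := by
    rw [Real.exp_le_one_iff]
    have : 0 ≤ π * (Y * v ^ 2) := by rw [hYv]; positivity
    nlinarith
  have hexp2 : t * Real.exp (-π * Y * v ^ 2 / 4) ≤ ρ := by
    have := aux_exp1 (t / ρ) (by positivity)
    rw [← hYv] at this
    rw [show -π * Y * v ^ 2 / 4 = -π * (Y * v ^ 2) / 4 by ring]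
    rw [div_mul_eq_mul_div, div_le_one hρpos] at this
    exact this
  have hexp3 : Real.exp (-π * Y / 32) ≤ 2 * (ρ * (q / Lm)) := by
    have := aux_exp2 (Lm / (q * ρ)) (by positivity)
    rw [← hYρ, div_mul_eq_mul_div, div_le_iff₀ (by positivity)] at this
    rw [show 2 * (ρ * ((q : ℝ) / Lm)) = (2 * (q * ρ)) / Lm by ring, le_div_iff₀ hLR]
    linarith
  set M := Lm / q with hM
  have hM1 : (M : ℝ) ≤ Lm / q := Nat.cast_div_le
  have hM2 : (Lm : ℝ) / q ≤ 2 * M := by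
    rw [div_le_iff₀ hqR]
    have h1 : Lm < q * (M + 1) := by rw [hM]; exact Nat.lt_mul_div_succ Lm hq
    have h2 : 1 ≤ M := by rw [hM]; exact (Nat.one_le_div_iff hq).mpr hqL
    have : Lm ≤ 2 * M * q := by nlinarith
    exact_mod_cast this
  have hchi : chiM M (q * x) = chiM M v := (chiM_periodic M (q * x) _).symm
  have hE1 : ‖Eq1 q a M x‖ ≤ g := by
    unfold Eq1
    rw [norm_mul]
    calc _ ≤ g * 1 := mul_le_mul (hG _) (chiM_le_one _ _) (norm_nonneg _) hg0
      _ = g := mul_one _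
  have hE2 : t * ‖Eq1 q a M x‖ ≤ 2 * g := by
    unfold Eq1
    rw [norm_mul, hchi]
    have h1 := chiM_decay M v hvabs
    have h2 : t ≤ 2 * (M * |v|) := by
      rw [ht, show Lm * |v| / q = (Lm : ℝ) / q * |v| by ring]
      nlinarith [abs_nonneg v]
    have h3 : t * ‖chiM M v‖ ≤ 2 := by
      nlinarith [norm_nonneg (chiM M v)]
    calc t * (‖Gs q a (round (q * x))‖ * ‖chiM M v‖) = ‖Gs q a (round (q * x))‖ * (t * ‖chiM M v‖) := by ring
      _ ≤ g * 2 := mul_le_mul (hG _) h3 (by positivity) hg0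
      _ = 2 * g := mul_comm _ _
  have hT0 : ‖T 0 - Eq1 q a M x‖ ≤ g * (10 * t) := by
    have e : T 0 - Eq1 q a M x = Gs q a (round (q * x)) * ((Complex.exp (-((π * v ^ 2 / (2 * q ^ 2) : ℝ) / s : ℂ)) - 1) + (1 - chiM M v)) := by
      have e0 : T 0 = Gs q a (round (q * x)) * Complex.exp (-π * (x - ((round (q * x) : ℤ) : ℂ) / q) ^ 2 / (2 * s)) := by
        change Gs q a (0 + round (q * x)) * Complex.exp (-π * (x - ((0 + round (q * x) : ℤ) : ℂ) / q) ^ 2 / (2 * s)) = _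
        rw [zero_add]
      rw [e0]; unfold Eq1
      rw [hchi]
      have : (-π * (x - ((round (q * x) : ℤ) : ℂ) / q) ^ 2 / (2 * s) : ℂ) = -((π * v ^ 2 / (2 * q ^ 2) : ℝ) / s : ℂ) := by
        have hqc : (q : ℂ) ≠ 0 := by exact_mod_cast hq.ne'
        rw [hv]; push_cast; field_simp
      rw [this]; ring
    rw [e, norm_mul]
    refine mul_le_mul (hG _) ?_ (norm_nonneg _) hg0
    refine (norm_add_le _ _).trans ?_
    have h1 := exp_neg_sub_one ((π * v ^ 2 / (2 * q ^ 2) : ℝ) / s : ℂ) (by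
      rw [div_eq_mul_inv, Complex.re_ofReal_mul, Complex.inv_re]
      have := Complex.normSq_nonneg s
      positivity)
    have h2 : Real.sqrt ‖((π * v ^ 2 / (2 * q ^ 2) : ℝ) / s : ℂ)‖ ≤ (3 / 2) * t := by
      rw [Real.sqrt_le_iff]
      refine ⟨by positivity, ?_⟩
      rw [norm_div, Complex.norm_real, Real.norm_of_nonneg (by positivity), div_le_iff₀ hsn]
      have h3 : 1 ≤ ‖s‖ * (Lm : ℝ) ^ 2 := hρ1
      have h4 : (3 / 2 * t) ^ 2 * ‖s‖ = (9 / 4 * (v ^ 2 / q ^ 2)) * (‖s‖ * (Lm : ℝ) ^ 2) := by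
        rw [ht, ← sq_abs v]; field_simp; ring
      rw [h4]
      have h5 : π * v ^ 2 / (2 * q ^ 2) = π / 2 * (v ^ 2 / q ^ 2) := by field_simp
      rw [h5]
      have h6 : 0 ≤ v ^ 2 / (q : ℝ) ^ 2 := by positivity
      nlinarith [Real.pi_lt_d2]
    have h3 := chiM_sub_one M v
    have h4 : 2 * π * M * |v| ≤ 7 * t := by
      have : M * |v| ≤ t := by
        rw [ht, show Lm * |v| / q = (Lm : ℝ) / q * |v| by ring]
        exact mul_le_mul_of_nonneg_right hM1 (abs_nonneg _)
      have h5 : 0 ≤ M * |v| := by positivity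
      nlinarith [Real.pi_lt_d2, Real.pi_pos]
    linarith
  have hS2 : ‖Sq q a s x - T 0‖ ≤ g * Real.exp (-π * Y / 32) * C0 := by
    rw [hST, hTs.tsum_eq_add_tsum_ite 0, add_sub_cancel_left]
    refine tsum_of_norm_bounded (hsum.hasSum.mul_left _) ?_
    intro k
    split_ifs with hk
    · rw [norm_zero]; positivity
    · refine (hTn k).trans ?_
      rw [mul_assoc g]
      exact mul_le_mul_of_nonneg_left (gauss_pt' Y v hY2 hvabs k hk) hg0
  have hgC : g * C0 ≤ 2 * sq * C0 := mul_le_mul_of_nonneg_right hsq2 hC0pos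
  have hgC0 : 0 ≤ g * C0 := by positivity
  have hsC0 : 0 ≤ sq * C0 := by positivity
  refine ⟨?_, ?_, ?_, ?_, ?_⟩
  · calc ‖Sq q a s x‖ ≤ g * Real.exp (-π * Y * v ^ 2 / 4) * C0 := hS1
      _ ≤ g * 1 * C0 := by gcongr
      _ ≤ (4 * C0 + 20) * sq := by nlinarith
  · calc t * ‖Sq q a s x‖ ≤ t * (g * Real.exp (-π * Y * v ^ 2 / 4) * C0) := by gcongr
      _ = (g * C0) * (t * Real.exp (-π * Y * v ^ 2 / 4)) := by ring
      _ ≤ (g * C0) * ρ := by gcongr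
      _ ≤ (4 * C0 + 20) * sq * ρ := by
        apply mul_le_mul_of_nonneg_right _ hρpos.le
        nlinarith
  · calc ‖Sq q a s x - Eq1 q a M x‖ = ‖(Sq q a s x - T 0) + (T 0 - Eq1 q a M x)‖ := by congr 1; ring
      _ ≤ g * Real.exp (-π * Y / 32) * C0 + g * (10 * t) := (norm_add_le _ _).trans (add_le_add hS2 hT0)
      _ ≤ g * (2 * (ρ * (q / Lm))) * C0 + g * (10 * t) := by gcongr
      _ = (g * C0) * (2 * (ρ * (q / Lm))) + g * (10 * t) := by ring
      _ ≤ (2 * sq * C0) * (2 * (ρ * (q / Lm))) + (2 * sq) * (10 * t) := by gcongr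
      _ ≤ (4 * C0 + 20) * sq * (t + ρ * (q / Lm)) := by
        have h1 : 0 ≤ sq * C0 * t := by positivity
        have h2 : 0 ≤ sq * (ρ * (q / Lm)) := by positivity
        nlinarith
  · nlinarith
  · nlinarith
end

section
lemma prod_sub_prod_bound {ι : Type*} (s : Finset ι) (f g : ι → ℂ) (K D : ℝ) (hK : 0 ≤ K) 
    (hf : ∀ i ∈ s, ‖f i‖ ≤ K) (hg : ∀ i ∈ s, ‖g i‖ ≤ K) (hD : ∀ i ∈ s, ‖f i - g i‖ ≤ K * D) :
    ‖∏ i ∈ s, f i - ∏ i ∈ s, g i‖ ≤ s.card * (K ^ s.card * D) := by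
  classical
  induction s using Finset.induction_on with
  | empty => simp
  | insert a s ha ih =>
    rw [Finset.prod_insert ha, Finset.prod_insert ha, Finset.card_insert_of_notMem ha]
    have ih' := ih (fun i hi => hf i (Finset.mem_insert_of_mem hi))
      (fun i hi => hg i (Finset.mem_insert_of_mem hi)) (fun i hi => hD i (Finset.mem_insert_of_mem hi))
    have e : f a * ∏ i ∈ s, f i - g a * ∏ i ∈ s, g i = f a * (∏ i ∈ s, f i - ∏ i ∈ s, g i) +
      (f a - g a) * ∏ i ∈ s, g i := by ring
    rw [e]
    have h1 : ‖∏ i ∈ s, g i‖ ≤ K ^ s.card := by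
      rw [norm_prod]
      refine (Finset.prod_le_prod (fun _ _ => norm_nonneg _) (fun i hi => hg i (Finset.mem_insert_of_mem hi))).trans_eq ?_
      rw [Finset.prod_const]
    have h2 := hf a (Finset.mem_insert_self _ _)
    have h3 := hD a (Finset.mem_insert_self _ _)
    calc _ ≤ ‖f a‖ * ‖∏ i ∈ s, f i - ∏ i ∈ s, g i‖ + ‖f a - g a‖ * ‖∏ i ∈ s, g i‖ := by
          rw [← norm_mul, ← norm_mul]; exact norm_add_le _ _
      _ ≤ K * (s.card * (K ^ s.card * D)) + (K * D) * K ^ s.card := by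
          have : 0 ≤ K * D := (norm_nonneg _).trans h3
          gcongr
      _ = _ := by push_cast; ring

lemma prod_bound_t {d : ℕ} (f : Fin d → ℂ) (K A t : ℝ) (hK : 0 ≤ K) (ht : 0 ≤ t)
    (hf : ∀ i, ‖f i‖ ≤ K) (i : Fin d) (hi : t * ‖f i‖ ≤ K * A) : t * ‖∏ i, f i‖ ≤ K ^ d * A := by
  rw [norm_prod, ← Finset.mul_prod_erase _ _ (Finset.mem_univ i)]
  have h1 : ∏ j ∈ Finset.univ.erase i, ‖f j‖ ≤ K ^ (d - 1) := by
    have := Finset.prod_le_prod (s := Finset.univ.erase i) (f := fun j => ‖f j‖) (g := fun _ => K)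
      (fun _ _ => norm_nonneg _) (fun j _ => hf j)
    rwa [Finset.prod_const, Finset.card_erase_of_mem (Finset.mem_univ i), Finset.card_univ, Fintype.card_fin] at this
  have h0 : 0 ≤ ∏ j ∈ Finset.univ.erase i, ‖f j‖ := Finset.prod_nonneg fun _ _ => norm_nonneg _
  have hd : d - 1 + 1 = d := by have := i.2; omega
  calc t * (‖f i‖ * ∏ j ∈ Finset.univ.erase i, ‖f j‖) = (t * ‖f i‖) * ∏ j ∈ Finset.univ.erase i, ‖f j‖ := by ring
    _ ≤ (K * A) * K ^ (d - 1) := by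
      have : 0 ≤ K * A := le_trans (by positivity) hi
      gcongr
    _ = K ^ (d - 1 + 1) * A := by ring
    _ = _ := by rw [hd]

/-- distance to the rationals with denominator `q` -/
def dq {d : ℕ} (q : ℕ) (x : Fin d → ℝ) : ℝ := ‖fun i => (q * x i - round (q * x i)) / (q : ℝ)‖

lemma dq_attain {d : ℕ} (hd : 0 < d) (q : ℕ) (x : Fin d → ℝ) :
    ∃ i, dq q x = |q * x i - round (q * x i)| / q := by
  have : Nonempty (Fin d) := ⟨⟨0, hd⟩⟩
  obtain ⟨i, hi⟩ := Finite.exists_max (fun i => ‖(q * x i - round (q * x i)) / (q : ℝ)‖)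
  refine ⟨i, ?_⟩
  have : |q * x i - round (q * x i)| / q = ‖(q * x i - round (q * x i)) / (q : ℝ)‖ := by
    rw [norm_div, Real.norm_eq_abs, Real.norm_of_nonneg (Nat.cast_nonneg q)]
  rw [this]
  apply le_antisymm
  · unfold dq
    rw [pi_norm_le_iff_of_nonneg (norm_nonneg _)]
    exact hi
  · exact norm_le_pi_norm (fun i => (q * x i - round (q * x i)) / (q : ℝ)) i

lemma le_dq {d : ℕ} (q : ℕ) (x : Fin d → ℝ) (i : Fin d) : |q * x i - round (q * x i)| / q ≤ dq q x := by
  have : |q * x i - round (q * x i)| / q = ‖(q * x i - round (q * x i)) / (q : ℝ)‖ := by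
    rw [norm_div, Real.norm_eq_abs, Real.norm_of_nonneg (Nat.cast_nonneg q)]
  rw [this]
  exact norm_le_pi_norm (fun i => (q * x i - round (q * x i)) / (q : ℝ)) i

lemma dq_nonneg {d : ℕ} (q : ℕ) (x : Fin d → ℝ) : 0 ≤ dq q x := norm_nonneg _

lemma dq_measurable (d q : ℕ) : Measurable (dq q : (Fin d → ℝ) → ℝ) := by
  unfold dq
  refine Measurable.norm ?_
  refine measurable_pi_lambda _ fun i => ?_
  have h1 : Measurable fun x : Fin d → ℝ => (q : ℝ) * x i := by fun_prop
  have h2 : Measurable fun x : Fin d → ℝ => ((round ((q : ℝ) * x i) : ℤ) : ℝ) := by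
    simp_rw [round_eq]
    have h3 : Measurable fun x : Fin d → ℝ => ⌊(q : ℝ) * x i + 1 / 2⌋ := (h1.add_const _).floor
    exact (measurable_from_top (f := fun k : ℤ => (k : ℝ))).comp h3
  exact (h1.sub h2).div_const _

/-- The weight. -/
def Wt (u : ℝ) : ℝ := (1 + u ^ 2) ^ (-(3 / 2 : ℝ) / 2)

/-- the `d`-dimensional comparator -/
def Ed {d : ℕ} (q : ℕ) (a : ℤ) (M : ℕ) (x : Fin d → ℝ) : ℂ := ∏ i, Eq1 q a M (x i)

/-- point in the upper half plane -/
def wz (Lm : ℕ) (b : ℝ) : ℂ := (b : ℂ) + (1 / (Lm : ℝ) ^ 2 : ℝ) * Complex.I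

/-- prefactor -/
def cf (d q Lm : ℕ) (b : ℝ) : ℂ := (1 / (-Complex.I * (2 * q ^ 2 * wz Lm b)) ^ (1 / 2 : ℂ)) ^ d

/-- the `d`-dimensional theta function -/
def Th {d : ℕ} (z : ℂ) (x : Fin d → ℝ) : ℂ := ∏ i, th z (x i)

lemma X_bound (A T r X : ℝ) (hT : 0 ≤ T) (hr : 0 ≤ r) (hA : 0 ≤ A) (h1 : X ≤ A * (T + r)) (h2 : T * X ≤ A) :
    X ≤ 2 * A * (T / (1 + T ^ 2) + r) := by
  have hAr : 0 ≤ A * r := by positivity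
  rcases le_or_gt T 1 with h | h
  · have : T / 2 ≤ T / (1 + T ^ 2) := by
      apply div_le_div_of_nonneg_left hT (by positivity); nlinarith
    nlinarith
  · have h3 : X ≤ A / T := by rw [le_div_iff₀ (by linarith)]; linarith
    have h4 : A / T ≤ 2 * A * (T / (1 + T ^ 2)) := by
      rw [mul_div_assoc', div_le_div_iff₀ (by linarith) (by positivity)]
      nlinarith [mul_nonneg hA (by nlinarith : (0:ℝ) ≤ T ^ 2 - 1)]
    linarith

set_option maxHeartbeats 1000000 in
lemma theta_mult (d : ℕ) (hd : 5 ≤ d) : ∃ C : ℝ, 1 ≤ C ∧ ∀ (q Lm : ℕ), 0 < q → q ≤ Lm → ∀ a : ℤ,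
    IsCoprime a (q : ℤ) → ∀ b : ℝ, |b| ≤ 1 / (q * Lm) →
      ‖cf d q Lm b‖ ≤ (Lm / q : ℝ) ^ d * Wt (b * (Lm : ℝ) ^ 2) ∧ ∀ x : Fin d → ℝ, 
      ‖Th (a / q + wz Lm b) x - cf d q Lm b * Ed q a (Lm / q) x‖ ≤
        C * (Lm / Real.sqrt q) ^ d * Wt (b * (Lm : ℝ) ^ 2) * (Lm * dq q x / (1 + (Lm * dq q x) ^ 2) + q / Lm) ∧
      Lm * dq q x * ‖Th (a / q + wz Lm b) x‖ ≤ C * (Lm / Real.sqrt q) ^ d * Wt (b * (Lm : ℝ) ^ 2) := by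
  obtain ⟨C, hC1, hC⟩ := S_bounds
  refine ⟨2 * (d + 2) * C ^ d, ?_, ?_⟩
  · have : 1 ≤ C ^ d := one_le_pow₀ hC1
    have : (0:ℝ) ≤ d := Nat.cast_nonneg d
    nlinarith
  intro q Lm hq hqL a ha b hb
  have hLm : 0 < Lm := lt_of_lt_of_le hq hqL
  have hqR : (0:ℝ) < q := by exact_mod_cast hq
  have hLR : (0:ℝ) < Lm := by exact_mod_cast hLm
  have hdR : (5:ℝ) ≤ d := by exact_mod_cast hd
  set s : ℂ := -Complex.I * wz Lm b with hs
  have hsre : s.re = 1 / (Lm : ℝ) ^ 2 := by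
    rw [hs, wz, Complex.mul_re, Complex.add_re, Complex.add_im, Complex.im_ofReal_mul, Complex.re_ofReal_mul]
    simp only [Complex.neg_re, Complex.neg_im, Complex.I_re, Complex.I_im, Complex.ofReal_re, Complex.ofReal_im]
    ring
  have hsim : s.im = -b := by
    rw [hs, wz, Complex.mul_im, Complex.add_re, Complex.add_im, Complex.im_ofReal_mul, Complex.re_ofReal_mul]
    simp only [Complex.neg_re, Complex.neg_im, Complex.I_re, Complex.I_im, Complex.ofReal_re, Complex.ofReal_im]
    ring
  have hB := hC q Lm hq hqL a ha s hsre (by rw [hsim, abs_neg]; exact hb)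
  set ρ := ‖s‖ * (Lm : ℝ) ^ 2 with hρ
  set u := b * (Lm : ℝ) ^ 2 with hu
  have hρ2 : ρ ^ 2 = 1 + u ^ 2 := by
    rw [hρ, mul_pow, ← Complex.normSq_eq_norm_sq, Complex.normSq_apply, hsre, hsim, hu]
    field_simp
  set r : ℝ := (1 + u ^ 2) ^ (1 / 4 : ℝ) with hr
  have hu1 : 1 ≤ 1 + u ^ 2 := by nlinarith [sq_nonneg u]
  have hr1 : 1 ≤ r := Real.one_le_rpow hu1 (by norm_num)
  have hr4 : r ^ 4 = 1 + u ^ 2 := by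
    rw [hr, ← Real.rpow_natCast, ← Real.rpow_mul (by linarith)]; norm_num
  have hρ0 : 0 ≤ ρ := by positivity
  have hρr : ρ = r ^ 2 := by
    have : ρ ^ 2 = (r ^ 2) ^ 2 := by rw [hρ2, ← hr4]; ring
    exact (pow_left_inj₀ hρ0 (by positivity) (by norm_num)).mp this
  have hW : Wt u = (r ^ 3)⁻¹ := by
    rw [Wt, ← Real.rpow_natCast r 3, hr, ← Real.rpow_mul (by linarith), ← Real.rpow_neg (by linarith)]
    norm_num
  have hρ1 : 1 ≤ ρ := by rw [hρr]; nlinarith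
  have hwim : 0 < (wz Lm b).im := by
    rw [wz, Complex.add_im, Complex.im_ofReal_mul]; simp; positivity
  set c1 : ℂ := 1 / (-Complex.I * (2 * q ^ 2 * wz Lm b)) ^ (1 / 2 : ℂ) with hc1
  have hth : ∀ y, th (a / q + wz Lm b) y = c1 * Sq q a s y := by
    intro y
    have h := th_id q hq a (wz Lm b) hwim y
    unfold Sq
    rw [← tsum_mul_left]
    exact h.tsum_eq.symm
  have hc1n : ‖c1‖ ≤ Lm / (q * r) := by
    rw [hc1, norm_div, norm_one]
    have e : (-Complex.I * (2 * q ^ 2 * wz Lm b)) = ((2 * q ^ 2 : ℝ) : ℂ) * s := by rw [hs]; push_cast; ring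
    have e2 : ((1 / 2 : ℂ)) = ((1 / 2 : ℝ) : ℂ) := by push_cast; rfl
    have hL2 : (0:ℝ) < 1/(Lm:ℝ)^2 := by positivity
    have hs0 : s ≠ 0 := by
      intro h
      rw [h, Complex.zero_re] at hsre
      linarith
    rw [e, e2, Complex.norm_cpow_real, norm_mul, Complex.norm_real, Real.norm_of_nonneg (by positivity),
      ← Real.sqrt_eq_rpow]
    have h3 : ‖s‖ = r ^ 2 / (Lm : ℝ) ^ 2 := by rw [← hρr, hρ]; field_simp
    rw [h3]
    rw [show (Lm : ℝ) / (q * r) = 1 / (q * r / Lm) by field_simp]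
    apply one_div_le_one_div_of_le (by positivity)
    apply Real.le_sqrt_of_sq_le
    have : (q * r / Lm) ^ 2 * 2 = 2 * (q : ℝ) ^ 2 * (r ^ 2 / (Lm : ℝ) ^ 2) := by field_simp
    rw [← this]; nlinarith [sq_nonneg (q * r / Lm)]
  have hr5 : r ^ 5 ≤ r ^ d := pow_le_pow_right₀ hr1 hd
  have hcfn : ‖cf d q Lm b‖ ≤ (Lm / q : ℝ) ^ d * (r ^ 5)⁻¹ := by
    rw [cf, ← hc1, norm_pow]
    calc ‖c1‖ ^ d ≤ (Lm / (q * r)) ^ d := by gcongr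
      _ = (Lm / q : ℝ) ^ d * (r ^ d)⁻¹ := by rw [← div_div, div_pow _ r, div_eq_mul_inv]
      _ ≤ _ := by gcongr
  refine ⟨?_, ?_⟩
  · refine hcfn.trans ?_
    rw [hW]
    gcongr
    norm_num
  intro x
  have hTh : Th (a / q + wz Lm b) x = cf d q Lm b * ∏ i, Sq q a s (x i) := by
    unfold Th cf
    simp_rw [hth]
    rw [Finset.prod_mul_distrib, Finset.prod_const, Finset.card_univ, Fintype.card_fin]
  set T := Lm * dq q x with hT
  have hT0 : 0 ≤ T := mul_nonneg hLR.le (dq_nonneg q x)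
  have hti : ∀ i, Lm * |q * x i - round (q * x i)| / q ≤ T := by
    intro i
    rw [mul_div_assoc]
    exact mul_le_mul_of_nonneg_left (le_dq q x i) hLR.le
  obtain ⟨i0, hi0⟩ := dq_attain (by omega) q x
  have hi0' : T = Lm * |q * x i0 - round (q * x i0)| / q := by
    rw [mul_div_assoc, ← hi0]
  set K := C * Real.sqrt q with hK
  have hK0 : 0 ≤ K := by positivity
  have hKd : 0 ≤ K ^ d := by positivity
  have hb2 : T * ‖∏ i, Sq q a s (x i)‖ ≤ K ^ d * ρ :=
    prod_bound_t _ K ρ T hK0 hT0 (fun i => (hB (x i)).1) i0 (by rw [hi0']; exact (hB (x i0)).2.1)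
  have hb3 : T * ‖∏ i, Eq1 q a (Lm / q) (x i)‖ ≤ K ^ d * 1 :=
    prod_bound_t _ K 1 T hK0 hT0 (fun i => (hB (x i)).2.2.2.1) i0 (by
      rw [hi0', mul_one]; exact (hB (x i0)).2.2.2.2)
  have hb4 : ‖∏ i, Sq q a s (x i) - ∏ i, Eq1 q a (Lm / q) (x i)‖ ≤ d * (K ^ d * (T + ρ * (q / Lm))) := by
    have := prod_sub_prod_bound Finset.univ (fun i => Sq q a s (x i)) (fun i => Eq1 q a (Lm / q) (x i)) K
      (T + ρ * (q / Lm)) hK0 (fun i _ => (hB (x i)).1) (fun i _ => (hB (x i)).2.2.2.1)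
      (fun i _ => (hB (x i)).2.2.1.trans (by
        have := hti i
        gcongr))
    rwa [Finset.card_univ, Fintype.card_fin] at this
  have hq0 : (0:ℝ) ≤ q / Lm := by positivity
  have hXb := X_bound ((d + 2) * (K ^ d * ρ)) T (q / Lm) ‖∏ i, Sq q a s (x i) - ∏ i, Eq1 q a (Lm / q) (x i)‖
    hT0 hq0 (by positivity) (by
      refine hb4.trans ?_
      have h1 : T + ρ * (q / Lm) ≤ ρ * (T + q / Lm) := by nlinarith
      calc d * (K ^ d * (T + ρ * (q / Lm))) ≤ d * (K ^ d * (ρ * (T + q / Lm))) := by gcongr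
        _ ≤ (d + 2) * (K ^ d * (ρ * (T + q / Lm))) := by
          have : 0 ≤ K ^ d * (ρ * (T + q / Lm)) := by positivity
          nlinarith
        _ = _ := by ring) (by
      calc T * ‖∏ i, Sq q a s (x i) - ∏ i, Eq1 q a (Lm / q) (x i)‖
          ≤ T * (‖∏ i, Sq q a s (x i)‖ + ‖∏ i, Eq1 q a (Lm / q) (x i)‖) := by
            gcongr; exact norm_sub_le _ _
        _ ≤ K ^ d * ρ + K ^ d * 1 := by rw [mul_add]; exact add_le_add hb2 hb3
        _ ≤ (d + 2) * (K ^ d * ρ) := by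
          have : K ^ d * 1 ≤ K ^ d * ρ := by gcongr
          have : 0 ≤ K ^ d * ρ := by positivity
          nlinarith)
  have hconst : (Lm / q : ℝ) ^ d * (r ^ 5)⁻¹ * (K ^ d * ρ) = C ^ d * (Lm / Real.sqrt q) ^ d * Wt u := by
    rw [hW, hρr, hK]
    have h1 : (Lm / q : ℝ) = Lm / Real.sqrt q / Real.sqrt q := by
      rw [div_div, Real.mul_self_sqrt hqR.le]
    rw [h1, div_pow _ (Real.sqrt q), mul_pow]
    have : Real.sqrt q ≠ 0 := (Real.sqrt_pos.mpr hqR).ne'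
    field_simp
  have hW0 : 0 ≤ Wt u := by rw [hW]; positivity
  refine ⟨?_, ?_⟩
  · rw [hTh, Ed, ← mul_sub, norm_mul]
    calc _ ≤ ((Lm / q : ℝ) ^ d * (r ^ 5)⁻¹) * (2 * ((d + 2) * (K ^ d * ρ)) * (T / (1 + T ^ 2) + q / Lm)) := by
          gcongr
      _ = 2 * (d + 2) * ((Lm / q : ℝ) ^ d * (r ^ 5)⁻¹ * (K ^ d * ρ)) * (T / (1 + T ^ 2) + q / Lm) := by ring
      _ = _ := by rw [hconst]; ring
  · rw [hTh, norm_mul]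
    calc T * (‖cf d q Lm b‖ * ‖∏ i, Sq q a s (x i)‖) = ‖cf d q Lm b‖ * (T * ‖∏ i, Sq q a s (x i)‖) := by ring
      _ ≤ ((Lm / q : ℝ) ^ d * (r ^ 5)⁻¹) * (K ^ d * ρ) := by gcongr
      _ = C ^ d * (Lm / Real.sqrt q) ^ d * Wt u := hconst
      _ ≤ 2 * (d + 2) * (C ^ d * (Lm / Real.sqrt q) ^ d * Wt u) := by
        have : 0 ≤ C ^ d * (Lm / Real.sqrt q) ^ d * Wt u := by positivity
        nlinarith
      _ = _ := by ring
end

section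
lemma cs_lint {α : Type*} [MeasurableSpace α] (μ : MeasureTheory.Measure α) (f g : α → ℝ≥0∞)
    (hf : AEMeasurable f μ) (hg : AEMeasurable g μ) :
    (∫⁻ x, f x * g x ∂μ) ^ 2 ≤ (∫⁻ x, f x ^ 2 ∂μ) * ∫⁻ x, g x ^ 2 ∂μ := by
  have h := ENNReal.lintegral_mul_le_Lp_mul_Lq μ Real.HolderConjugate.two_two hf hg
  simp only [Pi.mul_apply] at h
  have e : ∀ X : ℝ≥0∞, (X ^ ((1:ℝ) / 2)) ^ 2 = X := by
    intro X
    rw [← ENNReal.rpow_natCast, ← ENNReal.rpow_mul]; norm_num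
  calc _ ≤ ((∫⁻ x, f x ^ (2:ℝ) ∂μ) ^ ((1:ℝ) / 2) * (∫⁻ x, g x ^ (2:ℝ) ∂μ) ^ ((1:ℝ) / 2)) ^ 2 := by gcongr
    _ = _ := by
      rw [mul_pow, e, e]
      simp_rw [← ENNReal.rpow_natCast]; norm_num

lemma cs_tsum {ι : Type*} (f g : ι → ℝ≥0∞) :
    (∑' i, f i * g i) ^ 2 ≤ (∑' i, f i ^ 2) * ∑' i, g i ^ 2 := by
  let _ : MeasurableSpace ι := ⊤
  have := cs_lint MeasureTheory.Measure.count f g measurable_from_top.aemeasurable measurable_from_top.aemeasurable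
  simpa only [MeasureTheory.lintegral_count] using this

/-- box -/
def bx (d M : ℕ) : Finset (Fin d → ℤ) := Fintype.piFinset fun _ => Finset.Icc (-(M : ℤ)) M

lemma mem_bx {d M : ℕ} (m : Fin d → ℤ) : m ∈ bx d M ↔ ∀ i, |m i| ≤ M := by
  simp [bx, abs_le]

lemma card_bx (d M : ℕ) : (bx d M).card = (2 * M + 1) ^ d := by
  rw [bx, Fintype.card_piFinset_const, Int.card_Icc]
  congr 1
  omega

/-- average over boxes with step `q` -/
def Av {d : ℕ} (q M : ℕ) (g : (Fin d → ℤ) → ℝ≥0∞) (n : Fin d → ℤ) : ℝ≥0∞ :=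
  ((2 * M + 1 : ℕ) ^ d : ℝ≥0∞)⁻¹ * ∑ m ∈ bx d M, g (n - (q : ℤ) • m)

/-- its kernel -/
def Kv {d : ℕ} (q M : ℕ) (n w : Fin d → ℤ) : ℝ≥0∞ := by
  classical
  exact if ∃ m ∈ bx d M, n - w = (q : ℤ) • m then ((2 * M + 1 : ℕ) ^ d : ℝ≥0∞)⁻¹ else 0

lemma Av_eq {d : ℕ} (q M : ℕ) (hq : 0 < q) (g : (Fin d → ℤ) → ℝ≥0∞) (n : Fin d → ℤ) :
    Av q M g n = ∑' w, Kv q M n w * g w := by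
  classical
  have hinj : Set.InjOn (fun m : Fin d → ℤ => n - (q : ℤ) • m) (bx d M) := by
    intro m _ m' _ h
    simp only [sub_right_inj] at h
    exact smul_right_injective _ (by exact_mod_cast hq.ne') h
  have hmem : ∀ w, (∃ m ∈ bx d M, n - w = (q : ℤ) • m) ↔ w ∈ (bx d M).image (fun m => n - (q : ℤ) • m) := by
    intro w
    rw [Finset.mem_image]
    refine exists_congr fun m => and_congr_right fun _ => ?_
    constructor
    · intro h; rw [← h]; abel
    · intro h; rw [← h]; abel
  rw [tsum_eq_sum (s := (bx d M).image (fun m => n - (q : ℤ) • m)), Finset.sum_image hinj, Av, Finset.mul_sum]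
  · refine Finset.sum_congr rfl fun m hm => ?_
    rw [Kv, if_pos ⟨m, hm, by abel⟩]
  · intro w hw
    rw [Kv, if_neg (by rwa [hmem]), zero_mul]

lemma Av_one {d : ℕ} (q M : ℕ) (n : Fin d → ℤ) : Av q M (fun _ => 1) n = 1 := by
  rw [Av, Finset.sum_const, card_bx, nsmul_eq_mul, mul_one]
  push_cast
  refine ENNReal.inv_mul_cancel ?_ ?_
  · positivity
  · exact ENNReal.pow_ne_top (by finiteness)

lemma Kv_sum {d : ℕ} (q M : ℕ) (hq : 0 < q) (n : Fin d → ℤ) : ∑' w, Kv q M n w = 1 := by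
  have := Av_eq q M hq (fun _ => 1) n
  rw [Av_one] at this
  simpa using this.symm

lemma Kv_le {d : ℕ} (q M : ℕ) (n w : Fin d → ℤ) : Kv q M n w ≤ ((2 * M + 1 : ℕ) ^ d : ℝ≥0∞)⁻¹ := by
  unfold Kv; split_ifs <;> simp

lemma Kv_comp {d : ℕ} (q M M' : ℕ) (hq : 0 < q) (h : M' ≤ M) (n n' : Fin d → ℤ) :
    ∑' w, Kv q M n w * Kv q M' n' w ≤ 2 ^ d * Kv q (2 * M) n n' := by
  classical
  by_cases hn : ∃ m ∈ bx d (2 * M), n - n' = (q : ℤ) • m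
  · have e : Kv q (2 * M) n n' = ((2 * (2 * M) + 1 : ℕ) ^ d : ℝ≥0∞)⁻¹ := by rw [Kv, if_pos hn]
    rw [e]
    calc _ ≤ ∑' w, ((2 * M + 1 : ℕ) ^ d : ℝ≥0∞)⁻¹ * Kv q M' n' w := by
          gcongr; exact Kv_le _ _ _ _
      _ = ((2 * M + 1 : ℕ) ^ d : ℝ≥0∞)⁻¹ := by rw [ENNReal.tsum_mul_left, Kv_sum _ _ hq, mul_one]
      _ ≤ _ := by
          rw [ENNReal.inv_pow, ENNReal.inv_pow, ← mul_pow]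
          gcongr
          rw [ENNReal.inv_le_iff_inv_le, ENNReal.mul_inv (by simp) (by simp), inv_inv, mul_comm,
            ← div_eq_mul_inv]
          apply ENNReal.div_le_of_le_mul
          norm_cast; omega
  · have : ∀ w, Kv q M n w * Kv q M' n' w = 0 := by
      intro w
      unfold Kv
      split_ifs with h1 h2
      · exfalso
        obtain ⟨m, hm, h1⟩ := h1
        obtain ⟨m', hm', h2⟩ := h2
        apply hn
        refine ⟨m - m', ?_, ?_⟩
        · rw [mem_bx] at *
          intro i
          have := abs_sub (m i) (m' i)
          have := hm i
          have := hm' i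
          simp only [Pi.sub_apply]; push_cast; omega
        · rw [smul_sub, ← h1, ← h2]; abel
      all_goals simp
    simp [this]

lemma Kv_symm {d : ℕ} (q M : ℕ) (n w : Fin d → ℤ) : Kv q M n w = Kv q M w n := by
  classical
  have : ∀ n w : Fin d → ℤ, (∃ m ∈ bx d M, n - w = (q : ℤ) • m) → (∃ m ∈ bx d M, w - n = (q : ℤ) • m) := by
    rintro n w ⟨m, hm, h⟩
    refine ⟨-m, ?_, ?_⟩
    · rw [mem_bx] at *; simpa using hm
    · rw [smul_neg, ← h]; abel
  unfold Kv
  rw [if_congr ⟨this n w, this w n⟩ rfl rfl]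


/-- restricted linearized maximal operator -/
def uB {d : ℕ} (q : ℕ) (B : Finset (Fin d → ℤ)) (M : (Fin d → ℤ) → ℕ) (g : (Fin d → ℤ) → ℝ≥0∞)
    (n : Fin d → ℤ) : ℝ≥0∞ := by
  classical
  exact if n ∈ B then Av q (M n) g n else 0

lemma uB_TT {d : ℕ} (q : ℕ) (hq : 0 < q) (B : Finset (Fin d → ℤ)) (M : (Fin d → ℤ) → ℕ)
    (g : (Fin d → ℤ) → ℝ≥0∞) (u : (Fin d → ℤ) → ℝ≥0∞) (hu : u = uB q B M g) :
    (∑' n, u n ^ 2) ^ 2 ≤ 2 ^ (d + 1) * (∑' n, u n * uB q B (fun n => 2 * M n) u n) * ∑' w, g w ^ 2 := by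
  classical
  have hun : ∀ n, u n * Av q (M n) g n = u n ^ 2 := by
    intro n
    rw [hu]; unfold uB
    split_ifs <;> simp [sq]
  have hun2 : ∀ n, u n * uB q B (fun n => 2 * M n) u n = u n * Av q (2 * M n) u n := by
    intro n
    by_cases h : n ∈ B
    · simp [uB, h]
    · have : u n = 0 := by rw [hu]; simp [uB, h]
      simp [this]
  have e1 : ∑' n, u n ^ 2 = ∑' w, (∑' n, u n * Kv q (M n) n w) * g w := by
    simp_rw [← hun, Av_eq _ _ hq, ← ENNReal.tsum_mul_left, ← ENNReal.tsum_mul_right]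
    rw [ENNReal.tsum_comm]
    simp_rw [mul_assoc]
  have e2 : ∑' w, (∑' n, u n * Kv q (M n) n w) ^ 2 ≤
      ∑' n, ∑' n', u n * u n' * (2 ^ d * (Kv q (2 * M n) n n' + Kv q (2 * M n') n' n)) := by
    calc _ = ∑' w, ∑' n, ∑' n', u n * u n' * (Kv q (M n) n w * Kv q (M n') n' w) := by
          refine tsum_congr fun w => ?_
          rw [sq, ← ENNReal.tsum_mul_right]
          refine tsum_congr fun n => ?_
          rw [← ENNReal.tsum_mul_left]
          refine tsum_congr fun n' => ?_
          ring
      _ = ∑' n, ∑' n', u n * u n' * ∑' w, (Kv q (M n) n w * Kv q (M n') n' w) := by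
          rw [ENNReal.tsum_comm]
          refine tsum_congr fun n => ?_
          rw [ENNReal.tsum_comm]
          refine tsum_congr fun n' => ?_
          rw [ENNReal.tsum_mul_left]
      _ ≤ _ := by
          refine ENNReal.tsum_le_tsum fun n => ENNReal.tsum_le_tsum fun n' => ?_
          gcongr
          rcases le_total (M n') (M n) with h | h
          · exact (Kv_comp q _ _ hq h n n').trans (by gcongr; exact le_self_add)
          · have := Kv_comp q _ _ hq h n' n
            simp_rw [mul_comm (Kv q (M n') n' _)] at this
            exact this.trans (by gcongr; exact le_add_self)
  have e3 : ∑' n, ∑' n', u n * u n' * (2 ^ d * (Kv q (2 * M n) n n' + Kv q (2 * M n') n' n)) =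
      2 ^ (d + 1) * ∑' n, u n * Av q (2 * M n) u n := by
    have h1 : ∀ n n', u n * u n' * (2 ^ d * (Kv q (2 * M n) n n' + Kv q (2 * M n') n' n)) =
      2 ^ d * (u n * (Kv q (2 * M n) n n' * u n')) + 2 ^ d * (u n' * (Kv q (2 * M n') n' n * u n)) := by
      intro n n'; ring
    simp_rw [h1, ENNReal.tsum_add]
    rw [ENNReal.tsum_comm (f := fun n n' => 2 ^ d * (u n' * (Kv q (2 * M n') n' n * u n)))]
    simp_rw [ENNReal.tsum_mul_left, ← Av_eq _ _ hq]
    ring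
  rw [e1]
  refine (cs_tsum _ _).trans ?_
  simp_rw [hun2]
  rw [← e3]
  gcongr

lemma uB_apriori {d : ℕ} (q : ℕ) (hq : 0 < q) (B : Finset (Fin d → ℤ)) (M : (Fin d → ℤ) → ℕ)
    (g : (Fin d → ℤ) → ℝ≥0∞) : ∑' n, uB q B M g n ^ 2 ≤ B.card * ∑' w, g w ^ 2 := by
  classical
  have h : ∀ n, Av q (M n) g n ^ 2 ≤ ∑' w, g w ^ 2 := by
    intro n
    rw [Av_eq _ _ hq]
    refine (cs_tsum _ _).trans ?_
    conv_rhs => rw [← one_mul (∑' w, g w ^ 2)]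
    gcongr
    rw [← Kv_sum q (M n) hq n]
    refine ENNReal.tsum_le_tsum fun w => ?_
    rw [sq]
    conv_rhs => rw [← one_mul (Kv q (M n) n w)]
    gcongr
    refine (Kv_le _ _ _ _).trans ?_
    rw [ENNReal.inv_le_one]
    exact_mod_cast Nat.one_le_pow _ _ (by omega)
  rw [tsum_eq_sum (s := B)]
  · rw [← nsmul_eq_mul, ← Finset.sum_const]
    refine Finset.sum_le_sum fun n hn => ?_
    simpa [uB, hn] using h n
  · intro n hn; simp [uB, hn]

lemma uB_bound {d : ℕ} (q : ℕ) (hq : 0 < q) (B : Finset (Fin d → ℤ)) (M : (Fin d → ℤ) → ℕ)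
    (g : (Fin d → ℤ) → ℝ≥0∞) : ∑' n, uB q B M g n ^ 2 ≤ (2 ^ (d + 1)) ^ 2 * ∑' w, g w ^ 2 := by
  set A : ℝ≥0∞ := 2 ^ (d + 1) with hA
  set c : ℝ≥0∞ := ⨆ (M : (Fin d → ℤ) → ℕ) (g : (Fin d → ℤ) → ℝ≥0∞),
    (∑' n, uB q B M g n ^ 2) / ∑' w, g w ^ 2 with hc
  have hA0 : A ≠ 0 := by rw [hA]; positivity
  have hAt : A ≠ ⊤ := by rw [hA]; finiteness
  have hcB : c ≤ B.card := by
    refine iSup_le fun M => iSup_le fun g => ENNReal.div_le_of_le_mul (uB_apriori q hq B M g)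
  have hct : c ≠ ⊤ := ne_top_of_le_ne_top (ENNReal.natCast_ne_top _) hcB
  have hval : ∀ M g, ∑' w, g w ^ 2 ≠ ⊤ → ∑' n, uB q B M g n ^ 2 ≤ c * ∑' w, g w ^ 2 := by
    intro M g ht
    by_cases h0 : ∑' w, g w ^ 2 = 0
    · have := uB_apriori q hq B M g
      rw [h0, mul_zero] at this ⊢
      exact this
    · rw [← ENNReal.div_le_iff h0 ht]
      exact le_iSup_of_le M (le_iSup_of_le g le_rfl)
  have hkey : ∀ M g, ∑' w, g w ^ 2 ≠ ⊤ → (∑' n, uB q B M g n ^ 2) ^ 2 ≤ A ^ 2 * c * (∑' w, g w ^ 2) ^ 2 := by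
    intro M g ht
    have hT := uB_TT q hq B M g _ rfl
    have hPt : ∑' n, uB q B M g n ^ 2 ≠ ⊤ :=
      ne_top_of_le_ne_top (ENNReal.mul_ne_top (ENNReal.natCast_ne_top _) ht) (uB_apriori q hq B M g)
    have hX := cs_tsum (uB q B M g) (uB q B (fun n => 2 * M n) (uB q B M g))
    have hv := hval (fun n => 2 * M n) (uB q B M g) hPt
    set P := ∑' n, uB q B M g n ^ 2
    set X := ∑' n, uB q B M g n * uB q B (fun n => 2 * M n) (uB q B M g) n
    set G := ∑' w, g w ^ 2
    by_cases hP0 : P = 0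
    · rw [hP0]; simp
    have h4 : P ^ 2 * P ^ 2 ≤ (A ^ 2 * c * G ^ 2) * P ^ 2 := by
      calc P ^ 2 * P ^ 2 ≤ (A * X * G) * (A * X * G) := by gcongr
        _ = A ^ 2 * G ^ 2 * X ^ 2 := by ring
        _ ≤ A ^ 2 * G ^ 2 * (P * (c * P)) := by gcongr; exact hX.trans (by gcongr)
        _ = _ := by ring
    exact (ENNReal.mul_le_mul_iff_left (by positivity) (by finiteness)).mp h4
  have hc2 : c ^ 2 ≤ A ^ 2 * c := by
    have : c ≤ (A ^ 2 * c) ^ ((1:ℝ) / 2) := by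
      refine iSup_le fun M => iSup_le fun g => ?_
      by_cases ht : ∑' w, g w ^ 2 = ⊤
      · rw [ht]; simp
      apply ENNReal.div_le_of_le_mul
      have h := hkey M g ht
      have h2 := ENNReal.rpow_le_rpow h (by norm_num : (0:ℝ) ≤ 1 / 2)
      rw [ENNReal.mul_rpow_of_nonneg _ _ (by norm_num), ← ENNReal.rpow_natCast, ← ENNReal.rpow_natCast (∑' w, g w ^ 2),
        ← ENNReal.rpow_mul, ← ENNReal.rpow_mul] at h2
      norm_num at h2 ⊢
      exact h2
    calc c ^ 2 ≤ ((A ^ 2 * c) ^ ((1:ℝ) / 2)) ^ 2 := by gcongr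
      _ = _ := by rw [← ENNReal.rpow_natCast, ← ENNReal.rpow_mul]; norm_num
  have hcA : c ≤ A ^ 2 := by
    by_cases hc0 : c = 0
    · rw [hc0]; simp
    rw [sq] at hc2
    exact (ENNReal.mul_le_mul_iff_left hc0 hct).mp hc2
  by_cases ht : ∑' w, g w ^ 2 = ⊤
  · rw [ht, ENNReal.mul_top (by positivity)]; exact le_top
  · exact (hval M g ht).trans (by gcongr)

lemma maximal_box {d : ℕ} (q : ℕ) (hq : 0 < q) (g : (Fin d → ℤ) → ℝ≥0∞) :
    ∑' n, (⨆ M : ℕ, Av q M g n) ^ 2 ≤ (2 ^ (d + 1)) ^ 2 * ∑' w, g w ^ 2 := by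
  rw [ENNReal.tsum_eq_iSup_sum]
  refine iSup_le fun B => ?_
  have h1 : ∀ n, (⨆ M : ℕ, Av q M g n) = ⨆ R : ℕ, (Finset.range (R + 1)).sup fun M => Av q M g n := by
    intro n
    apply le_antisymm
    · refine iSup_le fun M => le_iSup_of_le M ?_
      exact Finset.le_sup (f := fun M => Av q M g n) (by simp)
    · refine iSup_le fun R => Finset.sup_le fun M _ => le_iSup (fun M => Av q M g n) M
  simp_rw [h1, ENNReal.iSup_pow]
  rw [ENNReal.finsetSum_iSup_of_monotone]
  · refine iSup_le fun R => ?_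
    have h2 : ∀ n, ∃ M : ℕ, ((Finset.range (R + 1)).sup fun M => Av q M g n) = Av q M g n := by
      intro n
      obtain ⟨M, _, h⟩ := Finset.exists_mem_eq_sup (Finset.range (R + 1)) (by simp) (fun M => Av q M g n)
      exact ⟨M, h⟩
    choose M hM using h2
    refine le_trans ?_ (uB_bound q hq B M g)
    refine le_trans ?_ (ENNReal.sum_le_tsum B)
    refine Finset.sum_le_sum fun n hn => ?_
    rw [hM]
    simp [uB, hn]
  · intro n R R' h
    dsimp only
    gcongr
end

section
open MeasureTheory
lemma prod_tsum_pi : ∀ (d : ℕ) (g : Fin d → ℤ → ℂ) (_ : ∀ i, Summable fun m => ‖g i m‖),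
    (Summable fun m : Fin d → ℤ => ‖∏ i, g i (m i)‖) ∧ ∑' m : Fin d → ℤ, ∏ i, g i (m i) = ∏ i, ∑' m, g i m := by
  intro d
  induction d with
  | zero =>
    intro g _
    refine ⟨Summable.of_finite, ?_⟩
    simp
  | succ d ih =>
    intro g hg
    obtain ⟨h1, h2⟩ := ih (fun i => g i.succ) (fun i => hg _)
    have e : ∀ p : ℤ × (Fin d → ℤ), ∏ i, g i (Fin.consEquiv (fun _ => ℤ) p i) = g 0 p.1 * ∏ i, g (Fin.succ i) (p.2 i) := by
      intro p
      rw [Fin.prod_univ_succ]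
      simp [Fin.consEquiv]
    constructor
    · rw [← (Fin.consEquiv (fun _ : Fin (d + 1) => ℤ)).summable_iff]
      have := Summable.mul_norm (hg 0) h1
      refine this.congr fun p => ?_
      simp only [Function.comp_apply]
      rw [e]
    · rw [← (Fin.consEquiv (fun _ : Fin (d + 1) => ℤ)).tsum_eq]
      simp_rw [e]
      rw [← tsum_mul_tsum_of_summable_norm (hg 0) h1, h2, Fin.prod_univ_succ]

/-- integer squared norm -/
def isq {d : ℕ} (m : Fin d → ℤ) : ℤ := ∑ i, m i ^ 2

/-- the Gaussian kernel -/
def Kz {d : ℕ} (z : ℂ) (m : Fin d → ℤ) : ℂ := Complex.exp (2 * π * Complex.I * ((isq m : ℂ) * z))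

lemma isq_nonneg {d : ℕ} (m : Fin d → ℤ) : 0 ≤ isq m := Finset.sum_nonneg fun _ _ => sq_nonneg _

lemma Kz_norm {d : ℕ} (z : ℂ) (m : Fin d → ℤ) : ‖Kz z m‖ = Real.exp (-(2 * π * (isq m * z.im))) := by
  rw [Kz, Complex.norm_exp]
  congr 1
  simp [Complex.mul_re, Complex.mul_im]

lemma Kz_ex {d : ℕ} (z : ℂ) (x : Fin d → ℝ) (m : Fin d → ℤ) : Kz z m * ex (-m) x =
    ∏ i, Complex.exp (2 * π * Complex.I * ((m i : ℂ) ^ 2 * z - m i * x i)) := by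
  rw [← Complex.exp_sum, Kz, ex, ← Complex.exp_add]
  congr 1
  rw [isq]
  push_cast
  simp only [Pi.neg_apply, Int.cast_neg, Finset.sum_mul, Finset.mul_sum, ← Finset.sum_add_distrib]
  refine Finset.sum_congr rfl fun i _ => ?_
  ring

lemma Kz_summable {d : ℕ} {z : ℂ} (hz : 0 < z.im) : Summable fun m : Fin d → ℤ => ‖Kz z m‖ := by
  have := (prod_tsum_pi d (fun _ m => Complex.exp (2 * π * Complex.I * ((m : ℂ) ^ 2 * z - m * (0 : ℝ))))
    (fun i => (th_hasSum hz 0).summable.norm)).1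
  refine this.congr fun m => ?_
  have h := Kz_ex z (fun _ => 0) m
  rw [← h, norm_mul, ex_norm, mul_one]

lemma hat_Kz {d : ℕ} {z : ℂ} (hz : 0 < z.im) (x : Fin d → ℝ) : hat (Kz z) x = Th z x := by
  unfold hat Th
  simp_rw [Kz_ex]
  rw [(prod_tsum_pi d (fun i m => Complex.exp (2 * π * Complex.I * ((m : ℂ) ^ 2 * z - m * x i)))
    (fun i => (th_hasSum hz (x i)).summable.norm)).2]
  rfl

/-- the generating operator -/
def Vf {d : ℕ} (f : (Fin d → ℤ) → ℂ) (z : ℂ) (n : Fin d → ℤ) : ℂ := ∑' m, Kz z m * f (n - m)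

lemma Vf_eq {d : ℕ} {f : (Fin d → ℤ) → ℂ} (hf : Summable fun n => ‖f n‖) {z : ℂ} (hz : 0 < z.im) (n : Fin d → ℤ) :
    Vf f z n = ∫ x, Th z x * hat f x * ex n x ∂muX d := by
  rw [Vf, conv_hat (Kz_summable hz) hf]
  simp_rw [hat_Kz hz]

lemma Th_cont {d : ℕ} {z : ℂ} (hz : 0 < z.im) : Continuous (Th z : (Fin d → ℝ) → ℂ) := by
  have := hat_cont (Kz_summable (d := d) hz)
  rwa [show hat (Kz z) = Th z from funext fun x => hat_Kz hz x] at this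

lemma Th_bdd {d : ℕ} {z : ℂ} (hz : 0 < z.im) : ∃ C : ℝ, ∀ x : Fin d → ℝ, ‖Th z x‖ ≤ C := by
  refine ⟨∑' m : Fin d → ℤ, ‖Kz z m‖, fun x => ?_⟩
  rw [← hat_Kz hz]
  exact hat_bound (Kz_summable hz) x

lemma wz_im (Lm : ℕ) (b : ℝ) : (wz Lm b).im = 1 / (Lm : ℝ) ^ 2 := by
  rw [wz, Complex.add_im, Complex.im_ofReal_mul]; simp

lemma wz_im_pos {Lm : ℕ} (h : 0 < Lm) (b : ℝ) : 0 < (wz Lm b).im := by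
  rw [wz_im]; positivity

lemma f_shift_summable {d : ℕ} {f : (Fin d → ℤ) → ℂ} (hf : Summable fun n => ‖f n‖) (n : Fin d → ℤ) :
    Summable fun m => ‖f (n - m)‖ := by
  have := (Equiv.subLeft n).summable_iff.mpr hf
  exact this

lemma Kz_wz_le {d : ℕ} (Lm : ℕ) (t : ℝ) (m : Fin d → ℤ) : ‖Kz (wz Lm t) m‖ ≤ 1 := by
  rw [Kz_norm, Real.exp_le_one_iff, wz_im]
  have : (0:ℝ) ≤ isq m := by exact_mod_cast isq_nonneg m
  have : 0 ≤ 2 * π * ((isq m : ℝ) * (1 / (Lm : ℝ) ^ 2)) := by positivity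
  linarith

lemma Kz_cont {d : ℕ} (Lm : ℕ) (m : Fin d → ℤ) : Continuous fun t => Kz (wz Lm t) m := by
  unfold Kz wz
  fun_prop

lemma Vf_cont {d : ℕ} {f : (Fin d → ℤ) → ℂ} (hf : Summable fun n => ‖f n‖) (Lm : ℕ) (n : Fin d → ℤ) :
    Continuous fun t => Vf f (wz Lm t) n := by
  unfold Vf
  refine continuous_tsum (fun m => (Kz_cont Lm m).mul continuous_const) (f_shift_summable hf n) ?_
  intro m t
  rw [norm_mul]
  calc _ ≤ 1 * ‖f (n - m)‖ := by gcongr; exact Kz_wz_le _ _ _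
    _ = _ := one_mul _

lemma int_e (k : ℤ) : ∫ t in Set.Ioc (0:ℝ) 1, Complex.exp (2 * π * Complex.I * (k * t)) = if k = 0 then 1 else 0 := by
  split_ifs with h
  · simp [h]
  · rw [← intervalIntegral.integral_of_le zero_le_one]
    have hc : (2 * π * Complex.I * k : ℂ) ≠ 0 := by
      simp [Real.pi_ne_zero, h]
    have := integral_exp_mul_complex (a := 0) (b := 1) hc
    simp_rw [← mul_assoc]
    rw [this]
    have h1 : Complex.exp (2 * π * Complex.I * k * (1:ℝ)) = 1 := by
      rw [Complex.exp_eq_one_iff]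
      exact ⟨k, by push_cast; ring⟩
    rw [h1]; simp

lemma extract {d : ℕ} {f : (Fin d → ℤ) → ℂ} (hf : Summable fun n => ‖f n‖) (Lm N : ℕ) (n : Fin d → ℤ) :
    ∫ t in Set.Ioc (0:ℝ) 1, Complex.exp (-(2 * π * Complex.I * (N * t))) * Vf f (wz Lm t) n =
      Real.exp (-(2 * π * (N * (1 / (Lm : ℝ) ^ 2)))) * ∑' m : {m : Fin d → ℤ | isq m = N}, f (n - m) := by
  have hF : ∀ m : Fin d → ℤ, ∀ t : ℝ, Complex.exp (-(2 * π * Complex.I * (N * t))) * (Kz (wz Lm t) m * f (n - m))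
      = (Real.exp (-(2 * π * (isq m * (1 / (Lm : ℝ) ^ 2)))) * f (n - m)) *
        Complex.exp (2 * π * Complex.I * ((isq m - N : ℤ) * t)) := by
    intro m t
    unfold Kz wz
    rw [← mul_assoc, ← Complex.exp_add, Complex.ofReal_exp, mul_right_comm (Complex.exp _) (f (n - m)), ← Complex.exp_add]
    congr 2
    push_cast
    linear_combination (2 * π * isq m * (1 / (Lm : ℂ) ^ 2)) * Complex.I_sq
  have hsum : HasSum (fun m => ∫ t in Set.Ioc (0:ℝ) 1, Complex.exp (-(2 * π * Complex.I * (N * t))) * (Kz (wz Lm t) m * f (n - m)))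
      (∫ t in Set.Ioc (0:ℝ) 1, ∑' m, Complex.exp (-(2 * π * Complex.I * (N * t))) * (Kz (wz Lm t) m * f (n - m))) := by
    have hb : ∀ m : Fin d → ℤ, ∀ t : ℝ, ‖Complex.exp (-(2 * π * Complex.I * (N * t))) * (Kz (wz Lm t) m * f (n - m))‖
        ≤ ‖f (n - m)‖ := by
      intro m t
      rw [norm_mul, norm_mul]
      have : ‖Complex.exp (-(2 * π * Complex.I * (N * t)))‖ = 1 := by
        rw [Complex.norm_exp]; simp [Complex.mul_re, Complex.mul_im]
      rw [this, one_mul]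
      calc _ ≤ 1 * ‖f (n - m)‖ := by gcongr; exact Kz_wz_le _ _ _
        _ = _ := one_mul _
    have hc : ∀ m : Fin d → ℤ, Continuous fun t : ℝ => Complex.exp (-(2 * π * Complex.I * (N * t))) * (Kz (wz Lm t) m * f (n - m)) := by
      intro m
      have := Kz_cont Lm m
      fun_prop
    refine hasSum_integral_of_summable_integral_norm ?_ ?_
    · intro m
      refine Measure.integrableOn_of_bounded (M := ‖f (n - m)‖) (by simp) (hc m).aestronglyMeasurable ?_
      exact Filter.Eventually.of_forall fun t => hb m t
    · refine Summable.of_nonneg_of_le (fun m => integral_nonneg fun _ => norm_nonneg _) (fun m => ?_) (f_shift_summable hf n)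
      have := norm_setIntegral_le_of_norm_le_const (μ := volume) (s := Set.Ioc (0:ℝ) 1) (f := fun t : ℝ => ‖Complex.exp (-(2 * π * Complex.I * (N * t))) * (Kz (wz Lm t) m * f (n - m))‖) (C := ‖f (n - m)‖) (by simp) (fun t _ => by
        rw [norm_norm]; exact hb m t)
      rw [Real.norm_of_nonneg (integral_nonneg fun _ => norm_nonneg _)] at this
      simpa using this
  unfold Vf
  simp_rw [← tsum_mul_left]
  rw [← hsum.tsum_eq]
  have hS := tsum_subtype {m : Fin d → ℤ | isq m = N} (fun m => (Real.exp (-(2 * π * (N * (1 / (Lm : ℝ) ^ 2)))) : ℂ) * f (n - m))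
  rw [hS]
  refine tsum_congr fun m => ?_
  simp_rw [hF]
  rw [integral_const_mul, int_e]
  by_cases h : isq m = N
  · rw [if_pos (by omega), Set.indicator_of_mem (by exact h), h]; simp
  · rw [if_neg (by omega), Set.indicator_of_notMem (by exact h)]; simp
end

section
open MeasureTheory
lemma sph_isq {d : ℕ} (lam : ℝ) (N : ℕ) (h : (N : ℝ) = lam ^ 2) : sph d lam = {m : Fin d → ℤ | isq m = N} := by
  ext m
  show nsq m = lam ^ 2 ↔ isq m = N
  rw [← h, nsq, isq]
  norm_cast

lemma Avg_bound (d : ℕ) (hd : 5 ≤ d) : ∃ C : ℝ, 0 < C ∧ ∀ (f : (Fin d → ℤ) → ℝ), (Summable fun n => ‖(f n : ℂ)‖) →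
    ∀ (Lm N : ℕ) (lam : ℝ) (n : Fin d → ℤ), 0 < Lm → (Lm : ℝ) ≤ lam → lam < 2 * Lm → (N : ℝ) = lam ^ 2 →
    (‖Avg lam f n‖₊ : ℝ≥0∞) ≤ ENNReal.ofReal (C / (Lm : ℝ) ^ (d - 2)) *
      ∫⁻ t in Set.Ioc (0:ℝ) 1, ‖Vf (fun n => (f n : ℂ)) (wz Lm t) n‖ₑ := by
  obtain ⟨c, hc, hN⟩ := Nlam_lower d hd
  refine ⟨Real.exp (8 * π) / c, by positivity, ?_⟩
  intro f hf Lm N lam n hLm h1 h2 hNl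
  have hLR : (1:ℝ) ≤ Lm := by exact_mod_cast hLm
  have hN1 : 1 ≤ N := by
    have : (1:ℝ) ≤ N := by rw [hNl]; nlinarith
    exact_mod_cast this
  have hlow := hN N lam hN1 (by linarith) hNl
  have hE := extract hf Lm N n
  set I := ∫ t in Set.Ioc (0:ℝ) 1, Complex.exp (-(2 * π * Complex.I * (N * t))) * Vf (fun n => (f n : ℂ)) (wz Lm t) n with hI
  set E := Real.exp (-(2 * π * (N * (1 / (Lm : ℝ) ^ 2)))) with hEd
  have hE0 : 0 < E := Real.exp_pos _
  have hAvg : ((Avg lam f n : ℝ) : ℂ) = (((Nlam d lam : ℝ)⁻¹ * E⁻¹ : ℝ) : ℂ) * I := by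
    rw [hE, Avg, sph_isq lam N hNl]
    push_cast
    have : (E : ℂ) ≠ 0 := by exact_mod_cast hE0.ne'
    field_simp
  have hInorm : ‖I‖ₑ ≤ ∫⁻ t in Set.Ioc (0:ℝ) 1, ‖Vf (fun n => (f n : ℂ)) (wz Lm t) n‖ₑ := by
    refine (enorm_integral_le_lintegral_enorm _).trans (le_of_eq ?_)
    refine lintegral_congr fun t => ?_
    rw [enorm_mul]
    have : ‖Complex.exp (-(2 * π * Complex.I * (N * t)))‖ₑ = 1 := by
      rw [← ofReal_norm, Complex.norm_exp]; simp [Complex.mul_re, Complex.mul_im]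
    rw [this, one_mul]
  have e1 : (‖Avg lam f n‖₊ : ℝ≥0∞) = ‖((Avg lam f n : ℝ) : ℂ)‖ₑ := by
    rw [← ofReal_norm, Complex.norm_real, ofReal_norm]; rfl
  rw [e1, hAvg, enorm_mul]
  gcongr
  rw [← ofReal_norm, Complex.norm_real]
  apply ENNReal.ofReal_le_ofReal
  rw [Real.norm_of_nonneg (by positivity)]
  have hEinv : E⁻¹ ≤ Real.exp (8 * π) := by
    rw [hEd, ← Real.exp_neg, neg_neg]
    apply Real.exp_le_exp.mpr
    have : (N : ℝ) * (1 / (Lm : ℝ) ^ 2) ≤ 4 := by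
      rw [mul_one_div, div_le_iff₀ (by positivity), hNl]
      nlinarith
    nlinarith [Real.pi_pos]
  have hNinv : (Nlam d lam : ℝ)⁻¹ ≤ (c * (Lm : ℝ) ^ (d - 2))⁻¹ := by
    apply inv_anti₀ (by positivity)
    refine le_trans ?_ hlow
    gcongr
  calc _ ≤ (c * (Lm : ℝ) ^ (d - 2))⁻¹ * Real.exp (8 * π) := by gcongr
    _ = _ := by field_simp

lemma lint_biUnion_le {ι : Type*} (S : Finset ι) (A : ι → Set ℝ) (F : ℝ → ℝ≥0∞) :
    ∫⁻ t in ⋃ p ∈ S, A p, F t ≤ ∑ p ∈ S, ∫⁻ t in A p, F t := by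
  classical
  induction S using Finset.induction_on with
  | empty => simp
  | insert a s ha ih =>
    rw [Finset.set_biUnion_insert, Finset.sum_insert ha]
    exact (lintegral_union_le _ _ _).trans (by gcongr)

lemma dirichlet_cover (Lm : ℕ) (hLm : 0 < Lm) (F : ℝ → ℝ≥0∞) :
    ∫⁻ t in Set.Ioc (0:ℝ) 1, F t ≤ ∑ q ∈ Finset.Icc 1 Lm, ∑ a ∈ (Finset.range (q + 1)).filter (fun a => Nat.Coprime a q),
      ∫⁻ b in Set.Icc (-(1 / (q * Lm : ℝ))) (1 / (q * Lm : ℝ)), F (a / q + b) := by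
  classical
  set S := (Finset.Icc 1 Lm).sigma (fun q => (Finset.range (q + 1)).filter (fun a => Nat.Coprime a q)) with hS
  have hcov : Set.Ioc (0:ℝ) 1 ⊆ ⋃ p ∈ S, Set.Icc ((p.2 : ℝ) / p.1 - (1 / (p.1 * Lm : ℝ))) (p.2 / p.1 + 1 / (p.1 * Lm : ℝ)) := by
    intro t ht
    obtain ⟨r, hr, hrd⟩ := Real.exists_rat_abs_sub_le_and_den_le t hLm
    have hqpos : 0 < r.den := r.den_pos
    have hqR : (0:ℝ) < r.den := by exact_mod_cast hqpos
    have hLR : (0:ℝ) < Lm := by exact_mod_cast hLm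
    have hrr : (r : ℝ) = r.num / r.den := by exact_mod_cast (Rat.num_div_den r).symm
    have hb : |t * r.den - r.num| ≤ 1 / (Lm + 1) := by
      have : t * r.den - r.num = (t - r) * r.den := by rw [hrr]; field_simp
      rw [this, abs_mul, abs_of_pos hqR]
      calc _ ≤ 1 / ((Lm + 1 : ℝ) * r.den) * r.den := by gcongr
        _ = _ := by field_simp
    have hlt : (1:ℝ) / (Lm + 1) < 1 := by rw [div_lt_one (by positivity)]; linarith
    have hb' := abs_le.mp hb
    have hn0 : 0 ≤ r.num := by
      have : (-1:ℝ) < r.num := by nlinarith [ht.1, mul_pos ht.1 hqR]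
      have : (-1:ℤ) < r.num := by exact_mod_cast this
      omega
    have hn1 : r.num < r.den + 1 := by
      have : (r.num : ℝ) < r.den + 1 := by nlinarith [ht.2]
      exact_mod_cast this
    have hnn : ((r.num.natAbs : ℕ) : ℝ) = r.num := by
      rw [Nat.cast_natAbs, abs_of_nonneg hn0]
    simp only [Set.mem_iUnion]
    refine ⟨⟨r.den, r.num.natAbs⟩, ?_, ?_⟩
    · rw [hS, Finset.mem_sigma, Finset.mem_Icc, Finset.mem_filter, Finset.mem_range]
      refine ⟨⟨hqpos, hrd⟩, ?_, r.reduced⟩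
      show r.num.natAbs < r.den + 1
      omega
    · rw [← Set.mem_Icc_iff_abs_le]
      dsimp only
      rw [hnn, ← hrr]
      refine (abs_sub_comm (r : ℝ) t ▸ hr).trans ?_
      apply one_div_le_one_div_of_le (by positivity)
      nlinarith
  calc _ ≤ ∫⁻ t in ⋃ p ∈ S, Set.Icc ((p.2 : ℝ) / p.1 - (1 / (p.1 * Lm : ℝ))) (p.2 / p.1 + 1 / (p.1 * Lm : ℝ)), F t :=
        lintegral_mono_set hcov
    _ ≤ ∑ p ∈ S, ∫⁻ t in Set.Icc ((p.2 : ℝ) / p.1 - (1 / (p.1 * Lm : ℝ))) (p.2 / p.1 + 1 / (p.1 * Lm : ℝ)), F t := by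
        exact lint_biUnion_le _ _ _
    _ = ∑ p ∈ S, ∫⁻ b in Set.Icc (-(1 / (p.1 * Lm : ℝ))) (1 / (p.1 * Lm : ℝ)), F (p.2 / p.1 + b) := by
        refine Finset.sum_congr rfl fun p _ => ?_
        rw [← lintegral_indicator measurableSet_Icc, ← lintegral_indicator measurableSet_Icc,
          ← lintegral_add_left_eq_self _ ((p.2 : ℝ) / p.1)]
        refine lintegral_congr fun b => ?_
        simp only [Set.indicator_apply, Set.mem_Icc]
        refine if_congr ?_ rfl rfl
        constructor <;> rintro ⟨h1, h2⟩ <;> constructor <;> linarith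
    _ = _ := by rw [hS, Finset.sum_sigma]
end

section
open MeasureTheory
lemma geo_hs : HasSum (fun j : ℕ => ((1:ℝ) / 4) ^ j) (4 / 3) := by
    have := hasSum_geometric_of_lt_one (r := (1:ℝ) / 4) (by norm_num) (by norm_num)
    rwa [show (1 - (1:ℝ) / 4)⁻¹ = 4 / 3 by norm_num] at this

lemma geo_e : ENNReal.ofReal (4 / 3) = ∑' j : ℕ, ENNReal.ofReal ((1 / 4 : ℝ) ^ j) := by
    rw [← geo_hs.tsum_eq, ENNReal.ofReal_tsum_of_nonneg (fun j => by positivity) geo_hs.summable]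

lemma geo_a (c : ℝ) (hc : 0 < c) (j j0 : ℕ) (h0 : c ≤ 2 ^ j0) : (c / 2 ^ (j + j0)) ^ 2 ≤ (1 / 4 : ℝ) ^ j := by
    have h1 : c / 2 ^ (j + j0) ≤ (1 / 2) ^ j := by
      rw [div_le_iff₀ (by positivity), pow_add, ← mul_assoc, ← mul_pow]
      norm_num
      exact h0
    calc (c / 2 ^ (j + j0)) ^ 2 ≤ ((1 / 2 : ℝ) ^ j) ^ 2 := by gcongr
      _ = (1 / 4 : ℝ) ^ j := by rw [← pow_mul, mul_comm, pow_mul]; norm_num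

lemma geo_b (c : ℝ) : ∃ j0 : ℕ, c ≤ 2 ^ j0 ∧ ∀ j < j0, ¬ c ≤ 2 ^ j := by
  classical
  have hex : ∃ j : ℕ, c ≤ 2 ^ j := by
    obtain ⟨j, hj⟩ := pow_unbounded_of_one_lt c (by norm_num : (1:ℝ) < 2)
    exact ⟨j, hj.le⟩
  exact ⟨Nat.find hex, Nat.find_spec hex, fun j hj => Nat.find_min hex hj⟩

lemma geo_tail (c : ℝ) (hc : 0 < c) :
    ∑' j : ℕ, (if c ≤ 2 ^ j then ENNReal.ofReal ((c / 2 ^ j) ^ 2) else 0) ≤ ENNReal.ofReal (4 / 3) := by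
  obtain ⟨j0, h0, hlt⟩ := geo_b c
  have hz : ∀ j ∈ Finset.range j0, (if c ≤ 2 ^ j then ENNReal.ofReal ((c / 2 ^ j) ^ 2) else 0) = 0 := by
    intro j hj
    rw [if_neg (hlt j (Finset.mem_range.mp hj))]
  rw [← Summable.sum_add_tsum_nat_add' (k := j0) ENNReal.summable, Finset.sum_eq_zero hz, zero_add, geo_e]
  refine ENNReal.tsum_le_tsum fun j => ?_
  split_ifs with h
  · exact ENNReal.ofReal_le_ofReal (geo_a c hc j j0 h0)
  · simp

lemma tele_sum (δ : ℝ) (hδ : 0 ≤ δ) :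
    ∑' j : ℕ, ENNReal.ofReal ((2 ^ j * δ / (1 + (2 ^ j * δ) ^ 2)) ^ 2) ≤ ENNReal.ofReal (4 / 3) := by
  apply ENNReal.tsum_le_of_sum_range_le
  intro n
  rw [← ENNReal.ofReal_sum_of_nonneg (fun j _ => by positivity)]
  apply ENNReal.ofReal_le_ofReal
  have key : ∀ n : ℕ, ∑ j ∈ Finset.range n, (2 ^ j * δ / (1 + (2 ^ j * δ) ^ 2)) ^ 2 ≤
      4 / 3 * ((2 ^ n * δ) ^ 2 / (1 + (2 ^ n * δ) ^ 2)) := by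
    intro n
    induction n with
    | zero => simp; positivity
    | succ n ih =>
      rw [Finset.sum_range_succ]
      refine (add_le_add_left ih _).trans ?_
      rw [pow_succ (2:ℝ) n]
      generalize hy : (2:ℝ) ^ n * δ = y
      have hy0 : 0 ≤ y := by rw [← hy]; positivity
      rw [show (2:ℝ) ^ n * 2 * δ = 2 * y by rw [← hy]; ring]
      have : 4 / 3 * ((2 * y) ^ 2 / (1 + (2 * y) ^ 2)) - 4 / 3 * (y ^ 2 / (1 + y ^ 2)) = 4 * y ^ 2 / ((1 + 4 * y ^ 2) * (1 + y ^ 2)) := by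
        field_simp; ring
      have h2 : (y / (1 + y ^ 2)) ^ 2 ≤ 4 * y ^ 2 / ((1 + 4 * y ^ 2) * (1 + y ^ 2)) := by
        rw [div_pow, div_le_div_iff₀ (by positivity) (by positivity)]
        nlinarith [sq_nonneg y, mul_nonneg (sq_nonneg y) (sq_nonneg y), mul_nonneg (mul_nonneg (sq_nonneg y) (sq_nonneg y)) (sq_nonneg y)]
      linarith
  refine (key n).trans ?_
  have : (2 ^ n * δ) ^ 2 / (1 + (2 ^ n * δ) ^ 2) ≤ 1 := by
    rw [div_le_one (by positivity)]; linarith [sq_nonneg (2 ^ n * δ)]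
  linarith

lemma Wt_pos (u : ℝ) : 0 < Wt u := by unfold Wt; positivity

lemma Wt_meas : Measurable Wt := by unfold Wt; fun_prop

/-- total mass of the weight -/
def cW : ℝ := ∫ u, Wt u

lemma Wt_int : Integrable Wt := by
  have := integrable_rpow_neg_one_add_norm_sq (E := ℝ) (μ := volume) (r := 3 / 2) (by norm_num)
  refine this.congr (Filter.Eventually.of_forall fun u => ?_)
  simp [Wt]

lemma cW_nonneg : 0 ≤ cW := integral_nonneg fun u => (Wt_pos u).le

lemma Wt_lint (s : ℝ) (hs : 0 < s) (I : Set ℝ) : ∫⁻ b in I, ENNReal.ofReal (Wt (b * s)) ≤ ENNReal.ofReal (cW / s) := by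
  refine (setLIntegral_le_lintegral _ _).trans ?_
  rw [← ofReal_integral_eq_lintegral_ofReal]
  · apply ENNReal.ofReal_le_ofReal
    rw [Measure.integral_comp_mul_right Wt s, abs_of_pos (by positivity), smul_eq_mul, cW]
    apply le_of_eq; field_simp
  · exact Wt_int.comp_mul_right' hs.ne'
  · exact Filter.Eventually.of_forall fun b => (Wt_pos _).le
end

section
open MeasureTheory
lemma cs_weight {d : ℕ} {f : (Fin d → ℤ) → ℂ} (hf : Summable fun n => ‖f n‖) (I : Set ℝ) (hI : MeasurableSet I)
    (w : ℝ → ℝ) (hw : ∀ b, 0 < w b) (hwm : Measurable w) (D : ℝ → (Fin d → ℤ) → ℂ)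
    (hD : ∀ n, Measurable fun b => D b n) (m : ℝ → (Fin d → ℝ) → ℂ) (hm : ∀ b ∈ I, Measurable (m b))
    (hmb : ∀ b ∈ I, ∃ C : ℝ, ∀ x, ‖m b x‖ ≤ C)
    (hDm : ∀ b ∈ I, ∀ n, D b n = ∫ x, m b x * hat f x * ex n x ∂muX d)
    (A : ℝ) (B : (Fin d → ℝ) → ℝ) (hA : 0 ≤ A)
    (hB : ∀ b ∈ I, ∀ x, hat f x = 0 ∨ ‖m b x‖ ≤ A * w b * B x) :
    ∑' n, (∫⁻ b in I, ‖D b n‖ₑ) ^ 2 ≤ ENNReal.ofReal A ^ 2 * (∫⁻ b in I, ENNReal.ofReal (w b)) ^ 2 *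
      ∫⁻ x, ENNReal.ofReal (B x) ^ 2 * ‖hat f x‖ₑ ^ 2 ∂muX d := by
  set G := ∫⁻ x, ENNReal.ofReal (B x) ^ 2 * ‖hat f x‖ₑ ^ 2 ∂muX d with hG
  set W := ∫⁻ b in I, ENNReal.ofReal (w b) with hW
  have h1 : ∀ n, (∫⁻ b in I, ‖D b n‖ₑ) ^ 2 ≤ W * ∫⁻ b in I, ENNReal.ofReal (w b)⁻¹ * ‖D b n‖ₑ ^ 2 := by
    intro n
    have := cs_lint (volume.restrict I) (fun b => ENNReal.ofReal (Real.sqrt (w b)))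
      (fun b => ENNReal.ofReal (Real.sqrt (w b))⁻¹ * ‖D b n‖ₑ) (by fun_prop)
      (by have := hD n; fun_prop)
    have e1 : ∀ b, ENNReal.ofReal (Real.sqrt (w b)) * (ENNReal.ofReal (Real.sqrt (w b))⁻¹ * ‖D b n‖ₑ) = ‖D b n‖ₑ := by
      intro b
      rw [← mul_assoc, ← ENNReal.ofReal_mul (Real.sqrt_nonneg _), mul_inv_cancel₀ (Real.sqrt_pos.mpr (hw b)).ne']
      simp
    have e2 : ∀ b, ENNReal.ofReal (Real.sqrt (w b)) ^ 2 = ENNReal.ofReal (w b) := by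
      intro b
      rw [← ENNReal.ofReal_pow (Real.sqrt_nonneg _), Real.sq_sqrt (hw b).le]
    have e3 : ∀ b, (ENNReal.ofReal (Real.sqrt (w b))⁻¹ * ‖D b n‖ₑ) ^ 2 = ENNReal.ofReal (w b)⁻¹ * ‖D b n‖ₑ ^ 2 := by
      intro b
      rw [mul_pow, ← ENNReal.ofReal_pow (inv_nonneg.mpr (Real.sqrt_nonneg _)), inv_pow, Real.sq_sqrt (hw b).le]
    simp_rw [e1, e2, e3] at this
    exact this
  have h2 : ∀ b ∈ I, ∑' n, ‖D b n‖ₑ ^ 2 ≤ ENNReal.ofReal (A * w b) ^ 2 * G := by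
    intro b hb
    obtain ⟨C, hC⟩ := hmb b hb
    simp_rw [hDm b hb]
    refine (mult_bound hf (m b) (hm b hb) C hC).trans ?_
    rw [hG, ← lintegral_const_mul']
    · refine lintegral_mono fun x => ?_
      dsimp only
      rcases hB b hb x with h | h
      · rw [h]; simp
      · rw [← mul_assoc, ← mul_pow (ENNReal.ofReal (A * w b)), ← ENNReal.ofReal_mul (mul_nonneg hA (hw b).le)]
        gcongr
        rw [← ofReal_norm]
        exact ENNReal.ofReal_le_ofReal h
    · finiteness
  calc _ ≤ ∑' n, W * ∫⁻ b in I, ENNReal.ofReal (w b)⁻¹ * ‖D b n‖ₑ ^ 2 := ENNReal.tsum_le_tsum h1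
    _ = W * ∫⁻ b in I, ∑' n, ENNReal.ofReal (w b)⁻¹ * ‖D b n‖ₑ ^ 2 := by
        rw [ENNReal.tsum_mul_left, lintegral_tsum]
        intro n
        have := hD n
        fun_prop
    _ ≤ W * ∫⁻ b in I, ENNReal.ofReal A ^ 2 * G * ENNReal.ofReal (w b) := by
        gcongr W * ?_
        refine setLIntegral_mono' hI fun b hb => ?_
        rw [ENNReal.tsum_mul_left]
        calc _ ≤ ENNReal.ofReal (w b)⁻¹ * (ENNReal.ofReal (A * w b) ^ 2 * G) := by gcongr; exact h2 b hb
          _ = (ENNReal.ofReal (w b)⁻¹ * ENNReal.ofReal (A * w b) ^ 2) * G := by ring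
          _ = (ENNReal.ofReal A ^ 2 * ENNReal.ofReal (w b)) * G := by
            congr 1
            rw [← ENNReal.ofReal_pow (mul_nonneg hA (hw b).le), ← ENNReal.ofReal_mul (inv_nonneg.mpr (hw b).le),
              ← ENNReal.ofReal_pow hA, ← ENNReal.ofReal_mul (by positivity)]
            congr 1
            have := (hw b).ne'
            field_simp
          _ = _ := by ring
    _ = W * (ENNReal.ofReal A ^ 2 * G * W) := by
        rw [lintegral_const_mul _ (by fun_prop)]
    _ = _ := by ring

lemma iSup_sq_le {ι κ : Type*} (X : ι → κ → ℝ≥0∞) : ∑' n, (⨆ j, X j n) ^ 2 ≤ ∑' j, ∑' n, X j n ^ 2 := by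
  rw [ENNReal.tsum_comm]
  refine ENNReal.tsum_le_tsum fun n => ?_
  rw [ENNReal.iSup_pow_of_ne_zero (by norm_num)]
  exact iSup_le fun j => ENNReal.le_tsum j

/-- the normalised arc integral -/
def Uj {d : ℕ} (f : (Fin d → ℤ) → ℂ) (q a j : ℕ) (n : Fin d → ℤ) : ℝ≥0∞ :=
  ENNReal.ofReal (1 / ((2 ^ j : ℕ) : ℝ) ^ (d - 2)) *
    ∫⁻ b in Set.Icc (-(1 / (q * (2 ^ j : ℕ) : ℝ))) (1 / (q * (2 ^ j : ℕ) : ℝ)), ‖Vf f (wz (2 ^ j) (a / q + b)) n‖ₑ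

lemma scale_bound (d : ℕ) (hd : 5 ≤ d) (q Lm : ℕ) (hq : 0 < q) (hL : 0 < Lm) (C : ℝ) (hC : 0 ≤ C) (I : Set ℝ) :
    ENNReal.ofReal (1 / (Lm : ℝ) ^ (d - 2)) ^ 2 * (ENNReal.ofReal (C * (Lm / Real.sqrt q) ^ d) ^ 2 *
      (∫⁻ b in I, ENNReal.ofReal (Wt (b * (Lm : ℝ) ^ 2))) ^ 2) ≤ ENNReal.ofReal ((C * cW) ^ 2 * (1 / (q : ℝ) ^ d)) := by
  have hqR : (0:ℝ) < q := by exact_mod_cast hq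
  have hLR : (0:ℝ) < Lm := by exact_mod_cast hL
  have hsq : 0 < Real.sqrt q := Real.sqrt_pos.mpr hqR
  have hc := cW_nonneg
  calc _ ≤ ENNReal.ofReal (1 / (Lm : ℝ) ^ (d - 2)) ^ 2 * (ENNReal.ofReal (C * (Lm / Real.sqrt q) ^ d) ^ 2 *
      ENNReal.ofReal (cW / (Lm : ℝ) ^ 2) ^ 2) := by
        gcongr; exact Wt_lint _ (by positivity) I
    _ = _ := by
        rw [← mul_pow, ← ENNReal.ofReal_mul (by positivity), ← mul_pow, ← ENNReal.ofReal_mul (by positivity),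
          ← ENNReal.ofReal_pow (by positivity)]
        congr 1
        obtain ⟨k, rfl⟩ : ∃ k, d = k + 2 := ⟨d - 2, by omega⟩
        rw [Nat.add_sub_cancel]
        have h1 : (Real.sqrt q ^ (k + 2)) ^ 2 = (q : ℝ) ^ (k + 2) := by
          rw [← pow_mul, mul_comm, pow_mul, Real.sq_sqrt hqR.le]
        rw [← h1, div_pow, pow_add (Lm : ℝ)]
        field_simp

lemma a_add_wz (a q Lm : ℕ) (b : ℝ) : wz Lm (a / q + b) = ((a : ℤ) : ℂ) / q + wz Lm b := by
  unfold wz; push_cast; ring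
end

section
open MeasureTheory
/-- the theta multiplier estimate with a given constant -/
def ThB (d : ℕ) (C : ℝ) : Prop := ∀ (q Lm : ℕ), 0 < q → q ≤ Lm → ∀ a : ℤ,
    IsCoprime a (q : ℤ) → ∀ b : ℝ, |b| ≤ 1 / (q * Lm) →
      ‖cf d q Lm b‖ ≤ (Lm / q : ℝ) ^ d * Wt (b * (Lm : ℝ) ^ 2) ∧ ∀ x : Fin d → ℝ, 
      ‖Th (a / q + wz Lm b) x - cf d q Lm b * Ed q a (Lm / q) x‖ ≤
        C * (Lm / Real.sqrt q) ^ d * Wt (b * (Lm : ℝ) ^ 2) * (Lm * dq q x / (1 + (Lm * dq q x) ^ 2) + q / Lm) ∧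
      Lm * dq q x * ‖Th (a / q + wz Lm b) x‖ ≤ C * (Lm / Real.sqrt q) ^ d * Wt (b * (Lm : ℝ) ^ 2)

/-- the arc -/
def arc (q Lm : ℕ) : Set ℝ := Set.Icc (-(1 / (q * Lm : ℝ))) (1 / (q * Lm : ℝ))

lemma arc_abs {q Lm : ℕ} {b : ℝ} (h : b ∈ arc q Lm) : |b| ≤ 1 / (q * Lm) := abs_le.mpr h

lemma arc_gen (d : ℕ) (hd : 5 ≤ d) {f : (Fin d → ℤ) → ℂ} (hf : Summable fun n => ‖f n‖) (q Lm : ℕ) (hq : 0 < q)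
    (hL : 0 < Lm) (C : ℝ) (hC : 0 ≤ C) (D : ℝ → (Fin d → ℤ) → ℂ)
    (hD : ∀ n, Measurable fun b => D b n) (m : ℝ → (Fin d → ℝ) → ℂ) (hm : ∀ b ∈ arc q Lm, Measurable (m b))
    (hmb : ∀ b ∈ arc q Lm, ∃ C : ℝ, ∀ x, ‖m b x‖ ≤ C)
    (hDm : ∀ b ∈ arc q Lm, ∀ n, D b n = ∫ x, m b x * hat f x * ex n x ∂muX d)
    (B : (Fin d → ℝ) → ℝ)
    (hB : ∀ b ∈ arc q Lm, ∀ x, hat f x = 0 ∨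
      ‖m b x‖ ≤ C * (Lm / Real.sqrt q) ^ d * Wt (b * (Lm : ℝ) ^ 2) * B x) :
    ∑' n, (ENNReal.ofReal (1 / (Lm : ℝ) ^ (d - 2)) * ∫⁻ b in arc q Lm, ‖D b n‖ₑ) ^ 2 ≤
      ENNReal.ofReal ((C * cW) ^ 2 * (1 / (q : ℝ) ^ d)) *
        ∫⁻ x, ENNReal.ofReal (B x) ^ 2 * ‖hat f x‖ₑ ^ 2 ∂muX d := by
  simp_rw [mul_pow]
  rw [ENNReal.tsum_mul_left]
  have hW := Wt_meas
  have h := cs_weight hf (arc q Lm) measurableSet_Icc (fun b => Wt (b * (Lm : ℝ) ^ 2)) (fun b => Wt_pos _)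
    (by fun_prop) D hD m hm hmb hDm (C * (Lm / Real.sqrt q) ^ d) B (by positivity) hB
  calc _ ≤ _ := mul_le_mul_right h _
    _ = (ENNReal.ofReal (1 / (Lm : ℝ) ^ (d - 2)) ^ 2 * (ENNReal.ofReal (C * (Lm / Real.sqrt q) ^ d) ^ 2 *
      (∫⁻ b in arc q Lm, ENNReal.ofReal (Wt (b * (Lm : ℝ) ^ 2))) ^ 2)) * 
        ∫⁻ x, ENNReal.ofReal (B x) ^ 2 * ‖hat f x‖ₑ ^ 2 ∂muX d := by ring
    _ ≤ _ := by
      have h3 := scale_bound d hd q Lm hq hL C hC (arc q Lm)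
      rw [mul_pow C cW] at h3
      gcongr

lemma Vf_arc_meas {d : ℕ} {f : (Fin d → ℤ) → ℂ} (hf : Summable fun n => ‖f n‖) (Lm a q : ℕ) (n : Fin d → ℤ) :
    Measurable fun b : ℝ => Vf f (wz Lm (a / q + b)) n := by
  have := (Vf_cont hf Lm n).measurable
  exact this.comp (by fun_prop : Measurable fun b : ℝ => (a / q + b : ℝ))

lemma Uj_small (d : ℕ) (hd : 5 ≤ d) {C : ℝ} (hC : 0 ≤ C) (hT : ThB d C) {f : (Fin d → ℤ) → ℂ}
    (hf : Summable fun n => ‖f n‖) (q a j : ℕ) (hq : 0 < q) (hqj : q ≤ 2 ^ j) (ha : Nat.Coprime a q) (δ : ℝ) (hδ : 0 < δ)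
    (hs : ∀ x, hat f x = 0 ∨ δ ≤ dq q x) :
    ∑' n, Uj f q a j n ^ 2 ≤ ENNReal.ofReal ((C * cW) ^ 2 * (1 / (q : ℝ) ^ d)) *
      (ENNReal.ofReal ((1 / (2 ^ j * δ)) ^ 2) * ∑' n, ‖f n‖ₑ ^ 2) := by
  have ha' : IsCoprime (a : ℤ) (q : ℤ) := Nat.isCoprime_iff_coprime.mpr ha
  have hL : 0 < 2 ^ j := by positivity
  have h := arc_gen d hd hf q (2 ^ j) hq hL C hC (fun b n => Vf f (wz (2 ^ j) (a / q + b)) n)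
    (fun n => Vf_arc_meas hf _ _ _ _) (fun b => Th (wz (2 ^ j) (a / q + b)))
    (fun b _ => (Th_cont (wz_im_pos hL _)).measurable) (fun b _ => Th_bdd (wz_im_pos hL _))
    (fun b _ n => Vf_eq hf (wz_im_pos hL _) n) (fun _ => 1 / (2 ^ j * δ)) (fun b hb x => ?_)
  · refine h.trans ?_
    gcongr
    rw [lintegral_const_mul', ENNReal.ofReal_pow (by positivity)]
    · gcongr
      exact parseval_le hf
    · finiteness
  · rcases hs x with h | h
    · exact Or.inl h
    · right
      have h2 := ((hT q (2 ^ j) hq hqj a ha' b (arc_abs hb)).2 x).2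
      rw [← a_add_wz] at h2
      push_cast at h2 ⊢
      rw [mul_one_div, le_div_iff₀ (by positivity), mul_comm]
      refine le_trans ?_ h2
      gcongr

lemma small_sup (d : ℕ) (hd : 5 ≤ d) {C : ℝ} (hC : 0 ≤ C) (hT : ThB d C) {f : (Fin d → ℤ) → ℂ}
    (hf : Summable fun n => ‖f n‖) (q a : ℕ) (hq : 0 < q) (ha : Nat.Coprime a q) (δ : ℝ) (hδ : 0 < δ)
    (hs : ∀ x, hat f x = 0 ∨ δ ≤ dq q x) (c : ℝ) (hc : 0 < c) :
    ∑' n, (⨆ j : ℕ, if q ≤ 2 ^ j ∧ c ≤ 2 ^ j then Uj f q a j n else 0) ^ 2 ≤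
      ENNReal.ofReal ((C * cW) ^ 2 * (4 / 3) * (1 / (q : ℝ) ^ d) * (1 / (c * δ)) ^ 2) * ∑' n, ‖f n‖ₑ ^ 2 := by
  refine (iSup_sq_le _).trans ?_
  calc _ ≤ ∑' j : ℕ, ENNReal.ofReal ((C * cW) ^ 2 * (1 / (q : ℝ) ^ d) * (1 / (c * δ)) ^ 2) * 
      (if c ≤ 2 ^ j then ENNReal.ofReal ((c / 2 ^ j) ^ 2) else 0) * ∑' n, ‖f n‖ₑ ^ 2 := by
        refine ENNReal.tsum_le_tsum fun j => ?_
        by_cases h : q ≤ 2 ^ j ∧ c ≤ 2 ^ j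
        · simp only [h, and_self, if_true]
          refine (Uj_small d hd hC hT hf q a j hq h.1 ha δ hδ hs).trans_eq ?_
          rw [← mul_assoc, ← ENNReal.ofReal_mul (by positivity), ← ENNReal.ofReal_mul (by positivity)]
          congr 2
          field_simp
        · simp [h]
    _ = ENNReal.ofReal ((C * cW) ^ 2 * (1 / (q : ℝ) ^ d) * (1 / (c * δ)) ^ 2) * 
      (∑' j : ℕ, (if c ≤ 2 ^ j then ENNReal.ofReal ((c / 2 ^ j) ^ 2) else 0)) * ∑' n, ‖f n‖ₑ ^ 2 := by
        rw [ENNReal.tsum_mul_right, ENNReal.tsum_mul_left]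
    _ ≤ ENNReal.ofReal ((C * cW) ^ 2 * (1 / (q : ℝ) ^ d) * (1 / (c * δ)) ^ 2) * 
      ENNReal.ofReal (4 / 3) * ∑' n, ‖f n‖ₑ ^ 2 := by
        gcongr; exact geo_tail c hc
    _ = _ := by
        rw [← ENNReal.ofReal_mul (by positivity)]
        congr 2; ring
end

section
open MeasureTheory
/-- the Gauss sum symbol -/
def Gd {d : ℕ} (q : ℕ) (a : ℤ) (x : Fin d → ℝ) : ℂ := ∏ i, Gs q a (round (q * x i))

lemma Gd_meas {d : ℕ} (q : ℕ) (a : ℤ) : Measurable (Gd q a : (Fin d → ℝ) → ℂ) := by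
  unfold Gd
  refine Finset.measurable_prod _ fun i _ => ?_
  have h1 : Measurable fun x : Fin d → ℝ => round (q * x i) := by
    simp_rw [round_eq]
    exact Int.measurable_floor.comp (by fun_prop)
  exact (measurable_of_countable (Gs q a)).comp h1

lemma Gd_bound {d : ℕ} (q : ℕ) (a : ℤ) (hq : 0 < q) (h : IsCoprime a (q : ℤ)) (x : Fin d → ℝ) :
    ‖Gd q a x‖ ≤ Real.sqrt (2 * q) ^ d := by
  unfold Gd
  rw [norm_prod]
  calc _ ≤ ∏ i : Fin d, Real.sqrt (2 * q) := Finset.prod_le_prod (fun _ _ => norm_nonneg _) (fun i _ => Gs_bound q hq a _ h)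
    _ = _ := by simp

lemma chi_prod {d : ℕ} (q M : ℕ) (x : Fin d → ℝ) :
    ∏ i, chiM M (q * x i) = (((2 * M + 1 : ℕ) : ℂ) ^ d)⁻¹ * ∑ m ∈ bx d M, ex (-((q : ℤ) • m)) x := by
  unfold chiM
  rw [Finset.prod_mul_distrib, Finset.prod_univ_sum]
  congr 1
  · simp
  · unfold bx
    refine Finset.sum_congr rfl fun m _ => ?_
    rw [ex_prod]
    refine Finset.prod_congr rfl fun i _ => ?_
    congr 1
    simp
    ring

lemma Ed_eq {d : ℕ} (q : ℕ) (a : ℤ) (M : ℕ) (x : Fin d → ℝ) :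
    Ed q a M x = ∑ m ∈ bx d M, (((2 * M + 1 : ℕ) : ℂ) ^ d)⁻¹ * (Gd q a x * ex (-((q : ℤ) • m)) x) := by
  unfold Ed Eq1
  rw [Finset.prod_mul_distrib, chi_prod, ← Finset.mul_sum, ← Finset.mul_sum]
  unfold Gd
  ring

lemma Ed_meas {d : ℕ} (q : ℕ) (a : ℤ) (M : ℕ) : Measurable (Ed q a M : (Fin d → ℝ) → ℂ) := by
  have : (Ed q a M : (Fin d → ℝ) → ℂ) = fun x => _ := funext fun x => Ed_eq q a M x
  rw [this]
  have h1 := Gd_meas (d := d) q a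
  have h2 : ∀ n : Fin d → ℤ, Measurable (ex n) := fun n => (ex_cont n).measurable
  refine Finset.measurable_fun_sum _ fun m _ => ?_
  exact measurable_const.mul (h1.mul (h2 _))

lemma Ed_bound {d : ℕ} (q : ℕ) (a : ℤ) (M : ℕ) (hq : 0 < q) (h : IsCoprime a (q : ℤ)) (x : Fin d → ℝ) :
    ‖Ed q a M x‖ ≤ Real.sqrt (2 * q) ^ d := by
  unfold Ed Eq1
  rw [Finset.prod_mul_distrib, norm_mul]
  have h1 := Gd_bound q a hq h x
  have h2 : ‖∏ i, chiM M (q * x i)‖ ≤ 1 := by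
    rw [norm_prod]
    exact Finset.prod_le_one (fun _ _ => norm_nonneg _) (fun i _ => chiM_le_one _ _)
  calc _ ≤ Real.sqrt (2 * q) ^ d * 1 := mul_le_mul h1 h2 (norm_nonneg _) (by positivity)
    _ = _ := mul_one _

/-- operator with symbol `Ed` -/
def TE {d : ℕ} (f : (Fin d → ℤ) → ℂ) (q : ℕ) (a : ℤ) (M : ℕ) (n : Fin d → ℤ) : ℂ :=
  ∫ x, Ed q a M x * hat f x * ex n x ∂muX d

/-- operator with symbol `Gd` -/
def TG {d : ℕ} (f : (Fin d → ℤ) → ℂ) (q : ℕ) (a : ℤ) (n : Fin d → ℤ) : ℂ :=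
  ∫ x, Gd q a x * hat f x * ex n x ∂muX d

lemma sym_integrable {d : ℕ} {f : (Fin d → ℤ) → ℂ} (hf : Summable fun n => ‖f n‖) (m : (Fin d → ℝ) → ℂ)
    (hm : Measurable m) (C : ℝ) (hC : ∀ x, ‖m x‖ ≤ C) (n : Fin d → ℤ) :
    Integrable (fun x => m x * hat f x * ex n x) (muX d) := by
  refine Integrable.of_bound (C := C * ∑' n, ‖f n‖)
    ((hm.mul (hat_cont hf).measurable).mul (ex_cont n).measurable).aestronglyMeasurable ?_
  refine Filter.Eventually.of_forall fun x => ?_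
  rw [norm_mul, norm_mul, ex_norm, mul_one]
  exact mul_le_mul (hC x) (hat_bound hf x) (norm_nonneg _) ((norm_nonneg _).trans (hC x))

lemma TE_eq {d : ℕ} {f : (Fin d → ℤ) → ℂ} (hf : Summable fun n => ‖f n‖) (q : ℕ) (a : ℤ) (M : ℕ) (hq : 0 < q)
    (h : IsCoprime a (q : ℤ)) (n : Fin d → ℤ) :
    TE f q a M n = (((2 * M + 1 : ℕ) : ℂ) ^ d)⁻¹ * ∑ m ∈ bx d M, TG f q a (n - (q : ℤ) • m) := by
  unfold TE TG
  have : ∀ x : Fin d → ℝ, Ed q a M x * hat f x * ex n x = ∑ m ∈ bx d M, (((2 * M + 1 : ℕ) : ℂ) ^ d)⁻¹ *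
      (Gd q a x * hat f x * ex (n - (q : ℤ) • m) x) := by
    intro x
    rw [Ed_eq, Finset.sum_mul, Finset.sum_mul]
    refine Finset.sum_congr rfl fun m _ => ?_
    rw [sub_eq_add_neg, ex_add]
    ring
  simp_rw [this]
  rw [integral_finsetSum, Finset.mul_sum]
  · refine Finset.sum_congr rfl fun m _ => ?_
    rw [integral_const_mul]
  · intro m _
    exact (sym_integrable hf _ (Gd_meas q a) _ (Gd_bound q a hq h) _).const_mul _

lemma TE_le {d : ℕ} {f : (Fin d → ℤ) → ℂ} (hf : Summable fun n => ‖f n‖) (q : ℕ) (a : ℤ) (M : ℕ) (hq : 0 < q)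
    (h : IsCoprime a (q : ℤ)) (n : Fin d → ℤ) :
    ‖TE f q a M n‖ₑ ≤ Av q M (fun n => ‖TG f q a n‖ₑ) n := by
  rw [TE_eq hf q a M hq h, enorm_mul]
  unfold Av
  have h1 : ‖(((2 * M + 1 : ℕ) : ℂ) ^ d)⁻¹‖ₑ = ((2 * M + 1 : ℕ) ^ d : ℝ≥0∞)⁻¹ := by
    rw [enorm_inv (pow_ne_zero _ (Nat.cast_ne_zero.mpr (by omega))), enorm_pow, ← ofReal_norm]
    congr 2
    simp only [Complex.norm_natCast, ENNReal.ofReal_natCast]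
  rw [h1]
  gcongr
  exact enorm_sum_le _ _

lemma TG_sum {d : ℕ} {f : (Fin d → ℤ) → ℂ} (hf : Summable fun n => ‖f n‖) (q : ℕ) (a : ℤ) (hq : 0 < q)
    (h : IsCoprime a (q : ℤ)) : ∑' n, ‖TG f q a n‖ₑ ^ 2 ≤ ENNReal.ofReal ((2 * q) ^ d) * ∑' n, ‖f n‖ₑ ^ 2 := by
  unfold TG
  refine (mult_bound hf (Gd q a) (Gd_meas q a) _ (Gd_bound q a hq h)).trans ?_
  calc _ ≤ ∫⁻ x, ENNReal.ofReal ((2 * q) ^ d) * ‖hat f x‖ₑ ^ 2 ∂muX d := by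
        refine lintegral_mono fun x => ?_
        dsimp only
        gcongr
        rw [← ofReal_norm, ← ENNReal.ofReal_pow (norm_nonneg _)]
        apply ENNReal.ofReal_le_ofReal
        calc _ ≤ (Real.sqrt (2 * q) ^ d) ^ 2 := by gcongr; exact Gd_bound q a hq h x
          _ = _ := by rw [← pow_mul, mul_comm d 2, pow_mul, Real.sq_sqrt (by positivity)]
    _ = ENNReal.ofReal ((2 * q) ^ d) * ∫⁻ x, ‖hat f x‖ₑ ^ 2 ∂muX d := lintegral_const_mul' _ _ (by finiteness)
    _ ≤ _ := by gcongr; exact parseval_le hf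

lemma TE_max {d : ℕ} {f : (Fin d → ℤ) → ℂ} (hf : Summable fun n => ‖f n‖) (q : ℕ) (a : ℤ) (hq : 0 < q)
    (h : IsCoprime a (q : ℤ)) :
    ∑' n, (⨆ M : ℕ, ‖TE f q a M n‖ₑ) ^ 2 ≤ ENNReal.ofReal ((2 ^ (d + 1)) ^ 2 * (2 * q) ^ d) * ∑' n, ‖f n‖ₑ ^ 2 := by
  calc _ ≤ ∑' n, (⨆ M : ℕ, Av q M (fun n => ‖TG f q a n‖ₑ) n) ^ 2 := by
        refine ENNReal.tsum_le_tsum fun n => ?_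
        gcongr
        exact TE_le hf q a _ hq h n
    _ ≤ _ := maximal_box q hq _
    _ ≤ _ := mul_le_mul_right (TG_sum hf q a hq h) _
    _ = _ := by
        rw [← mul_assoc, ENNReal.ofReal_mul (by positivity)]
        congr 2
        rw [ENNReal.ofReal_pow (by positivity), ENNReal.ofReal_pow (by positivity)]
        simp

lemma cf_meas (d q Lm : ℕ) : Measurable (cf d q Lm) := by
  unfold cf wz
  fun_prop
end

section
open MeasureTheory
lemma enn_add_sq (a b : ℝ≥0∞) : (a + b) ^ 2 ≤ 4 * a ^ 2 + 4 * b ^ 2 := by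
  rcases le_total a b with h | h
  · calc (a + b) ^ 2 ≤ (b + b) ^ 2 := by gcongr
      _ = 4 * b ^ 2 := by ring
      _ ≤ _ := le_add_self
  · calc (a + b) ^ 2 ≤ (a + a) ^ 2 := by gcongr
      _ = 4 * a ^ 2 := by ring
      _ ≤ _ := le_self_add

/-- difference part -/
def UD {d : ℕ} (f : (Fin d → ℤ) → ℂ) (q a j : ℕ) (n : Fin d → ℤ) : ℝ≥0∞ :=
  ENNReal.ofReal (1 / ((2 ^ j : ℕ) : ℝ) ^ (d - 2)) *
    ∫⁻ b in arc q (2 ^ j), ‖Vf f (wz (2 ^ j) (a / q + b)) n - cf d q (2 ^ j) b * TE f q a (2 ^ j / q) n‖ₑ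

lemma UD_single (d : ℕ) (hd : 5 ≤ d) {C : ℝ} (hC : 0 ≤ C) (hT : ThB d C) {f : (Fin d → ℤ) → ℂ}
    (hf : Summable fun n => ‖f n‖) (q a j : ℕ) (hq : 0 < q) (hqj : q ≤ 2 ^ j) (ha : Nat.Coprime a q) :
    ∑' n, UD f q a j n ^ 2 ≤ ENNReal.ofReal ((C * cW) ^ 2 * (1 / (q : ℝ) ^ d)) *
      ∫⁻ x, ENNReal.ofReal (2 ^ j * dq q x / (1 + (2 ^ j * dq q x) ^ 2) + q / 2 ^ j) ^ 2 * ‖hat f x‖ₑ ^ 2 ∂muX d := by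
  have ha' : IsCoprime (a : ℤ) (q : ℤ) := Nat.isCoprime_iff_coprime.mpr ha
  have hL : 0 < 2 ^ j := by positivity
  have hcm := cf_meas d q (2 ^ j)
  have hEm := Ed_meas (d := d) q a (2 ^ j / q)
  refine arc_gen d hd hf q (2 ^ j) hq hL C hC
    (fun b n => Vf f (wz (2 ^ j) (a / q + b)) n - cf d q (2 ^ j) b * TE f q a (2 ^ j / q) n)
    (fun n => (Vf_arc_meas hf _ _ _ _).sub (hcm.mul measurable_const))
    (fun b x => Th (wz (2 ^ j) (a / q + b)) x - cf d q (2 ^ j) b * Ed q a (2 ^ j / q) x)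
    (fun b _ => ((Th_cont (wz_im_pos hL _)).measurable).sub (measurable_const.mul hEm)) (fun b _ => ?_)
    (fun b _ n => ?_) (fun x => 2 ^ j * dq q x / (1 + (2 ^ j * dq q x) ^ 2) + q / 2 ^ j) (fun b hb x => ?_)
  · obtain ⟨B, hB⟩ := Th_bdd (d := d) (wz_im_pos hL (a / q + b))
    refine ⟨B + ‖cf d q (2 ^ j) b‖ * Real.sqrt (2 * q) ^ d, fun x => ?_⟩
    refine (norm_sub_le _ _).trans ?_
    rw [norm_mul]
    gcongr
    · exact hB x
    · exact Ed_bound q a _ hq ha' x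
  · obtain ⟨B, hB⟩ := Th_bdd (d := d) (wz_im_pos hL (a / q + b))
    rw [Vf_eq hf (wz_im_pos hL _) n]
    unfold TE
    rw [← integral_const_mul, ← integral_sub]
    · congr 1
      ext x
      ring
    · exact sym_integrable hf _ (Th_cont (wz_im_pos hL _)).measurable B hB n
    · exact (sym_integrable hf _ hEm _ (Ed_bound q a _ hq ha') n).const_mul _
  · right
    have h2 := ((hT q (2 ^ j) hq hqj a ha' b (arc_abs hb)).2 x).1
    rw [← a_add_wz] at h2
    push_cast at h2 ⊢
    exact h2

lemma UD_sup (d : ℕ) (hd : 5 ≤ d) {C : ℝ} (hC : 0 ≤ C) (hT : ThB d C) {f : (Fin d → ℤ) → ℂ}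
    (hf : Summable fun n => ‖f n‖) (q a : ℕ) (hq : 0 < q) (ha : Nat.Coprime a q) :
    ∑' n, (⨆ j : ℕ, if q ≤ 2 ^ j then UD f q a j n else 0) ^ 2 ≤
      ENNReal.ofReal ((C * cW) ^ 2 * (1 / (q : ℝ) ^ d) * (32 / 3)) * ∑' n, ‖f n‖ₑ ^ 2 := by
  have hqR : (0:ℝ) < q := by exact_mod_cast hq
  refine (iSup_sq_le _).trans ?_
  set T : ℕ → (Fin d → ℝ) → ℝ≥0∞ := fun j x =>
    ENNReal.ofReal ((2 ^ j * dq q x / (1 + (2 ^ j * dq q x) ^ 2)) ^ 2) with hTd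
  set S : ℕ → ℝ≥0∞ := fun j => if (q:ℝ) ≤ 2 ^ j then ENNReal.ofReal ((q / 2 ^ j) ^ 2) else 0 with hS
  have hhm : Measurable (hat f) := (hat_cont hf).measurable
  have hdm := dq_measurable d q
  have hTm : ∀ j, Measurable (T j) := fun j => by simp only [hTd]; fun_prop
  calc _ ≤ ∑' j : ℕ, ENNReal.ofReal ((C * cW) ^ 2 * (1 / (q : ℝ) ^ d)) *
        ∫⁻ x, (4 * T j x + 4 * S j) * ‖hat f x‖ₑ ^ 2 ∂muX d := by
        refine ENNReal.tsum_le_tsum fun j => ?_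
        by_cases h : q ≤ 2 ^ j
        · simp only [h, if_true]
          refine (UD_single d hd hC hT hf q a j hq h ha).trans ?_
          gcongr with x
          have h' : (q:ℝ) ≤ 2 ^ j := by exact_mod_cast h
          have := dq_nonneg q x
          simp only [hTd, hS, h', if_true]
          rw [ENNReal.ofReal_pow (by positivity), ENNReal.ofReal_pow (by positivity)]
          rw [ENNReal.ofReal_add (by positivity) (by positivity)]
          exact enn_add_sq _ _
        · simp [h]
    _ = ENNReal.ofReal ((C * cW) ^ 2 * (1 / (q : ℝ) ^ d)) *
        ∫⁻ x, (4 * (∑' j, T j x) + 4 * ∑' j, S j) * ‖hat f x‖ₑ ^ 2 ∂muX d := by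
        rw [ENNReal.tsum_mul_left, ← lintegral_tsum]
        · congr 2
          ext x
          rw [ENNReal.tsum_mul_right, ENNReal.tsum_add, ENNReal.tsum_mul_left, ENNReal.tsum_mul_left]
        · intro j
          have := hTm j
          fun_prop
    _ ≤ ENNReal.ofReal ((C * cW) ^ 2 * (1 / (q : ℝ) ^ d)) *
        ∫⁻ x, ENNReal.ofReal (32 / 3) * ‖hat f x‖ₑ ^ 2 ∂muX d := by
        gcongr with x
        calc _ ≤ 4 * ENNReal.ofReal (4 / 3) + 4 * ENNReal.ofReal (4 / 3) := by
              gcongr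
              · exact tele_sum _ (dq_nonneg q x)
              · exact geo_tail q hqR
          _ = _ := by
              rw [show (4 : ℝ≥0∞) = ENNReal.ofReal 4 by simp, ← ENNReal.ofReal_mul (by norm_num),
                ← ENNReal.ofReal_add (by norm_num) (by norm_num)]
              norm_num
    _ ≤ _ := by
        rw [lintegral_const_mul' _ _ (by finiteness), ENNReal.ofReal_mul (by positivity : 0 ≤ (C * cW) ^ 2 * (1 / (q : ℝ) ^ d)), mul_assoc]
        gcongr
        exact parseval_le hf

lemma cf_part (d : ℕ) (hd : 5 ≤ d) {C : ℝ} (hT : ThB d C) (q a j : ℕ) (hq : 0 < q) (hqj : q ≤ 2 ^ j) (ha : Nat.Coprime a q) :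
    ENNReal.ofReal (1 / ((2 ^ j : ℕ) : ℝ) ^ (d - 2)) * ∫⁻ b in arc q (2 ^ j), ‖cf d q (2 ^ j) b‖ₑ ≤
      ENNReal.ofReal (cW / q ^ d) := by
  have ha' : IsCoprime (a : ℤ) (q : ℤ) := Nat.isCoprime_iff_coprime.mpr ha
  have hc := cW_nonneg
  have hL : 0 < 2 ^ j := by positivity
  have hqR : (0:ℝ) < q := by exact_mod_cast hq
  set Lm := 2 ^ j
  have hLR : (0:ℝ) < Lm := by exact_mod_cast hL
  calc _ ≤ ENNReal.ofReal (1 / (Lm : ℝ) ^ (d - 2)) *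
      ∫⁻ b in arc q Lm, ENNReal.ofReal ((Lm / q : ℝ) ^ d) * ENNReal.ofReal (Wt (b * (Lm : ℝ) ^ 2)) := by
        gcongr ENNReal.ofReal (1 / (Lm : ℝ) ^ (d - 2)) * ?_
        refine setLIntegral_mono' measurableSet_Icc fun b hb => ?_
        rw [← ofReal_norm, ← ENNReal.ofReal_mul (by positivity)]
        exact ENNReal.ofReal_le_ofReal (hT q Lm hq hqj a ha' b (arc_abs hb)).1
    _ ≤ ENNReal.ofReal (1 / (Lm : ℝ) ^ (d - 2)) * (ENNReal.ofReal ((Lm / q : ℝ) ^ d) * ENNReal.ofReal (cW / (Lm : ℝ) ^ 2)) := by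
        rw [lintegral_const_mul' _ _ (by finiteness)]
        gcongr
        exact Wt_lint _ (by positivity) _
    _ = _ := by
        rw [← ENNReal.ofReal_mul (by positivity), ← ENNReal.ofReal_mul (by positivity)]
        congr 1
        obtain ⟨k, rfl⟩ : ∃ k, d = k + 2 := ⟨d - 2, by omega⟩
        rw [Nat.add_sub_cancel, div_pow, pow_add (Lm : ℝ)]
        field_simp

lemma Uj_le (d : ℕ) (hd : 5 ≤ d) {C : ℝ} (hT : ThB d C) {f : (Fin d → ℤ) → ℂ}
    (hf : Summable fun n => ‖f n‖) (q a j : ℕ) (hq : 0 < q) (hqj : q ≤ 2 ^ j) (ha : Nat.Coprime a q) (n : Fin d → ℤ) :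
    Uj f q a j n ≤ UD f q a j n + ENNReal.ofReal (cW / q ^ d) * ⨆ M : ℕ, ‖TE f q a M n‖ₑ := by
  have hcm := cf_meas d q (2 ^ j)
  calc Uj f q a j n ≤ ENNReal.ofReal (1 / ((2 ^ j : ℕ) : ℝ) ^ (d - 2)) *
        ∫⁻ b in arc q (2 ^ j), (‖Vf f (wz (2 ^ j) (a / q + b)) n - cf d q (2 ^ j) b * TE f q a (2 ^ j / q) n‖ₑ
          + ‖cf d q (2 ^ j) b‖ₑ * ‖TE f q a (2 ^ j / q) n‖ₑ) := by
        unfold Uj arc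
        gcongr with b
        rw [← enorm_mul]
        exact (enorm_add_le _ _).trans_eq' (by rw [sub_add_cancel])
    _ = UD f q a j n + (ENNReal.ofReal (1 / ((2 ^ j : ℕ) : ℝ) ^ (d - 2)) * ∫⁻ b in arc q (2 ^ j), ‖cf d q (2 ^ j) b‖ₑ)
          * ‖TE f q a (2 ^ j / q) n‖ₑ := by
        rw [lintegral_add_right _ (by fun_prop), lintegral_mul_const _ (by fun_prop), mul_add, mul_assoc]
        rfl
    _ ≤ _ := by
        gcongr
        · exact cf_part d hd hT q a j hq hqj ha
        · exact le_iSup (fun M : ℕ => ‖TE f q a M n‖ₑ) (2 ^ j / q)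

lemma large_sup (d : ℕ) (hd : 5 ≤ d) {C : ℝ} (hC : 0 ≤ C) (hT : ThB d C) : ∃ K : ℝ, 0 ≤ K ∧ ∀ {f : (Fin d → ℤ) → ℂ}
    (hf : Summable fun n => ‖f n‖) (q a : ℕ) (hq : 0 < q) (ha : Nat.Coprime a q),
    ∑' n, (⨆ j : ℕ, if q ≤ 2 ^ j then Uj f q a j n else 0) ^ 2 ≤
      ENNReal.ofReal (K * (1 / (q : ℝ) ^ d)) * ∑' n, ‖f n‖ₑ ^ 2 := by
  refine ⟨4 * ((C * cW) ^ 2 * (32 / 3)) + 4 * (cW ^ 2 * ((2 ^ (d + 1)) ^ 2 * 2 ^ d)), by positivity, fun {f} hf q a hq ha => ?_⟩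
  have ha' : IsCoprime (a : ℤ) (q : ℤ) := Nat.isCoprime_iff_coprime.mpr ha
  have hqR : (0:ℝ) < q := by exact_mod_cast hq
  have hc := cW_nonneg
  calc _ ≤ ∑' n, (4 * (⨆ j : ℕ, if q ≤ 2 ^ j then UD f q a j n else 0) ^ 2
        + 4 * (ENNReal.ofReal (cW / q ^ d) ^ 2 * (⨆ M : ℕ, ‖TE f q a M n‖ₑ) ^ 2)) := by
        refine ENNReal.tsum_le_tsum fun n => ?_
        rw [← mul_pow (ENNReal.ofReal _)]
        refine le_trans ?_ (enn_add_sq _ _)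
        gcongr
        refine iSup_le fun j => ?_
        split_ifs with h
        · refine (Uj_le d hd hT hf q a j hq h ha n).trans ?_
          gcongr
          refine le_trans ?_ (le_iSup (fun j : ℕ => if q ≤ 2 ^ j then UD f q a j n else 0) j)
          simp [h]
        · simp
    _ = 4 * (∑' n, (⨆ j : ℕ, if q ≤ 2 ^ j then UD f q a j n else 0) ^ 2)
        + 4 * (ENNReal.ofReal (cW / q ^ d) ^ 2 * ∑' n, (⨆ M : ℕ, ‖TE f q a M n‖ₑ) ^ 2) := by
        rw [ENNReal.tsum_add, ENNReal.tsum_mul_left, ENNReal.tsum_mul_left, ENNReal.tsum_mul_left]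
    _ ≤ ENNReal.ofReal 4 * (ENNReal.ofReal ((C * cW) ^ 2 * (1 / (q : ℝ) ^ d) * (32 / 3)) * ∑' n, ‖f n‖ₑ ^ 2)
        + ENNReal.ofReal 4 * (ENNReal.ofReal ((cW / q ^ d) ^ 2) * (ENNReal.ofReal ((2 ^ (d + 1)) ^ 2 * (2 * q) ^ d) * ∑' n, ‖f n‖ₑ ^ 2)) := by
        rw [show (4 : ℝ≥0∞) = ENNReal.ofReal 4 by simp, ENNReal.ofReal_pow (by positivity)]
        gcongr
        · exact UD_sup d hd hC hT hf q a hq ha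
        · exact TE_max hf q a hq ha'
    _ = _ := by
        rw [← mul_assoc, ← mul_assoc, ← mul_assoc, ← add_mul, ← ENNReal.ofReal_mul (by positivity),
          ← ENNReal.ofReal_mul (by positivity), ← ENNReal.ofReal_mul (by positivity), ← ENNReal.ofReal_add (by positivity) (by positivity)]
        congr 2
        rw [mul_pow (2 : ℝ) (q : ℝ) d]
        field_simp
end

section
open MeasureTheory
lemma mink {ι κ : Type*} (h : ι → κ → ℝ≥0∞) (w : ι → ℝ≥0∞) (hw : ∀ i, w i ≠ ⊤) (A : ℝ≥0∞)
    (hh : ∀ i, ∑' n, h i n ^ 2 ≤ w i ^ 2 * A) : ∑' n, (∑' i, h i n) ^ 2 ≤ (∑' i, w i) ^ 2 * A := by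
  have hz : ∀ i, w i = 0 → ∀ n, h i n = 0 := by
    intro i hi n
    have h1 := hh i
    rw [hi] at h1
    simp only [ne_eq, OfNat.ofNat_ne_zero, not_false_eq_true, zero_pow, zero_mul, nonpos_iff_eq_zero,
      ENNReal.tsum_eq_zero, pow_eq_zero_iff] at h1
    exact h1 n
  set s : ι → ℝ≥0∞ := fun i => w i ^ (1 / 2 : ℝ) with hs
  have hss : ∀ i, s i ^ 2 = w i := by
    intro i
    rw [hs, sq]
    dsimp only
    rw [← ENNReal.rpow_add_of_nonneg _ _ (by norm_num) (by norm_num)]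
    norm_num
  have h1 : ∀ n, (∑' i, h i n) ^ 2 ≤ (∑' i, w i) * ∑' i, (w i)⁻¹ * h i n ^ 2 := by
    intro n
    have h2 := cs_tsum s (fun i => (s i)⁻¹ * h i n)
    have e1 : ∀ i, s i * ((s i)⁻¹ * h i n) = h i n := by
      intro i
      by_cases hi : w i = 0
      · rw [hz i hi n]; simp
      · rw [← mul_assoc, ENNReal.mul_inv_cancel, one_mul]
        · intro h0
          apply hi
          rw [← hss i, h0]; simp
        · intro h0
          apply hw i
          rw [← hss i, h0]; simp
    simp_rw [e1, mul_pow, ← ENNReal.inv_pow, hss] at h2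
    exact h2
  calc _ ≤ ∑' n, (∑' i, w i) * ∑' i, (w i)⁻¹ * h i n ^ 2 := ENNReal.tsum_le_tsum h1
    _ = (∑' i, w i) * ∑' i, (w i)⁻¹ * ∑' n, h i n ^ 2 := by
      rw [ENNReal.tsum_mul_left, ENNReal.tsum_comm]
      simp_rw [ENNReal.tsum_mul_left]
    _ ≤ (∑' i, w i) * ∑' i, w i * A := by
      gcongr (∑' i, w i) * ?_
      refine ENNReal.tsum_le_tsum fun i => ?_
      by_cases hi : w i = 0
      · simp [hz i hi]
      · calc _ ≤ (w i)⁻¹ * (w i ^ 2 * A) := by gcongr; exact hh i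
          _ = ((w i)⁻¹ * w i) * (w i * A) := by ring
          _ = w i * A := by rw [ENNReal.inv_mul_cancel hi (hw i), one_mul]
    _ = _ := by rw [ENNReal.tsum_mul_right]; ring

/-- gain factor -/
def gam (η : ℝ) (q : ℕ) : ℝ := if (q : ℝ) ≤ η⁻¹ ^ 2 then η ^ 2 else 1

lemma gam_nonneg (η : ℝ) (q : ℕ) : 0 ≤ gam η q := by unfold gam; split_ifs <;> positivity

lemma tele_term (q : ℝ) (hq : 1 ≤ q) :
    1 / (q * Real.sqrt q) ≤ 4 * (1 / Real.sqrt q - 1 / Real.sqrt (q + 1)) := by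
  have hs : 1 ≤ Real.sqrt q := Real.one_le_sqrt.mpr hq
  have hs2 : Real.sqrt q ^ 2 = q := Real.sq_sqrt (by linarith)
  have ht2 : Real.sqrt (q + 1) ^ 2 = q + 1 := Real.sq_sqrt (by linarith)
  set s := Real.sqrt q
  set t := Real.sqrt (q + 1)
  have ht : 0 < t := Real.sqrt_pos.mpr (by linarith)
  have hts : t ≤ 3 / 2 * s := by nlinarith
  have hst : s ≤ t := by nlinarith
  have h1 : (t - s) * (t + s) = 1 := by nlinarith
  rw [div_sub_div _ _ (by positivity) (by positivity), ← mul_div_assoc, div_le_div_iff₀ (by positivity) (by positivity),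
    ← hs2]
  have h3 : t * (t + s) ≤ 4 * s ^ 2 := by nlinarith
  have h4 : t ≤ 4 * (t - s) * s ^ 2 := by
    have h0 : 0 ≤ t - s := by linarith
    have := mul_le_mul_of_nonneg_left h3 h0
    nlinarith
  nlinarith

lemma gam_sum (η : ℝ) (hη : 0 < η) :
    ∑' k : ℕ, ENNReal.ofReal (gam η (k + 1) * (1 / ((k + 1 : ℝ) * Real.sqrt (k + 1)))) ≤ ENNReal.ofReal (8 * η) := by
  set g : ℕ → ℝ := fun k => 1 / Real.sqrt (k + 1) with hg
  have hanti : ∀ k, g (k + 1) ≤ g k := by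
    intro k
    simp only [hg]
    gcongr
    push_cast; linarith
  have hpos : ∀ k, 0 ≤ g k := fun k => by simp only [hg]; positivity
  have hterm : ∀ k : ℕ, gam η (k + 1) * (1 / ((k + 1 : ℝ) * Real.sqrt (k + 1))) ≤
      4 * η * (g k - g (k + 1)) + 4 * (min (g k) η - min (g (k + 1)) η) := by
    intro k
    have h1 := tele_term (k + 1 : ℝ) (by linarith [Nat.cast_nonneg (α := ℝ) k])
    have hm : min (g (k + 1)) η ≤ min (g k) η := min_le_min_right _ (hanti k)
    have h1' : 1 / ((k + 1 : ℝ) * Real.sqrt (k + 1)) ≤ 4 * (g k - g (k + 1)) := by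
      simp only [hg]; push_cast; exact h1
    have hanti := hanti k
    unfold gam
    split_ifs with h
    · have hη1 : η ≤ 1 := by
        have h2 : (1:ℝ) ≤ η⁻¹ ^ 2 := by push_cast at h; linarith [Nat.cast_nonneg (α := ℝ) k]
        have h3 : 1 ≤ η⁻¹ := by
          by_contra hc
          have : 0 < η⁻¹ := by positivity
          nlinarith
        exact (one_le_inv₀ hη).mp h3
      have : η ^ 2 * (1 / ((k + 1 : ℝ) * Real.sqrt (k + 1))) ≤ η * (4 * (g k - g (k + 1))) :=
        mul_le_mul (by nlinarith) h1' (by positivity) hη.le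
      linarith
    · have h2 : g k ≤ η := by
        simp only [hg]
        push Not at h
        push_cast at h
        rw [div_le_iff₀ (by positivity), ← div_le_iff₀' hη, one_div]
        exact Real.le_sqrt_of_sq_le h.le
      rw [min_eq_left h2, min_eq_left (hanti.trans h2)]
      have : 0 ≤ 4 * η * (g k - g (k + 1)) := mul_nonneg (by positivity) (by linarith)
      linarith
  apply ENNReal.tsum_le_of_sum_range_le
  intro n
  rw [← ENNReal.ofReal_sum_of_nonneg]
  · apply ENNReal.ofReal_le_ofReal
    refine (Finset.sum_le_sum fun k _ => hterm k).trans ?_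
    rw [Finset.sum_add_distrib, ← Finset.mul_sum, ← Finset.mul_sum, Finset.sum_range_sub', Finset.sum_range_sub' (fun k => min (g k) η)]
    have h0 : g 0 = 1 := by simp [hg]
    have h1 := hpos n
    have h2 : 0 ≤ min (g n) η := le_min h1 hη.le
    have h3 : min (g 0) η ≤ η := min_le_right _ _
    have h4 : 0 ≤ η * g n := mul_nonneg hη.le h1
    rw [h0] at h3 ⊢
    nlinarith
  · intro k _
    have := gam_nonneg η (k + 1)
    positivity

/-- the maximal function attached to an arc -/
def hh {d : ℕ} (f : (Fin d → ℤ) → ℂ) (c : ℝ) (p : ℕ × ℕ) (n : Fin d → ℤ) : ℝ≥0∞ :=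
  if p.2 ∈ Finset.range (p.1 + 2) ∧ Nat.Coprime p.2 (p.1 + 1) then
    ⨆ j : ℕ, if p.1 + 1 ≤ 2 ^ j ∧ c ≤ 2 ^ j then Uj f (p.1 + 1) p.2 j n else 0 else 0

lemma level (lam : ℝ) (h : 1 ≤ lam) : ∃ j : ℕ, ((2 ^ j : ℕ) : ℝ) ≤ lam ∧ lam < 2 * ((2 ^ j : ℕ) : ℝ) := by
  have h1 : 1 ≤ ⌊lam⌋₊ := Nat.le_floor (by simpa using h)
  refine ⟨Nat.log 2 ⌊lam⌋₊, ?_, ?_⟩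
  · exact (Nat.le_floor_iff (by linarith)).mp (Nat.pow_log_le_self 2 (by omega))
  · have h2 := Nat.lt_pow_succ_log_self (b := 2) (by norm_num) ⌊lam⌋₊
    have h3 := (Nat.floor_lt (by linarith)).mp h2
    push_cast at h3 ⊢
    rw [pow_succ] at h3
    linarith

lemma sup_le_hh (d : ℕ) (hd : 5 ≤ d) : ∃ C : ℝ, 0 < C ∧ ∀ (f : (Fin d → ℤ) → ℝ), (Summable fun n => ‖(f n : ℂ)‖) →
    ∀ R : ℝ, 0 < R → ∀ n, (⨆ (lam : ℝ) (_ : R ≤ lam ∧ ∃ N : ℕ, (N : ℝ) = lam ^ 2), (‖Avg lam f n‖₊ : ℝ≥0∞)) ≤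
      ENNReal.ofReal C * ∑' p, hh (fun n => (f n : ℂ)) (R / 2) p n := by
  obtain ⟨C, hC, hA⟩ := Avg_bound d hd
  refine ⟨C, hC, fun f hf R hR n => ?_⟩
  refine iSup₂_le ?_
  rintro lam ⟨hlam, N, hN⟩
  have hl0 : 0 < lam := hR.trans_le hlam
  have hl1 : 1 ≤ lam := by
    have : 0 < N := by
      have : (0:ℝ) < N := by rw [hN]; positivity
      exact_mod_cast this
    have : (1:ℝ) ≤ lam ^ 2 := by rw [← hN]; exact_mod_cast this
    nlinarith
  obtain ⟨j, hj1, hj2⟩ := level lam hl1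
  have hL : 0 < 2 ^ j := by positivity
  refine (hA f hf (2 ^ j) N lam n hL hj1 hj2 hN).trans ?_
  rw [show C / ((2 ^ j : ℕ) : ℝ) ^ (d - 2) = C * (1 / ((2 ^ j : ℕ) : ℝ) ^ (d - 2)) by ring, ENNReal.ofReal_mul hC.le, mul_assoc]
  gcongr
  calc _ ≤ _ := mul_le_mul_right (dirichlet_cover (2 ^ j) hL _) _
    _ = ∑ q ∈ Finset.Icc 1 (2 ^ j), ∑ a ∈ (Finset.range (q + 1)).filter (fun a => Nat.Coprime a q), Uj (fun n => (f n : ℂ)) q a j n := by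
      rw [Finset.mul_sum]
      refine Finset.sum_congr rfl fun q _ => ?_
      rw [Finset.mul_sum]
      rfl
    _ = ∑ k ∈ Finset.range (2 ^ j), ∑ a ∈ (Finset.range (k + 1 + 1)).filter (fun a => Nat.Coprime a (k + 1)), Uj (fun n => (f n : ℂ)) (k + 1) a j n := by
      rw [← Finset.Ico_add_one_right_eq_Icc, Finset.sum_Ico_eq_sum_range, Nat.add_sub_cancel]
      refine Finset.sum_congr rfl fun k _ => ?_
      rw [add_comm 1 k]
    _ ≤ ∑ k ∈ Finset.range (2 ^ j), ∑' a, hh (fun n => (f n : ℂ)) (R / 2) (k, a) n := by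
      refine Finset.sum_le_sum fun k hk => ?_
      refine le_trans ?_ (ENNReal.sum_le_tsum ((Finset.range (k + 1 + 1)).filter (fun a => Nat.Coprime a (k + 1))))
      refine Finset.sum_le_sum fun a ha => ?_
      rw [Finset.mem_filter] at ha
      rw [Finset.mem_range] at hk
      unfold hh
      rw [if_pos ha]
      refine le_trans ?_ (le_iSup _ j)
      rw [if_pos]
      refine ⟨hk, ?_⟩
      push_cast at hj2
      linarith
    _ ≤ ∑' k, ∑' a, hh (fun n => (f n : ℂ)) (R / 2) (k, a) n := ENNReal.sum_le_tsum _
    _ = _ := (ENNReal.tsum_prod (f := fun k a => hh (fun n => (f n : ℂ)) (R / 2) (k, a) n)).symm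
end

open MeasureTheory
lemma dvd_qeta (η : ℝ) (q : ℕ) (hq : 0 < q) (h : (q : ℝ) ≤ η⁻¹ ^ 2) : q ∣ qeta η := by
  unfold qeta
  have : q ∈ Finset.Icc 1 ⌊η⁻¹ ^ 2⌋₊ := Finset.mem_Icc.mpr ⟨hq, Nat.le_floor h⟩
  simpa using Finset.dvd_lcm (f := id) this

lemma qeta_pos (η : ℝ) : 0 < qeta η := by
  unfold qeta
  rw [Nat.pos_iff_ne_zero, Ne, Finset.lcm_eq_zero_iff]
  simp

lemma mem_Omega (d : ℕ) (η L : ℝ) (q : ℕ) (hq : 0 < q) (h : (q : ℝ) ≤ η⁻¹ ^ 2) (x : Fin d → ℝ)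
    (hx : dq q x ≤ L⁻¹) : x ∈ OmegaEtaL d η L := by
  obtain ⟨r, hr⟩ := dvd_qeta η q hq h
  have hp := qeta_pos η
  have hr0 : 0 < r := by
    rcases Nat.eq_zero_or_pos r with h0 | h0
    · rw [h0] at hr; omega
    · exact h0
  have hqR : (0:ℝ) < q := by exact_mod_cast hq
  have hrR : (0:ℝ) < r := by exact_mod_cast hr0
  refine ⟨fun i => round (q * x i) * r, fun i => ?_⟩
  have h1 := (le_dq q x i).trans hx
  refine le_trans (le_of_eq ?_) h1
  rw [hr, ← abs_of_pos hqR, ← abs_div, abs_of_pos hqR]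
  congr 1
  push_cast
  field_simp

lemma hh_bound (d : ℕ) (hd : 5 ≤ d) : ∃ K : ℝ, 0 ≤ K ∧ ∀ (η L : ℝ), 0 < η → 0 < L →
    ∀ f : (Fin d → ℤ) → ℂ, (Summable fun n => ‖f n‖) → (∀ x ∈ OmegaEtaL d η L, hat f x = 0) →
    ∀ p, ∑' n, hh f (η⁻¹ ^ 2 * L / 2) p n ^ 2 ≤
      (if p.2 ∈ Finset.range (p.1 + 2) then
        ENNReal.ofReal (K * (gam η (p.1 + 1) * (1 / ((p.1 + 1 : ℝ) ^ 2 * Real.sqrt (p.1 + 1))))) else 0) ^ 2 * ∑' n, ‖f n‖ₑ ^ 2 := by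
  obtain ⟨C, hC1, hT⟩ := theta_mult d hd
  have hC : 0 ≤ C := by linarith
  have hT : ThB d C := hT
  obtain ⟨K, hK, hl⟩ := large_sup d hd hC hT
  have hKs : 0 ≤ K + (C * cW) ^ 2 * (4 / 3) * 4 := by positivity
  refine ⟨Real.sqrt (K + (C * cW) ^ 2 * (4 / 3) * 4), Real.sqrt_nonneg _, fun η L hη hL f hf hz p => ?_⟩
  obtain ⟨k, a⟩ := p
  unfold hh
  by_cases ha : a ∈ Finset.range (k + 2) ∧ Nat.Coprime a (k + 1)
  swap
  · simp_rw [if_neg ha]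
    simp
  simp_rw [if_pos ha]
  rw [if_pos ha.1]
  have hk0 : (0:ℝ) < k + 1 := by positivity
  have hg := gam_nonneg η (k + 1)
  rw [← ENNReal.ofReal_pow (by positivity), mul_pow, mul_pow (gam η (k + 1)), Real.sq_sqrt hKs, div_pow, mul_pow ((k + 1 : ℝ) ^ 2),
    Real.sq_sqrt hk0.le, one_pow]
  have hq5 : (k + 1 : ℝ) ^ 5 ≤ (k + 1 : ℝ) ^ d := pow_le_pow_right₀ (by linarith [Nat.cast_nonneg (α := ℝ) k]) hd
  have hq5' : 1 / (k + 1 : ℝ) ^ d ≤ 1 / (((k + 1 : ℝ) ^ 2) ^ 2 * (k + 1)) := by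
    rw [show ((k + 1 : ℝ) ^ 2) ^ 2 * (k + 1) = (k + 1 : ℝ) ^ 5 by ring]
    gcongr
  by_cases hs : ((k + 1 : ℕ) : ℝ) ≤ η⁻¹ ^ 2
  · have h := small_sup d hd hC hT hf (k + 1) a (by omega) ha.2 L⁻¹ (by positivity) (fun x => ?_)
      (η⁻¹ ^ 2 * L / 2) (by positivity)
    · refine h.trans ?_
      refine mul_le_mul_left (ENNReal.ofReal_le_ofReal ?_) _
      unfold gam
      rw [if_pos hs]
      have e : (1 / (η⁻¹ ^ 2 * L / 2 * L⁻¹)) ^ 2 = 4 * (η ^ 2) ^ 2 := by field_simp; norm_num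
      rw [e]
      push_cast
      calc _ = ((C * cW) ^ 2 * (4 / 3) * 4) * ((η ^ 2) ^ 2 * (1 / (k + 1 : ℝ) ^ d)) := by ring
        _ ≤ (K + (C * cW) ^ 2 * (4 / 3) * 4) * ((η ^ 2) ^ 2 * (1 / (((k + 1 : ℝ) ^ 2) ^ 2 * (k + 1)))) := by
          gcongr
          linarith
    · by_cases hx : dq (k + 1) x ≤ L⁻¹
      · exact Or.inl (hz x (mem_Omega d η L (k + 1) (by omega) hs x hx))
      · exact Or.inr (not_le.mp hx).le
  · calc _ ≤ ∑' n, (⨆ j : ℕ, if k + 1 ≤ 2 ^ j then Uj f (k + 1) a j n else 0) ^ 2 := by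
          refine ENNReal.tsum_le_tsum fun n => ?_
          gcongr with j
          split_ifs with h1 h2 h2
          · exact le_rfl
          · exact absurd h1.1 h2
          · simp
          · simp
      _ ≤ _ := hl hf (k + 1) a (by omega) ha.2
      _ ≤ _ := by
          refine mul_le_mul_left (ENNReal.ofReal_le_ofReal ?_) _
          unfold gam
          rw [if_neg hs]
          push_cast
          calc K * (1 / (k + 1 : ℝ) ^ d) ≤ (K + (C * cW) ^ 2 * (4 / 3) * 4) * (1 / (((k + 1 : ℝ) ^ 2) ^ 2 * (k + 1))) := by
                gcongr
                have : 0 ≤ (C * cW) ^ 2 * (4 / 3) * 4 := by positivity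
                linarith
            _ = _ := by ring

lemma w_sum (η K : ℝ) (hη : 0 < η) (hK : 0 ≤ K) :
    ∑' p : ℕ × ℕ, (if p.2 ∈ Finset.range (p.1 + 2) then
        ENNReal.ofReal (K * (gam η (p.1 + 1) * (1 / ((p.1 + 1 : ℝ) ^ 2 * Real.sqrt (p.1 + 1))))) else 0) ≤
      ENNReal.ofReal (16 * K * η) := by
  rw [ENNReal.tsum_prod (f := fun k a : ℕ => if a ∈ Finset.range (k + 2) then
        ENNReal.ofReal (K * (gam η (k + 1) * (1 / ((k + 1 : ℝ) ^ 2 * Real.sqrt (k + 1))))) else 0)]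
  calc _ ≤ ∑' k : ℕ, ENNReal.ofReal (2 * K) * ENNReal.ofReal (gam η (k + 1) * (1 / ((k + 1 : ℝ) * Real.sqrt (k + 1)))) := by
        refine ENNReal.tsum_le_tsum fun k => ?_
        rw [tsum_eq_sum (s := Finset.range (k + 2)) (fun b hb => by simp only [hb, if_false]), Finset.sum_ite_mem, Finset.inter_self,
          Finset.sum_const, Finset.card_range, nsmul_eq_mul, ← ENNReal.ofReal_mul (by positivity), ← ENNReal.ofReal_natCast,
          ← ENNReal.ofReal_mul (by positivity)]
        apply ENNReal.ofReal_le_ofReal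
        have hk : (0:ℝ) ≤ k := Nat.cast_nonneg k
        have hs : 0 < Real.sqrt (k + 1 : ℝ) := Real.sqrt_pos.mpr (by linarith)
        have hg := gam_nonneg η (k + 1)
        calc _ = (K * gam η (k + 1)) * (((k + 2 : ℕ) : ℝ) * (1 / ((k + 1 : ℝ) ^ 2 * Real.sqrt (k + 1)))) := by ring
          _ ≤ (K * gam η (k + 1)) * (2 * (1 / ((k + 1 : ℝ) * Real.sqrt (k + 1)))) := by
            refine mul_le_mul_of_nonneg_left ?_ (by positivity)
            rw [mul_one_div, mul_one_div, div_le_div_iff₀ (by positivity) (by positivity)]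
            push_cast
            nlinarith [mul_nonneg hk hs.le, mul_nonneg (mul_nonneg hk hk) hs.le]
          _ = _ := by ring
    _ ≤ ENNReal.ofReal (2 * K) * ENNReal.ofReal (8 * η) := by
        rw [ENNReal.tsum_mul_left]
        gcongr
        exact gam_sum η hη
    _ = _ := by
        rw [← ENNReal.ofReal_mul (by positivity)]
        congr 1; ring

/-- **Theorem 2 (mollified variant)**: for `d ≥ 5`, `η > 0`, `L ≥ q_η⁴`, there is a
constant `C_d` such that for every `f ∈ ℓ²(ℤ^d)` whose Fourier transform vanishes on
`Ω_{η,L}` one has `‖sup_{λ ≥ η⁻² L} |A_λ f|‖₂ ≤ C_d η ‖f‖₂`. -/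
theorem mollified_maximal_estimate (d : ℕ) (hd : 5 ≤ d) :
    ∃ C : ℝ, 0 < C ∧ ∀ (η L : ℝ), 0 < η → ((qeta η : ℝ)) ^ 4 ≤ L →
      ∀ f : (Fin d → ℤ) → ℝ,
        (∀ α ∈ OmegaEtaL d η L,
          HasSum (fun n : Fin d → ℤ =>
            (f n : ℂ) * Complex.exp (-(2 * (π : ℂ) * Complex.I) * (∑ i, (n i : ℝ) * α i))) 0) →
        (∑' n : Fin d → ℤ,
            (⨆ (lam : ℝ) (_ : η⁻¹ ^ 2 * L ≤ lam ∧ ∃ N : ℕ, (N : ℝ) = lam ^ 2),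
              (‖Avg lam f n‖₊ : ℝ≥0∞)) ^ 2) ^ ((1 : ℝ) / 2)
          ≤ ENNReal.ofReal (C * η) * l2norm f := by
  obtain ⟨C, hC, hsup⟩ := sup_le_hh d hd
  obtain ⟨K, hK, hhb⟩ := hh_bound d hd
  refine ⟨C * (16 * K) + 1, by positivity, fun η L hη hL f hfs => ?_⟩
  have hL0 : 0 < L := by
    have : (0:ℝ) < (qeta η : ℝ) ^ 4 := by
      have := qeta_pos η
      positivity
    linarith
  have hf : Summable fun n => ‖(f n : ℂ)‖ := by
    have h0 : (0 : Fin d → ℝ) ∈ OmegaEtaL d η L := ⟨0, fun i => by simp [hL0.le]⟩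
    have := (hfs 0 h0).summable
    simpa using this.norm
  have hz : ∀ x ∈ OmegaEtaL d η L, hat (fun n => (f n : ℂ)) x = 0 := by
    intro x hx
    rw [← (hfs x hx).tsum_eq]
    unfold hat ex
    refine tsum_congr fun n => ?_
    congr 2
    simp [Finset.sum_neg_distrib]
  have hR : 0 < η⁻¹ ^ 2 * L := by positivity
  have key : ∑' n : Fin d → ℤ, (⨆ (lam : ℝ) (_ : η⁻¹ ^ 2 * L ≤ lam ∧ ∃ N : ℕ, (N : ℝ) = lam ^ 2),
              (‖Avg lam f n‖₊ : ℝ≥0∞)) ^ 2 ≤ ENNReal.ofReal ((C * (16 * K) + 1) * η) ^ 2 * ∑' n, (‖f n‖₊ : ℝ≥0∞) ^ 2 := by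
    calc _ ≤ ∑' n, (ENNReal.ofReal C * ∑' p, hh (fun n => (f n : ℂ)) (η⁻¹ ^ 2 * L / 2) p n) ^ 2 := by
          refine ENNReal.tsum_le_tsum fun n => ?_
          gcongr
          exact hsup f hf _ hR n
      _ = ENNReal.ofReal C ^ 2 * ∑' n, (∑' p, hh (fun n => (f n : ℂ)) (η⁻¹ ^ 2 * L / 2) p n) ^ 2 := by
          simp_rw [mul_pow]
          rw [ENNReal.tsum_mul_left]
      _ ≤ ENNReal.ofReal C ^ 2 * (ENNReal.ofReal (16 * K * η) ^ 2 * ∑' n, ‖(f n : ℂ)‖ₑ ^ 2) := by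
          gcongr
          refine (mink _ _ (fun p => ?_) _ (hhb η L hη hL0 _ hf hz)).trans ?_
          · split_ifs <;> simp
          · gcongr
            exact w_sum η K hη hK
      _ = (ENNReal.ofReal (C * (16 * K * η))) ^ 2 * ∑' n, ‖(f n : ℂ)‖ₑ ^ 2 := by
          rw [← mul_assoc, ← mul_pow, ← ENNReal.ofReal_mul hC.le]
      _ ≤ _ := by
          have e : ∀ n, ‖(f n : ℂ)‖ₑ = (‖f n‖₊ : ℝ≥0∞) := fun n => by
            rw [← ofReal_norm, Complex.norm_real, ofReal_norm]
            rfl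
          simp_rw [e]
          refine mul_le_mul_left (pow_le_pow_left₀ (by simp) (ENNReal.ofReal_le_ofReal ?_) 2) _
          nlinarith
  unfold l2norm
  calc _ ≤ (ENNReal.ofReal ((C * (16 * K) + 1) * η) ^ 2 * ∑' n, (‖f n‖₊ : ℝ≥0∞) ^ 2) ^ ((1:ℝ) / 2) :=
        ENNReal.rpow_le_rpow key (by norm_num)
    _ = _ := by
        rw [ENNReal.mul_rpow_of_nonneg _ _ (by norm_num), ← ENNReal.rpow_natCast, ← ENNReal.rpow_mul]
        norm_num
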